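/- arXiv:1902.02378 — 2 statements merged into one kernel-verified Lean document; each statement's English description precedes it below -/
import Mathlib

section
/- For every family S of endomorphisms of F_n and every subgroup H of F_n with rk(H) ≤ 3, the rank of H ∩ Fix(S) is at most rk(H), where Fix(S) = {w ∈ F_n : φ(w) = w for all φ ∈ S}. -/
/-- `R` is a retract of the ambient group: there is an endomorphism with image `R`
restricting to the identity on `R` (equivalently, an idempotent endomorphism with image `R`). -/
def IsRetract {G : Type*} [Group G] (R : Subgroup G) : Prop :=
  ∃ r : G →* G, r.range = R ∧ ∀ x ∈ R, r x = x

/-- The subgroup `H` is free of rank `m`. -/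
def HasFreeRank {G : Type*} [Group G] (H : Subgroup G) (m : ℕ) : Prop :=
  ∃ φ : FreeGroup (Fin m) →* G, Function.Injective φ ∧ φ.range = H

/-- The subgroup of common fixed points of a family of endomorphisms. -/
def fixedSubgroup {G : Type*} [Group G] {ι : Type*} (S : ι → (G →* G)) : Subgroup G where
  carrier := {w | ∀ i, S i w = w}
  one_mem' := by simp
  mul_mem' := by
    intro a b ha hb i
    simp [map_mul, ha i, hb i]
  inv_mem' := by
    intro a ha i
    simp [ha i]

open Function Module

/-!
The idea is to detect ranks by derivations. If `E` is a division ring on which `F` acts through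
`ρ : F →* Eˣ`, then Fox calculus shows that more elements `c j` of a free subgroup `H` than its rank
satisfy a nontrivial left linear relation `∑ j, d j * δ (c j) = 0`, valid for all derivations
`δ : H → E`. On the other hand, elements of a basis of `H` satisfy only the trivial one.

A subgroup `A` is inert, i.e. `H ⊓ A` has rank at most that of `H` for all free `H` of finite rank,
as soon as, for some `ρ`, elements of a basis of `A` satisfy no nontrivial relation over `F`. To
see this, order `F` bi-invariantly by its Magnus expansion and embed its group ring in the
Malcev–Neumann ring of series with well-ordered support. If a basis of `H ⊓ A` has more elements
than the rank of `H`, take a relation over `H` between these with as few nonzero coefficients as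
possible; projecting it to a subgroup gives another relation, which by minimality is the same one,
so its coefficients are supported on the subgroup. Comparing leading monomials on the cosets of a
subgroup then shows that the relation is trivial.

* For the periodic points of an injective endomorphism `ψ`, a minimal relation over `F` is also one
  for the representations twisted by the iterates of `ψ`. A leading monomial of a combination of its
  coefficients is thus an iterated image of elements of bounded length, hence periodic. The general
  case reduces to this one, because an endomorphism becomes injective on a stable image.
* For an automorphism of prime order `p`, every derivation from the fixed subgroup to `ZMod p`
  extends to `F`: it counts certain `p`-tuples of edges of the Cayley tree, and since these are
  permuted cyclically, only the constant tuples contribute modulo `p`.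
* Automorphisms of finite order follow by induction on the order, and an arbitrary endomorphism
  because some power of it is the identity on any finitely generated subgroup of periodic points.
* For a family, intersect successively: along a descending sequence of subgroups of bounded rank the
  relation spaces decrease inside a finite-dimensional space, so they stabilize, and a minimal
  relation that is stable is supported on the intersection.
-/

/-! ### The Malcev–Neumann division ring of a bi-ordered group -/

/-- The Malcev–Neumann ring `k((Ω))` of a bi-ordered group `Ω`: series with well-ordered support,
multiplied by convolution. It is a type of Hahn series; Mathlib puts a ring structure on these only
for commutative (additive) exponents, whereas `Ω` here is a multiplicative group. -/
abbrev MalcevNeumann (k Ω : Type*) [PartialOrder Ω] [AddCommGroup k] :=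
  HahnSeries Ω k

namespace MalcevNeumann

open scoped Pointwise

section Ring

variable {k Ω : Type*} [DivisionRing k] [Group Ω] [PartialOrder Ω]

noncomputable instance : One (MalcevNeumann k Ω) := ⟨HahnSeries.single 1 1⟩

theorem one_def : (1 : MalcevNeumann k Ω) = HahnSeries.single 1 1 := rfl

@[simp] theorem coeff_one_one : (1 : MalcevNeumann k Ω).coeff 1 = 1 :=
  HahnSeries.coeff_single_same _ _

theorem coeff_one_of_ne {a : Ω} (h : a ≠ 1) : (1 : MalcevNeumann k Ω).coeff a = 0 :=
  HahnSeries.coeff_single_of_ne h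

theorem isLeast_support_one : IsLeast (1 : MalcevNeumann k Ω).support 1 := by
  rw [one_def, HahnSeries.support_single_of_ne one_ne_zero]
  exact isLeast_singleton

variable [MulLeftMono Ω] [MulRightMono Ω]

instance isOrderedCancelSMul_self : IsOrderedCancelSMul Ω Ω where
  smul_le_smul_left _ _ h c := mul_le_mul_right h c
  smul_le_smul_right _ _ h c := mul_le_mul_left h c
  le_of_smul_le_smul_left _ _ _ := le_of_mul_le_mul_left'
  le_of_smul_le_smul_right _ _ _ := le_of_mul_le_mul_right'

theorem finite_factorizations {S T : Set Ω} (hS : S.IsPWO) (hT : T.IsPWO) (a : Ω) :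
    {b | b ∈ S ∧ b⁻¹ * a ∈ T}.Finite :=
  ((Set.SMulAntidiagonal.finite_of_isPWO hS hT a).image Prod.fst).subset fun b hb =>
    ⟨(b, b⁻¹ * a), ⟨hb.1, hb.2, mul_inv_cancel_left b a⟩, rfl⟩

theorem finite_mul_support (f g : MalcevNeumann k Ω) (a : Ω) :
    (support fun b => f.coeff b * g.coeff (b⁻¹ * a)).Finite :=
  (finite_factorizations f.isPWO_support g.isPWO_support a).subset fun _ hb =>
    ⟨left_ne_zero_of_mul hb, right_ne_zero_of_mul hb⟩

noncomputable instance : Mul (MalcevNeumann k Ω) where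
  mul f g :=
    { coeff := fun a => ∑ᶠ b, f.coeff b * g.coeff (b⁻¹ * a)
      isPWO_support' := (f.isPWO_support.smul g.isPWO_support).mono fun a ha => by
        obtain ⟨b, hb⟩ : ∃ b, f.coeff b * g.coeff (b⁻¹ * a) ≠ 0 := by
          by_contra! h
          exact ha (by simp only [h, finsum_zero])
        exact ⟨b, left_ne_zero_of_mul hb, b⁻¹ * a, right_ne_zero_of_mul hb,
          mul_inv_cancel_left b a⟩ }

theorem coeff_mul (f g : MalcevNeumann k Ω) (a : Ω) :
    (f * g).coeff a = ∑ᶠ b, f.coeff b * g.coeff (b⁻¹ * a) := rfl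

theorem coeff_single_mul (g : Ω) (c : k) (f : MalcevNeumann k Ω) (a : Ω) :
    (HahnSeries.single g c * f).coeff a = c * f.coeff (g⁻¹ * a) := by
  rw [coeff_mul, finsum_eq_single _ g, HahnSeries.coeff_single_same]
  intro b hb
  rw [HahnSeries.coeff_single_of_ne hb, zero_mul]

theorem coeff_mul_single (g : Ω) (c : k) (f : MalcevNeumann k Ω) (a : Ω) :
    (f * HahnSeries.single g c).coeff a = f.coeff (a * g⁻¹) * c := by
  rw [coeff_mul, finsum_eq_single _ (a * g⁻¹)]
  · simp
  intro b hb
  rw [HahnSeries.coeff_single_of_ne, mul_zero]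
  rintro rfl
  simp at hb

theorem single_mul_single (a b : Ω) (c d : k) :
    (HahnSeries.single a c * HahnSeries.single b d : MalcevNeumann k Ω) =
      HahnSeries.single (a * b) (c * d) := by
  ext x
  classical
  rw [coeff_single_mul, HahnSeries.coeff_single, HahnSeries.coeff_single, mul_ite, mul_zero]
  exact if_congr inv_mul_eq_iff_eq_mul rfl rfl

theorem finite_mul_mul_support (f g h : MalcevNeumann k Ω) (a : Ω) :
    (support fun p : Ω × Ω =>
      f.coeff p.1 * g.coeff (p.1⁻¹ * p.2) * h.coeff (p.2⁻¹ * a)).Finite := by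
  refine ((finite_factorizations (f.isPWO_support.smul g.isPWO_support) h.isPWO_support a).biUnion
    fun c _ => (finite_factorizations f.isPWO_support g.isPWO_support c).image
      fun b => (b, c)).subset ?_
  rintro ⟨b, c⟩ hp
  have hfg := left_ne_zero_of_mul hp
  exact Set.mem_biUnion ⟨⟨b, left_ne_zero_of_mul hfg, b⁻¹ * c, right_ne_zero_of_mul hfg,
    mul_inv_cancel_left b c⟩, right_ne_zero_of_mul hp⟩
    ⟨b, ⟨left_ne_zero_of_mul hfg, right_ne_zero_of_mul hfg⟩, rfl⟩

protected theorem mul_assoc (f g h : MalcevNeumann k Ω) : f * g * h = f * (g * h) := by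
  ext a
  let F : Ω × Ω → k := fun p => f.coeff p.1 * g.coeff (p.1⁻¹ * p.2) * h.coeff (p.2⁻¹ * a)
  have hF : (support F).Finite := finite_mul_mul_support f g h a
  calc (f * g * h).coeff a
      = ∑ᶠ c, ∑ᶠ b, F (b, c) := by simp_rw [coeff_mul, finsum_mul]; rfl
    _ = ∑ᶠ p : Ω × Ω, F p.swap :=
        (finsum_curry (fun p => F p.swap) ((hF.image Prod.swap).subset
          fun p hp => ⟨p.swap, hp, rfl⟩)).symm
    _ = ∑ᶠ p, F p := finsum_comp_equiv (Equiv.prodComm Ω Ω) (f := F)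
    _ = ∑ᶠ b, ∑ᶠ c, F (b, c) := finsum_curry F hF
    _ = (f * (g * h)).coeff a := by
        refine finsum_congr fun b => ?_
        rw [coeff_mul, mul_finsum]
        refine Eq.trans (finsum_congr fun c => ?_) (finsum_comp_equiv (Equiv.mulLeft b⁻¹)
          (f := fun c => f.coeff b * (g.coeff c * h.coeff (c⁻¹ * (b⁻¹ * a)))))
        simp [F, mul_assoc]

noncomputable instance : Ring (MalcevNeumann k Ω) :=
  { (inferInstance : AddCommGroup (MalcevNeumann k Ω)) with
    mul := (· * ·)
    one := 1
    left_distrib := fun f g h => by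
      ext a
      simp only [coeff_mul, HahnSeries.coeff_add, mul_add]
      exact finsum_add_distrib (finite_mul_support f g a) (finite_mul_support f h a)
    right_distrib := fun f g h => by
      ext a
      simp only [coeff_mul, HahnSeries.coeff_add, add_mul]
      exact finsum_add_distrib (finite_mul_support f h a) (finite_mul_support g h a)
    zero_mul := fun f => by ext a; simp [coeff_mul]
    mul_zero := fun f => by ext a; simp [coeff_mul]
    mul_assoc := MalcevNeumann.mul_assoc
    one_mul := fun f => by ext a; simp [one_def, coeff_single_mul]
    mul_one := fun f => by ext a; simp [one_def, coeff_mul_single] }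

variable (k Ω) in
/-- The embedding of the group `Ω` into its ring of series, as monomials. -/
noncomputable def of : Ω →* MalcevNeumann k Ω where
  toFun a := HahnSeries.single a 1
  map_one' := rfl
  map_mul' a b := by rw [single_mul_single, mul_one]

@[simp] theorem coeff_of_mul (g : Ω) (f : MalcevNeumann k Ω) (a : Ω) :
    (of k Ω g * f).coeff a = f.coeff (g⁻¹ * a) := by
  simp [of, coeff_single_mul]

@[simp] theorem coeff_mul_of (g : Ω) (f : MalcevNeumann k Ω) (a : Ω) :
    (f * of k Ω g).coeff a = f.coeff (a * g⁻¹) := by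
  simp [of, coeff_mul_single]

theorem isLeast_support_mul_of {f : MalcevNeumann k Ω} {a : Ω} (h : IsLeast f.support a) (g : Ω) :
    IsLeast (f * of k Ω g).support (a * g) := by
  refine ⟨by simpa using h.1, fun b hb => ?_⟩
  rw [HahnSeries.mem_support, coeff_mul_of] at hb
  exact le_mul_inv_iff_mul_le.mp (h.2 hb)

end Ring

section Algebra

variable {k Ω : Type*} [Field k] [Group Ω] [PartialOrder Ω] [MulLeftMono Ω] [MulRightMono Ω]

noncomputable instance : Algebra k (MalcevNeumann k Ω) :=
  Algebra.ofModule
    (fun c f g => by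
      ext a
      simp only [coeff_mul, HahnSeries.coeff_smul, smul_eq_mul, mul_finsum, mul_assoc])
    (fun c f g => by
      ext a
      simp only [coeff_mul, HahnSeries.coeff_smul, smul_eq_mul, mul_finsum, mul_left_comm])

end Algebra

theorem exists_isLeast_support {k Ω : Type*} [AddCommGroup k] [LinearOrder Ω]
    {f : MalcevNeumann k Ω} (hf : f ≠ 0) : ∃ a, IsLeast f.support a :=
  have hne := HahnSeries.support_nonempty_iff.mpr hf
  ⟨_, f.isWF_support.min_mem hne, fun _ hb => f.isWF_support.min_le hne hb⟩

section DivisionRing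

variable {k Ω : Type*} [DivisionRing k] [Group Ω] [LinearOrder Ω] [MulLeftMono Ω]
  [MulRightMono Ω]

theorem isPWO_submonoid_closure {S : Set Ω} (hS : S.IsPWO) (hpos : ∀ x ∈ S, 1 ≤ x) :
    (Submonoid.closure S : Set Ω).IsPWO := by
  rw [Submonoid.closure_eq_image_prod]
  refine (hS.partiallyWellOrderedOn_sublistForall₂ (· ≤ ·)).image_of_monotone_on ?_
  exact fun l₁ _ l₂ hl₂ h₁₂ => h₁₂.prod_le_prod' fun x hx => hpos x <| hl₂ x hx

-- `e` is the geometric series `1 + ε + ε² + ⋯`, whose coefficients are determined recursively on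
-- the submonoid generated by the support of `ε`, which is well-ordered.
theorem exists_eq_one_add_mul (ε : MalcevNeumann k Ω) (hε : ∀ a ∈ ε.support, 1 < a) :
    ∃ e : MalcevNeumann k Ω, e = 1 + ε * e := by
  classical
  set S : Submonoid Ω := Submonoid.closure ε.support
  have hS : (S : Set Ω).IsPWO :=
    isPWO_submonoid_closure ε.isPWO_support fun x hx => (hε x hx).le
  have hwf : WellFounded fun a b : Ω => a < b ∧ a ∈ S ∧ b ∈ S := Set.wellFoundedOn_iff.mp hS.isWF
  let e : Ω → k := hwf.fix fun g rec => (if g = 1 then 1 else 0) +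
    ∑ᶠ b, if h : b⁻¹ * g < g ∧ b⁻¹ * g ∈ S ∧ g ∈ S then ε.coeff b * rec (b⁻¹ * g) h else 0
  have he_rec : ∀ g, e g = (if g = 1 then 1 else 0) +
      ∑ᶠ b, if b⁻¹ * g < g ∧ b⁻¹ * g ∈ S ∧ g ∈ S then ε.coeff b * e (b⁻¹ * g) else 0 :=
    fun g => hwf.fix_eq _ g
  have he_support : ∀ g, e g ≠ 0 → g ∈ S := fun g hg => by
    by_contra hgS
    have hg1 : g ≠ 1 := fun h => hgS (h ▸ S.one_mem)
    rw [he_rec, if_neg hg1] at hg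
    simp [hgS] at hg
  have he : ∀ g, e g = (if g = 1 then 1 else 0) + ∑ᶠ b, ε.coeff b * e (b⁻¹ * g) := fun g => by
    rw [he_rec]
    refine congrArg _ (finsum_congr fun b => ite_eq_left_iff.mpr fun h => ?_)
    by_contra hne
    have hb : b ∈ ε.support := left_ne_zero_of_mul (Ne.symm hne)
    have hbg : b⁻¹ * g ∈ S := he_support _ (right_ne_zero_of_mul (Ne.symm hne))
    exact h ⟨mul_lt_of_lt_one_left' g (inv_lt_one'.mpr (hε b hb)), hbg,
      by simpa using S.mul_mem (Submonoid.subset_closure hb) hbg⟩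
  refine ⟨⟨e, hS.mono fun g hg => he_support g hg⟩, ?_⟩
  ext g
  rw [HahnSeries.coeff_add, coeff_mul, one_def, HahnSeries.coeff_single]
  convert he g

theorem exists_mul_eq_one {f : MalcevNeumann k Ω} (hf : f ≠ 0) : ∃ g, f * g = 1 := by
  obtain ⟨a, ha, hmin⟩ := exists_isLeast_support hf
  set s : MalcevNeumann k Ω := HahnSeries.single a⁻¹ (f.coeff a)⁻¹ with hs
  set t : MalcevNeumann k Ω := HahnSeries.single a (f.coeff a) with ht
  have hts : t * s = 1 := by
    rw [ht, hs, single_mul_single, mul_inv_cancel, mul_inv_cancel₀ ha, one_def]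
  have hpos : ∀ b ∈ (1 - s * f).support, 1 < b := fun b hb => by
    rw [HahnSeries.mem_support, HahnSeries.coeff_sub, hs, coeff_single_mul, inv_inv] at hb
    rcases lt_trichotomy b 1 with h | rfl | h
    · have hab : f.coeff (a * b) = 0 := by
        by_contra h0
        exact (hmin h0).not_gt (mul_lt_of_lt_one_right' a h)
      simp [hab, coeff_one_of_ne h.ne] at hb
    · simp [inv_mul_cancel₀ ha] at hb
    · exact h
  obtain ⟨e, he⟩ := exists_eq_one_add_mul (1 - s * f) hpos
  have hsfe : s * f * e = 1 := by
    rw [sub_mul, one_mul, ← add_sub_assoc, eq_sub_iff_add_eq, add_comm e] at he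
    exact add_right_cancel he
  refine ⟨e * s, ?_⟩
  calc f * (e * s) = t * s * f * e * s := by rw [hts, one_mul, mul_assoc]
    _ = t * (s * f * e) * s := by simp only [mul_assoc]
    _ = 1 := by rw [hsfe, mul_one, hts]

noncomputable instance : DivisionRing (MalcevNeumann k Ω) :=
  DivisionRing.ofIsUnitOrEqZero fun f => by
    rcases eq_or_ne f 0 with hf | hf
    · exact Or.inr hf
    obtain ⟨g, hfg⟩ := exists_mul_eq_one hf
    obtain ⟨h, hgh⟩ := exists_mul_eq_one (right_ne_zero_of_mul (hfg ▸ one_ne_zero))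
    have hfh : f = h := by rw [← mul_one f, ← hgh, ← mul_assoc, hfg, one_mul]
    exact Or.inl ⟨⟨f, g, hfg, hfh ▸ hgh⟩, rfl⟩

end DivisionRing

end MalcevNeumann

/-! ### The Cayley tree of a free group -/

namespace CayleyTree

open FreeGroup

variable {X : Type*}

theorem mk_false (x : X) : mk [(x, false)] = (of x)⁻¹ := rfl

theorem of_mul_of_ne_one (x y : X) : of x * of y ≠ 1 := fun h => by
  have := congrArg (lift fun _ : X => Multiplicative.ofAdd (1 : ℤ)) h
  rw [MonoidHom.map_mul, MonoidHom.map_one, lift_apply_of, lift_apply_of, ← ofAdd_add] at this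
  exact absurd (congrArg Multiplicative.toAdd this) (by simp)

variable [DecidableEq X]

/-- The neighbour of a vertex `g ≠ 1` of the Cayley tree in the direction of the identity. The
edges of the tree are the pairs `(g, x)`, joining `g` and `g * of x`. -/
def parent (g : FreeGroup X) : FreeGroup X := mk g.toWord.dropLast

theorem toWord_parent (g : FreeGroup X) : (parent g).toWord = g.toWord.dropLast := by
  rw [parent, toWord_mk]
  exact (isReduced_toWord.infix (List.dropLast_prefix _).isInfix).reduce_eq

theorem norm_parent_add_one {g : FreeGroup X} (hg : g ≠ 1) : (parent g).norm + 1 = g.norm := by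
  rw [FreeGroup.norm, FreeGroup.norm, toWord_parent, List.length_dropLast]
  exact Nat.sub_add_cancel (List.length_pos_of_ne_nil (mt toWord_eq_nil_iff.mp hg))

theorem exists_eq_parent_mul_mk {g : FreeGroup X} (hg : g ≠ 1) :
    ∃ x b, g.toWord = (parent g).toWord ++ [(x, b)] ∧ g = parent g * mk [(x, b)] := by
  have hw : g.toWord ≠ [] := mt toWord_eq_nil_iff.mp hg
  have hword : g.toWord = (parent g).toWord ++ [g.toWord.getLast hw] := by
    rw [toWord_parent, List.dropLast_append_getLast]
  refine ⟨(g.toWord.getLast hw).1, (g.toWord.getLast hw).2, hword, ?_⟩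
  rw [parent, mul_mk, List.dropLast_append_getLast, mk_toWord]

theorem exists_parent_eq {g : FreeGroup X} (hg : g ≠ 1) :
    ∃ x, parent g * of x = g ∨ g * of x = parent g := by
  obtain ⟨x, _ | _, -, h⟩ := exists_eq_parent_mul_mk hg
  · exact ⟨x, Or.inr (by rw [eq_comm, ← mul_inv_eq_iff_eq_mul, ← mk_false, ← h])⟩
  · exact ⟨x, Or.inl h.symm⟩

theorem parent_mul_of (g : FreeGroup X) (x : X) :
    (parent (g * of x) = g ∧ g * of x ≠ 1) ∨ (parent g = g * of x ∧ g ≠ 1) := by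
  suffices h : (g * of x).toWord = g.toWord ++ [(x, true)] ∨ (parent g = g * of x ∧ g ≠ 1) by
    refine h.imp_left fun hw => ⟨by rw [parent, hw, List.dropLast_concat, mk_toWord], fun h1 => ?_⟩
    simp [h1] at hw
  rcases eq_or_ne g 1 with rfl | hg
  · simp
  obtain ⟨y, b, hword, hmul⟩ := exists_eq_parent_mul_mk hg
  by_cases hyb : y = x ∧ b = false
  · obtain ⟨rfl, rfl⟩ := hyb
    exact Or.inr ⟨by rwa [← mul_inv_eq_iff_eq_mul, ← mk_false, eq_comm], hg⟩
  · have hlast : IsReduced [(y, b), (x, true)] :=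
      isReduced_cons_cons.mpr ⟨fun hx => by simpa using fun hb => hyb ⟨hx, hb⟩,
        IsReduced.singleton⟩
    have hred : IsReduced (g.toWord ++ [(x, true)]) := by
      rw [hword]
      exact IsReduced.append_overlap (hword ▸ isReduced_toWord) hlast (by simp)
    exact Or.inl (by rw [toWord_mul, toWord_of, hred.reduce_eq])

theorem finite_norm_le [Finite X] (r : ℕ) : {g : FreeGroup X | g.norm ≤ r}.Finite :=
  Set.Finite.preimage toWord_injective.injOn (List.finite_length_le (X × Bool) r)

/-- The endpoint of an edge of the Cayley tree that is farther from the identity. -/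
def child (e : FreeGroup X × X) : FreeGroup X :=
  if parent (e.1 * of e.2) = e.1 ∧ e.1 * of e.2 ≠ 1 then e.1 * of e.2 else e.1

theorem child_ne_one_and_endpoints (e : FreeGroup X × X) : child e ≠ 1 ∧
    ((e.1 = parent (child e) ∧ e.1 * of e.2 = child e) ∨
      (e.1 = child e ∧ e.1 * of e.2 = parent (child e))) := by
  unfold child
  split_ifs with h
  · exact ⟨h.2, Or.inl ⟨h.1.symm, rfl⟩⟩
  · obtain ⟨hp, h1⟩ := (parent_mul_of e.1 e.2).resolve_left h
    exact ⟨h1, Or.inr ⟨rfl, hp.symm⟩⟩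

theorem child_injective : Injective (child (X := X)) := by
  have edge_ext (g g' : FreeGroup X) (x x' : X) (hg : g = g') (h : g * of x = g' * of x') :
      (g, x) = (g', x') := by
    subst hg
    rw [of_injective (mul_left_cancel h)]
  have not_reversed (g g' : FreeGroup X) (x x' : X) (h : g' = g * of x) : g' * of x' ≠ g := by
    rw [h, mul_assoc, Ne, mul_eq_left]
    exact of_mul_of_ne_one x x'
  rintro ⟨g, x⟩ ⟨g', x'⟩ h
  have he := (child_ne_one_and_endpoints (g, x)).2
  have hf := (child_ne_one_and_endpoints (g', x')).2
  rw [← h] at hf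
  rcases he with ⟨he₁, he₂⟩ | ⟨he₁, he₂⟩ <;> rcases hf with ⟨hf₁, hf₂⟩ | ⟨hf₁, hf₂⟩
  · exact edge_ext _ _ _ _ (he₁.trans hf₁.symm) (he₂.trans hf₂.symm)
  · exact (not_reversed _ _ _ _ (hf₁.trans he₂.symm) (hf₂.trans he₁.symm)).elim
  · exact (not_reversed _ _ _ _ (hf₁.trans he₂.symm) (hf₂.trans he₁.symm)).elim
  · exact edge_ext _ _ _ _ (he₁.trans hf₁.symm) (he₂.trans hf₂.symm)

section Forest

variable [Fintype X] {S : Finset (FreeGroup X)}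

variable (S) in
/-- The edges of the Cayley tree with both endpoints in `S`. -/
def edgesIn : Finset (FreeGroup X × X) :=
  (S ×ˢ Finset.univ).filter fun e => e.1 * of e.2 ∈ S

theorem mem_edgesIn {e : FreeGroup X × X} : e ∈ edgesIn S ↔ e.1 ∈ S ∧ e.1 * of e.2 ∈ S := by
  simp [edgesIn]

theorem child_mem {e : FreeGroup X × X} (he : e ∈ edgesIn S) : child e ∈ S := by
  rw [mem_edgesIn] at he
  rcases (child_ne_one_and_endpoints e).2 with ⟨-, h⟩ | ⟨h, -⟩
  exacts [h ▸ he.2, h ▸ he.1]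

theorem parent_child_mem {e : FreeGroup X × X} (he : e ∈ edgesIn S) : parent (child e) ∈ S := by
  rw [mem_edgesIn] at he
  rcases (child_ne_one_and_endpoints e).2 with ⟨h, -⟩ | ⟨-, h⟩
  exacts [h ▸ he.1, h ▸ he.2]

theorem card_edgesIn_lt (hS : S.Nonempty) : (edgesIn S).card < S.card := by
  obtain ⟨r, hr, hmin⟩ := S.exists_min_image FreeGroup.norm hS
  rw [← Finset.card_erase_add_one hr, Nat.lt_succ_iff]
  refine Finset.card_le_card_of_injOn child (fun e he => ?_) child_injective.injOn
  refine Finset.mem_erase.mpr ⟨fun h => ?_, child_mem he⟩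
  have hle := hmin _ (parent_child_mem he)
  have hlt := norm_parent_add_one (child_ne_one_and_endpoints e).1
  rw [h] at hle hlt
  lia

-- If `S` spans as many edges as a tree, then every vertex of `S` other than `1` is the far end of
-- such an edge.
theorem parent_mem_of_card_le (hone : 1 ∈ S) (hS : S.card ≤ (edgesIn S).card + 1)
    {s : FreeGroup X} (hs : s ∈ S) (hs1 : s ≠ 1) : parent s ∈ S := by
  have himage : (edgesIn S).image child = S.erase 1 := by
    refine Finset.eq_of_subset_of_card_le (fun s hs => ?_) ?_
    · obtain ⟨e, he, rfl⟩ := Finset.mem_image.mp hs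
      exact Finset.mem_erase.mpr ⟨(child_ne_one_and_endpoints e).1, child_mem he⟩
    · rw [Finset.card_image_of_injective _ child_injective, Finset.card_erase_of_mem hone]
      lia
  obtain ⟨e, he, rfl⟩ := Finset.mem_image.mp (himage ▸ Finset.mem_erase.mpr ⟨hs1, hs⟩)
  exact parent_child_mem he

theorem norm_lt_card (hone : 1 ∈ S) (hS : S.card ≤ (edgesIn S).card + 1)
    {s : FreeGroup X} (hs : s ∈ S) : s.norm < S.card := by
  have exists_norm_eq : ∀ i ≤ s.norm, ∃ t ∈ S, t.norm = i := fun i hi => by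
    induction hi using Nat.decreasingInduction with
    | self => exact ⟨s, hs, rfl⟩
    | of_succ i _ ih =>
      obtain ⟨t, ht, hti⟩ := ih
      have ht1 : t ≠ 1 := by rintro rfl; simp at hti
      have := norm_parent_add_one ht1
      exact ⟨parent t, parent_mem_of_card_le hone hS ht ht1, by lia⟩
  have hrange : Finset.range (s.norm + 1) ⊆ S.image FreeGroup.norm := fun i hi =>
    Finset.mem_image.mpr (exists_norm_eq i (Nat.lt_succ_iff.mp (Finset.mem_range.mp hi)))
  simpa using (Finset.card_le_card hrange).trans Finset.card_image_le

end Forest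

end CayleyTree

/-! ### Leading monomials -/

namespace MalcevNeumann

theorem eq_zero_of_sum_eq_zero {k Ω ι : Type*} [AddCommGroup k] [LinearOrder Ω] (s : Finset ι)
    (y : ι → MalcevNeumann k Ω) (hsum : ∑ i ∈ s, y i = 0)
    (hdistinct : ∀ i ∈ s, ∀ j ∈ s, ∀ a,
      IsLeast (y i).support a → IsLeast (y j).support a → i = j) :
    ∀ i ∈ s, y i = 0 := by
  classical
  by_contra! hne
  have hsupp : (s.filter fun i => y i ≠ 0).Nonempty :=
    hne.imp fun _ hi => Finset.mem_filter.mpr hi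
  have hlead : ∀ i, y i ≠ 0 → ∃ a, IsLeast (y i).support a := fun i => exists_isLeast_support
  have : Nonempty Ω := hne.elim fun i hi => (hlead i hi.2).nonempty
  choose! a ha using hlead
  obtain ⟨i, hi, hmin⟩ := Finset.exists_min_image _ a hsupp
  obtain ⟨his, hi0⟩ := Finset.mem_filter.mp hi
  have hcoeff : (∑ j ∈ s, y j).coeff (a i) = (y i).coeff (a i) := by
    rw [HahnSeries.coeff_sum]
    refine Finset.sum_eq_single i (fun j hj hji => ?_) (absurd his)
    by_contra hj0
    have hyj : y j ≠ 0 := fun h => hj0 (by rw [h, HahnSeries.coeff_zero])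
    have haij : a i = a j :=
      le_antisymm (hmin j (Finset.mem_filter.mpr ⟨hj, hyj⟩)) ((ha j hyj).2 hj0)
    exact hji (hdistinct j hj i his _ (ha j hyj) (haij ▸ ha i hi0))
  rw [hsum, HahnSeries.coeff_zero] at hcoeff
  exact (ha i hi0).1 hcoeff.symm

section LinearOrder

variable {k Ω : Type*} [Field k] [LinearOrder Ω]

theorem support_smul_of_ne_zero {c : k} (hc : c ≠ 0) (f : MalcevNeumann k Ω) :
    (c • f).support = f.support := by
  ext a
  simp [hc]

theorem linearIndependent_of_isLeast_support {ι : Type*} {y : ι → MalcevNeumann k Ω} {a : ι → Ω}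
    (ha : Injective a) (hy : ∀ i, IsLeast (y i).support (a i)) : LinearIndependent k y := by
  refine linearIndependent_iff'.mpr fun s c hc i hi => by_contra fun hci => ?_
  have hlead : ∀ j b, IsLeast (c j • y j).support b → b = a j := fun j b hb => by
    have hcj : c j ≠ 0 := by
      intro h
      simpa [h] using hb.1
    exact (support_smul_of_ne_zero hcj (y j) ▸ hb).unique (hy j)
  have hzero := eq_zero_of_sum_eq_zero s (fun j => c j • y j) hc
    (fun j _ l _ b hj hl => ha ((hlead j b hj).symm.trans (hlead l b hl))) i hi
  rw [smul_eq_zero_iff_right hci] at hzero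
  simpa [hzero] using (hy i).1

/-- The set of leading monomials of the elements of a space of series. -/
def leadSet (V : Submodule k (MalcevNeumann k Ω)) : Set Ω := {a | ∃ y ∈ V, IsLeast y.support a}

theorem card_le_finrank_of_subset_leadSet (V : Submodule k (MalcevNeumann k Ω))
    [FiniteDimensional k V] (T : Finset Ω) (hT : ↑T ⊆ leadSet V) : T.card ≤ finrank k V := by
  choose y hyV hy using fun t : T => hT t.2
  have hy_indep : LinearIndependent k fun t : T => (⟨y t, hyV t⟩ : V) :=
    .of_comp V.subtype (linearIndependent_of_isLeast_support Subtype.val_injective hy)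
  simpa using hy_indep.fintype_card_le_finrank

theorem finrank_le_card_of_leadSet_subset (V : Submodule k (MalcevNeumann k Ω))
    (T : Finset Ω) (hT : leadSet V ⊆ T) : finrank k V ≤ T.card := by
  let L : V →ₗ[k] (T → k) :=
    LinearMap.pi fun t => (HahnSeries.coeff.linearMap t.1).comp V.subtype
  have hL : Injective L := by
    refine (injective_iff_map_eq_zero L).mpr fun y hy => ?_
    by_contra hne
    obtain ⟨a, ha⟩ := exists_isLeast_support (f := y.1) (fun h => hne (Subtype.ext h))
    exact ha.1 (congrFun hy ⟨a, hT ⟨y.1, y.2, ha⟩⟩)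
  simpa using LinearMap.finrank_le_finrank_of_injective hL

theorem finite_leadSet (V : Submodule k (MalcevNeumann k Ω)) [FiniteDimensional k V] :
    (leadSet V).Finite := by
  by_contra hinf
  obtain ⟨T, hT, hcard⟩ := Set.Infinite.exists_subset_card_eq hinf (finrank k V + 1)
  have := card_le_finrank_of_subset_leadSet V T hT
  lia

theorem ncard_leadSet (V : Submodule k (MalcevNeumann k Ω)) [FiniteDimensional k V] :
    (leadSet V).ncard = finrank k V := by
  have hfin := finite_leadSet V
  rw [Set.ncard_eq_toFinset_card _ hfin]
  exact le_antisymm (card_le_finrank_of_subset_leadSet V _ hfin.coe_toFinset.le)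
    (finrank_le_card_of_leadSet_subset V _ hfin.coe_toFinset.ge)

end LinearOrder

theorem exists_finset_leadSet {k Ω X : Type*} [Field k] [Group Ω] [LinearOrder Ω]
    {θ : FreeGroup X →* Ω} (hθ : Injective θ) (V : Submodule k (MalcevNeumann k Ω))
    [FiniteDimensional k V] (hV : leadSet V ⊆ Set.range θ) :
    ∃ S : Finset (FreeGroup X), (∀ g, g ∈ S ↔ θ g ∈ leadSet V) ∧ S.card = finrank k V := by
  have hfin : (θ ⁻¹' leadSet V).Finite := (finite_leadSet V).preimage hθ.injOn
  refine ⟨hfin.toFinset, fun g => by simp, ?_⟩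
  rw [← Set.ncard_eq_toFinset_card _ hfin, ← Set.ncard_image_of_injective _ hθ,
    Set.image_preimage_eq_of_subset hV, ncard_leadSet]

section Stable

variable {k Ω : Type*} [Field k] [Group Ω] [LinearOrder Ω] [MulLeftMono Ω] [MulRightMono Ω]

/-- The elements of `V` that stay in `V` after right multiplication by `g`. -/
noncomputable def stable (V : Submodule k (MalcevNeumann k Ω)) (g : Ω) :
    Submodule k (MalcevNeumann k Ω) :=
  V ⊓ V.comap (LinearMap.mulRight k (of k Ω g))

theorem mem_stable {V : Submodule k (MalcevNeumann k Ω)} {g : Ω} {y : MalcevNeumann k Ω} :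
    y ∈ stable V g ↔ y ∈ V ∧ y * of k Ω g ∈ V := Iff.rfl

variable {X : Type*} [Fintype X] {θ : FreeGroup X →* Ω}

theorem sum_finrank_stable_le_card_edgesIn [DecidableEq X] (V : Submodule k (MalcevNeumann k Ω))
    (hV : leadSet V ⊆ Set.range θ) (S : Finset (FreeGroup X)) (hS : ∀ g, θ g ∈ leadSet V → g ∈ S) :
    ∑ x, finrank k (stable V (θ (FreeGroup.of x))) ≤ (CayleyTree.edgesIn S).card := by
  classical
  rw [Finset.card_eq_sum_card_fiberwise (f := Prod.snd) (t := Finset.univ) (by simp)]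
  refine Finset.sum_le_sum fun x _ => (finrank_le_card_of_leadSet_subset _
    (((CayleyTree.edgesIn S).filter fun e => e.2 = x).image fun e => θ e.1) ?_).trans
      Finset.card_image_le
  rintro a ⟨y, hy, ha⟩
  rw [mem_stable] at hy
  obtain ⟨g, rfl⟩ := hV ⟨y, hy.1, ha⟩
  have hgx : g * FreeGroup.of x ∈ S :=
    hS _ (by rw [_root_.map_mul]; exact ⟨_, hy.2, isLeast_support_mul_of ha _⟩)
  exact Finset.mem_image.mpr ⟨(g, x), Finset.mem_filter.mpr
    ⟨CayleyTree.mem_edgesIn.mpr ⟨hS g ⟨y, hy.1, ha⟩, hgx⟩, rfl⟩, rfl⟩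

theorem sum_finrank_stable_lt (hθ : Injective θ) (V : Submodule k (MalcevNeumann k Ω))
    [FiniteDimensional k V] (hV : leadSet V ⊆ Set.range θ) (hne : V ≠ ⊥) :
    ∑ x, finrank k (stable V (θ (FreeGroup.of x))) < finrank k V := by
  classical
  obtain ⟨S, hmem, hcard⟩ := exists_finset_leadSet hθ V hV
  have hS : S.Nonempty := by
    rwa [← Finset.card_pos, hcard, pos_iff_ne_zero, ne_eq, Submodule.finrank_eq_zero]
  rw [← hcard]
  exact (sum_finrank_stable_le_card_edgesIn V hV S fun g => (hmem g).mpr).trans_lt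
    (CayleyTree.card_edgesIn_lt hS)

theorem norm_lt_finrank [DecidableEq X] (hθ : Injective θ) (V : Submodule k (MalcevNeumann k Ω))
    [FiniteDimensional k V] (hV : leadSet V ⊆ Set.range θ) (hone : (1 : Ω) ∈ leadSet V)
    (hfinrank : finrank k V ≤ ∑ x, finrank k (stable V (θ (FreeGroup.of x))) + 1)
    {g : FreeGroup X} (hg : θ g ∈ leadSet V) : g.norm < finrank k V := by
  obtain ⟨S, hmem, hcard⟩ := exists_finset_leadSet hθ V hV
  have hedges := sum_finrank_stable_le_card_edgesIn V hV S fun g => (hmem g).mpr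
  rw [← hcard]
  exact CayleyTree.norm_lt_card ((hmem 1).mpr (by rwa [map_one])) (by lia) ((hmem g).mpr hg)

end Stable

end MalcevNeumann

theorem exists_linearMap_of_lt_finrank {k V E X : Type*} [Field k] [AddCommGroup V] [Module k V]
    [FiniteDimensional k V] [DivisionRing E] [Algebra k E] [Fintype X] {U : X → Type*}
    [∀ x, AddCommGroup (U x)] [∀ x, Module k (U x)] [∀ x, FiniteDimensional k (U x)]
    (α β : ∀ x, U x →ₗ[k] V) (ρ : X → E) {r : ℕ} (v : Fin r → V)
    (h : ∑ x, finrank k (U x) + r < finrank k V) :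
    ∃ f : V →ₗ[k] E, f ≠ 0 ∧ (∀ x u, f (β x u) = f (α x u) * ρ x) ∧ ∀ i, f (v i) = 0 := by
  let b := finBasis k V
  let c := fun x => finBasis k (U x)
  let eval : V → ((Fin (finrank k V) → E) →ₗ[E] E) := fun w =>
    ∑ i, b.equivFun w i • LinearMap.proj i
  let L : (Fin (finrank k V) → E) →ₗ[E] ((Σ x, Fin (finrank k (U x))) ⊕ Fin r → E) :=
    LinearMap.pi (Sum.elim
      (fun p => eval (β p.1 (c p.1 p.2)) -
        (LinearMap.toSpanSingleton E E (ρ p.1)).comp (eval (α p.1 (c p.1 p.2))))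
      (fun i => eval (v i)))
  have hL : L.ker ≠ ⊥ := LinearMap.ker_ne_bot_of_finrank_lt (by simpa using h)
  obtain ⟨z, hz, hz0⟩ := Submodule.exists_mem_ne_zero_of_ne_bot hL
  have heval : ∀ w, eval w z = b.constr k z w := fun w => by
    simp [eval, Basis.constr_apply_fintype, LinearMap.sum_apply]
  refine ⟨b.constr k z, fun h0 => hz0 ((b.constr k).map_eq_zero_iff.mp h0), fun x => ?_,
    fun i => (heval _).symm.trans (congrFun (LinearMap.mem_ker.mp hz) (Sum.inr i))⟩
  have hcomp : (b.constr k z).comp (β x) =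
      (LinearMap.mulRight k (ρ x)).comp ((b.constr k z).comp (α x)) := by
    refine (c x).ext fun i => ?_
    have hi := congrFun (LinearMap.mem_ker.mp hz) (Sum.inl ⟨x, i⟩)
    simp only [L, LinearMap.pi_apply, Sum.elim_inl, LinearMap.sub_apply, LinearMap.comp_apply,
      heval, LinearMap.toSpanSingleton_apply, Pi.zero_apply, sub_eq_zero, smul_eq_mul] at hi
    exact hi
  exact LinearMap.congr_fun hcomp

/-! ### Fox calculus -/

namespace CayleyTree

open FreeGroup

variable {X : Type*}

/-- Left translation of chains of edges in the Cayley tree; the pair `(g, x)` is the edge from `g`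
to `g * x`. -/
noncomputable def translate (g : FreeGroup X) :
    (FreeGroup X × X →₀ ℤ) →ₗ[ℤ] (FreeGroup X × X →₀ ℤ) :=
  Finsupp.lmapDomain ℤ ℤ fun e => (g * e.1, e.2)

theorem translate_one (m : FreeGroup X × X →₀ ℤ) : translate 1 m = m := by
  simp only [translate, Finsupp.lmapDomain_apply, one_mul]
  exact Finsupp.mapDomain_id

theorem translate_mul (g h : FreeGroup X) (m : FreeGroup X × X →₀ ℤ) :
    translate (g * h) m = translate g (translate h m) := by
  simp only [translate, Finsupp.lmapDomain_apply, ← Finsupp.mapDomain_comp]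
  exact congrArg (Finsupp.mapDomain · m) (funext fun e => by simp [mul_assoc])

theorem translate_apply (g : FreeGroup X) (m : FreeGroup X × X →₀ ℤ) (e : FreeGroup X × X) :
    translate g m e = m (g⁻¹ * e.1, e.2) := by
  have hinj : Injective fun e : FreeGroup X × X => (g * e.1, e.2) := by
    rintro ⟨a, x⟩ ⟨b, y⟩ h
    simpa using h
  simpa [translate] using Finsupp.mapDomain_apply hinj m (g⁻¹ * e.1, e.2)

/-- The affine action of the free group on chains that sends `0` along the paths from `1`. -/
noncomputable def affine : FreeGroup X →* Equiv.Perm (FreeGroup X × X →₀ ℤ) :=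
  lift fun x =>
    { toFun := fun m => Finsupp.single (1, x) 1 + translate (of x) m
      invFun := fun m => translate (of x)⁻¹ (m - Finsupp.single (1, x) 1)
      left_inv := fun m => by simp [← translate_mul, translate_one]
      right_inv := fun m => by simp [← translate_mul, translate_one] }

/-- The chain of the path from `1` to `g` in the Cayley tree. -/
noncomputable def path (g : FreeGroup X) : FreeGroup X × X →₀ ℤ := affine g 0

theorem affine_mul_apply (g h : FreeGroup X) (m : FreeGroup X × X →₀ ℤ) :
    affine (g * h) m = affine g (affine h m) := by
  rw [_root_.map_mul, Equiv.Perm.mul_apply]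

theorem affine_apply (g : FreeGroup X) (m : FreeGroup X × X →₀ ℤ) :
    affine g m = path g + translate g m := by
  induction g using FreeGroup.induction_on generalizing m with
  | C1 => simp [path, translate_one]
  | of x => simp [path, affine]
  | inv_of x _ => simp [path, affine, Equiv.Perm.inv_def, sub_eq_neg_add]
  | mul g h hg hh =>
    rw [path, affine_mul_apply, affine_mul_apply, hg, hh m, hg (affine h 0), hh 0]
    simp only [_root_.map_add, _root_.map_zero, translate_mul, add_zero, add_assoc]

@[simp] theorem path_one : path (1 : FreeGroup X) = 0 := by simp [path]

theorem path_of (x : X) : path (of x) = Finsupp.single (1, x) 1 := by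
  simp [path, affine]

theorem path_mul (g h : FreeGroup X) : path (g * h) = path g + translate g (path h) := by
  rw [← affine_apply, path, affine_mul_apply, path]

section Integral

variable {M : Type*} [AddCommGroup M]

/-- Integration of a function on edges over a chain. -/
noncomputable def integral (F : FreeGroup X × X → M) : (FreeGroup X × X →₀ ℤ) →ₗ[ℤ] M :=
  Finsupp.linearCombination ℤ F

theorem integral_translate (F : FreeGroup X × X → M) (g : FreeGroup X)
    (m : FreeGroup X × X →₀ ℤ) :
    integral F (translate g m) = integral (fun e => F (g * e.1, e.2)) m := by
  simp only [integral, translate, Finsupp.lmapDomain_apply, Finsupp.linearCombination_mapDomain]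
  rfl

theorem integral_path_mul (F : FreeGroup X × X → M) (g h : FreeGroup X) :
    integral F (path (g * h)) =
      integral F (path g) + integral (fun e => F (g * e.1, e.2)) (path h) := by
  rw [path_mul, _root_.map_add, integral_translate]

@[simp] theorem integral_path_of (F : FreeGroup X × X → M) (x : X) :
    integral F (path (of x)) = F (1, x) := by
  simp [path_of, integral]

theorem integral_comp {N : Type*} [AddCommGroup N] (f : M →+ N) (F : FreeGroup X × X → M)
    (m : FreeGroup X × X →₀ ℤ) :
    integral (fun e => f (F e)) m = f (integral F m) := by
  simp [integral, Finsupp.linearCombination_apply, Finsupp.sum]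

theorem integral_eq_sum (F : FreeGroup X × X → M) (m : FreeGroup X × X →₀ ℤ)
    {s : Finset (FreeGroup X × X)} (hs : m.support ⊆ s) :
    integral F m = ∑ e ∈ s, m e • F e := by
  rw [integral, Finsupp.linearCombination_apply]
  exact Finsupp.sum_of_support_subset m hs _ fun _ _ => zero_smul ℤ _

theorem integral_path_translate_sub (Λ : FreeGroup X → M) (u g : FreeGroup X) :
    integral (fun e => Λ (u * e.1 * of e.2) - Λ (u * e.1)) (path g) = Λ (u * g) - Λ u := by
  induction g using FreeGroup.induction_on generalizing u with
  | C1 => simp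
  | of x => simp
  | inv_of x _ =>
    have hpath := integral_path_mul
      (fun e => Λ (u * (of x)⁻¹ * e.1 * of e.2) - Λ (u * (of x)⁻¹ * e.1)) (of x) (of x)⁻¹
    simp only [mul_inv_cancel, path_one, _root_.map_zero, integral_path_of, mul_one,
      inv_mul_cancel_right, ← mul_assoc] at hpath
    rw [eq_neg_of_add_eq_zero_right hpath.symm, neg_sub]
  | mul g h hg hh =>
    have hpath := hh (u * g)
    simp only [← mul_assoc] at hpath ⊢
    rw [integral_path_mul, hg]
    simp only [← mul_assoc, hpath, sub_add_sub_cancel']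

theorem integral_path_sub (Λ : FreeGroup X → M) (g : FreeGroup X) :
    integral (fun e => Λ (e.1 * of e.2) - Λ e.1) (path g) = Λ g - Λ 1 := by
  simpa using integral_path_translate_sub Λ 1 g

end Integral

section Fox

variable {R : Type*} [Ring R]

open Classical in
/-- The Fox derivative with respect to `x`, with coefficients pushed forward along `ρ`. -/
noncomputable def fox (ρ : FreeGroup X →* R) (x : X) (g : FreeGroup X) : R :=
  integral (fun e => if e.2 = x then ρ e.1 else 0) (path g)

theorem fox_mul (ρ : FreeGroup X →* R) (x : X) (g h : FreeGroup X) :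
    fox ρ x (g * h) = fox ρ x g + ρ g * fox ρ x h := by
  classical
  have hint := integral_comp (AddMonoidHom.mulLeft (ρ g))
    (fun e : FreeGroup X × X => if e.2 = x then ρ e.1 else 0) (path h)
  simp only [AddMonoidHom.coe_mulLeft, mul_ite, mul_zero, ← _root_.map_mul] at hint
  rw [fox, integral_path_mul, fox, fox, ← hint]

theorem fox_of [DecidableEq X] (ρ : FreeGroup X →* R) (x y : X) :
    fox ρ x (of y) = if y = x then 1 else 0 := by
  rw [fox, integral_path_of, _root_.map_one]
  split_ifs <;> rfl

theorem fox_eq [DecidableEq X] (ρ : FreeGroup X →* R) (x : X) (g : FreeGroup X) :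
    fox ρ x g = integral (fun e => if e.2 = x then ρ e.1 else 0) (path g) := by
  rw [fox]
  congr!

theorem map_mul_fox {R' : Type*} [Ring R'] (F : R →+ R') {ρ : FreeGroup X →* R}
    {ρ' : FreeGroup X →* R'} {a : R} {b : R'} {g : FreeGroup X}
    (h : ∀ e ∈ (path g).support, F (a * ρ e.1) = b * ρ' e.1) (x : X) :
    F (a * fox ρ x g) = b * fox ρ' x g := by
  classical
  change (F.comp (AddMonoidHom.mulLeft a)) _ = AddMonoidHom.mulLeft b _
  rw [fox_eq, fox_eq, ← integral_comp, ← integral_comp, integral_eq_sum _ _ subset_rfl,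
    integral_eq_sum _ _ subset_rfl]
  refine Finset.sum_congr rfl fun e he => congrArg _ ?_
  by_cases hx : e.2 = x
  · simpa [hx] using h e he
  · simp [hx]

end Fox

end CayleyTree

open CayleyTree (fox fox_mul fox_of)

/-! ### Derivations and the relations between their values -/

section Derivations

variable {Ω R : Type*} [Group Ω] [Ring R]

/-- `D` restricts to a derivation (crossed homomorphism) along `ρ` on the subgroup `H`. -/
def IsDerOn (ρ : Ω →* R) (H : Subgroup Ω) (D : Ω → R) : Prop :=
  ∀ a ∈ H, ∀ b ∈ H, D (a * b) = D a + ρ a * D b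

namespace IsDerOn

variable {ρ : Ω →* R} {H H' : Subgroup Ω} {D : Ω → R}

theorem mono (hD : IsDerOn ρ H' D) (h : H ≤ H') : IsDerOn ρ H D :=
  fun a ha b hb => hD a (h ha) b (h hb)

theorem map_one (hD : IsDerOn ρ H D) : D 1 = 0 := by
  simpa using hD 1 H.one_mem 1 H.one_mem

theorem map_inv (hD : IsDerOn ρ H D) {a : Ω} (ha : a ∈ H) : D a⁻¹ = -(ρ a⁻¹ * D a) := by
  have hmul := hD a⁻¹ (H.inv_mem ha) a ha
  rw [inv_mul_cancel, hD.map_one] at hmul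
  exact eq_neg_of_add_eq_zero_left hmul.symm

theorem comp {G : Type*} [Group G] (φ : G →* Ω) (hD : IsDerOn ρ φ.range D) :
    IsDerOn (ρ.comp φ) ⊤ (D ∘ φ) := fun a _ b _ => by
  simpa using hD (φ a) ⟨a, rfl⟩ (φ b) ⟨b, rfl⟩

theorem extend {G : Type*} [Group G] {φ : G →* Ω} (hφ : Injective φ) {D : G → R}
    (hD : IsDerOn (ρ.comp φ) ⊤ D) : IsDerOn ρ φ.range (Function.extend φ D 0) := by
  rintro _ ⟨a, rfl⟩ _ ⟨b, rfl⟩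
  simp only [← _root_.map_mul, hφ.extend_apply]
  exact hD a trivial b trivial

end IsDerOn

section FreeGroup

variable {X : Type*} {ρ : FreeGroup X →* R} {D D' : FreeGroup X → R}

theorem isDerOn_fox (ρ : FreeGroup X →* R) (x : X) (H : Subgroup (FreeGroup X)) :
    IsDerOn ρ H (fox ρ x) := fun a _ b _ => fox_mul ρ x a b

theorem IsDerOn.eq_of_eqOn_of (hD : IsDerOn ρ ⊤ D) (hD' : IsDerOn ρ ⊤ D')
    (h : ∀ x, D (FreeGroup.of x) = D' (FreeGroup.of x)) (g : FreeGroup X) : D g = D' g := by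
  induction g using FreeGroup.induction_on with
  | C1 => rw [hD.map_one, hD'.map_one]
  | of x => exact h x
  | inv_of x _ => rw [hD.map_inv trivial, hD'.map_inv trivial, h]
  | mul g h hg hh => rw [hD g trivial h trivial, hD' g trivial h trivial, hg, hh]

theorem IsDerOn.eq_sum_fox [Fintype X] (hD : IsDerOn ρ ⊤ D) (g : FreeGroup X) :
    D g = ∑ x, fox ρ x g * D (FreeGroup.of x) := by
  classical
  refine hD.eq_of_eqOn_of (D' := fun g => ∑ x, fox ρ x g * D (FreeGroup.of x))
    (fun a _ b _ => ?_) (fun y => ?_) g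
  · simp only [fox_mul, add_mul, Finset.sum_add_distrib, Finset.mul_sum, mul_assoc]
  · simp [fox_of]

end FreeGroup

section Relations

variable {J : Type*} [Fintype J]

/-- The left linear relations satisfied by the values at `c` of all derivations on `H`. -/
def DerRel (ρ : Ω →* R) (H : Subgroup Ω) (c : J → Ω) : Submodule R (J → R) where
  carrier := {d | ∀ D, IsDerOn ρ H D → ∑ j, d j * D (c j) = 0}
  zero_mem' := by simp
  add_mem' := fun {a b} ha hb D hD => by
    simp [add_mul, Finset.sum_add_distrib, ha D hD, hb D hD]
  smul_mem' := fun r d hd D hD => by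
    simp [mul_assoc, ← Finset.mul_sum, hd D hD]

theorem derRel_mono (ρ : Ω →* R) {H H' : Subgroup Ω} (h : H ≤ H') (c : J → Ω) :
    DerRel ρ H c ≤ DerRel ρ H' c := fun _ hd D hD => hd D (hD.mono h)

theorem derRel_range {G : Type*} [Group G] (ρ : Ω →* R) {φ : G →* Ω} (hφ : Injective φ)
    (b : J → G) : DerRel ρ φ.range (φ ∘ b) = DerRel (ρ.comp φ) ⊤ b := by
  ext d
  refine ⟨fun hd D hD => ?_, fun hd D hD => hd (D ∘ φ) (hD.comp φ)⟩
  simpa [hφ.extend_apply] using hd _ (hD.extend hφ)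

theorem mem_derRel_top_iff {X : Type*} [Finite X] {ρ : FreeGroup X →* R} {c : J → FreeGroup X}
    {d : J → R} : d ∈ DerRel ρ ⊤ c ↔ ∀ x, ∑ j, d j * fox ρ x (c j) = 0 := by
  cases nonempty_fintype X
  refine ⟨fun hd x => hd _ (isDerOn_fox ρ x ⊤), fun h D hD => ?_⟩
  simp only [hD.eq_sum_fox (c _), Finset.mul_sum]
  rw [Finset.sum_comm]
  simp only [← mul_assoc, ← Finset.sum_mul, h, zero_mul, Finset.sum_const_zero]

theorem map_mem_derRel_top {R' X : Type*} [Ring R'] [Finite X] (F : R →+ R')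
    {ρ : FreeGroup X →* R} {ρ' : FreeGroup X →* R'} {c : J → FreeGroup X} {d : J → R} {d' : J → R'}
    (hF : ∀ j, ∀ e ∈ (CayleyTree.path (c j)).support, F (d j * ρ e.1) = d' j * ρ' e.1)
    (hd : d ∈ DerRel ρ ⊤ c) : d' ∈ DerRel ρ' ⊤ c := by
  rw [mem_derRel_top_iff] at hd ⊢
  intro x
  simp only [← CayleyTree.map_mul_fox F (hF _)]
  rw [← map_sum, hd x, map_zero]

end Relations

/-- `c` is an injectively indexed part of a basis `s` of the free subgroup `C`. -/
def IsPartialBasis {J : Type*} (C : Subgroup Ω) (c : J → Ω) : Prop :=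
  ∃ s : Set Ω, Injective (FreeGroup.lift ((↑) : s → Ω)) ∧
    (FreeGroup.lift ((↑) : s → Ω)).range = C ∧ Injective c ∧ ∀ j, c j ∈ s

namespace IsPartialBasis

variable {J : Type*} {C : Subgroup Ω} {c : J → Ω}

theorem of_injective {T : Type*} {φ : FreeGroup T →* Ω} (hφ : Injective φ) {i : J → T}
    (hi : Injective i) : IsPartialBasis φ.range fun j => φ (FreeGroup.of (i j)) := by
  have hφof : Injective (φ ∘ FreeGroup.of) := hφ.comp FreeGroup.of_injective
  let e : FreeGroup T ≃* FreeGroup (Set.range (φ ∘ FreeGroup.of)) :=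
    FreeGroup.freeGroupCongr (Equiv.ofInjective _ hφof)
  have he : (FreeGroup.lift ((↑) : Set.range (φ ∘ FreeGroup.of) → Ω)).comp e.toMonoidHom = φ := by
    ext t
    simp [e]
  refine ⟨Set.range (φ ∘ FreeGroup.of), ?_, ?_, hφof.comp hi, fun j => ⟨i j, rfl⟩⟩
  · exact Injective.of_comp_right (g := e) (by rwa [← he] at hφ) e.surjective
  · have htop : e.toMonoidHom.range = ⊤ := MonoidHom.range_eq_top.mpr e.surjective
    rw [← congrArg MonoidHom.range he, MonoidHom.range_comp, htop, ← MonoidHom.range_eq_map]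

theorem mem (h : IsPartialBasis C c) (j : J) : c j ∈ C := by
  obtain ⟨s, -, rfl, -, hc⟩ := h
  exact ⟨FreeGroup.of ⟨c j, hc j⟩, FreeGroup.lift_apply_of⟩

theorem exists_isDerOn [DecidableEq J] (h : IsPartialBasis C c) (ρ : Ω →* R) (j₀ : J) :
    ∃ δ, IsDerOn ρ C δ ∧ ∀ j, δ (c j) = if j = j₀ then 1 else 0 := by
  classical
  obtain ⟨s, hφ, rfl, hinj, hc⟩ := h
  set φ := FreeGroup.lift ((↑) : s → Ω)
  refine ⟨extend φ (fox (ρ.comp φ) ⟨c j₀, hc j₀⟩) 0, (isDerOn_fox _ _ ⊤).extend hφ, fun j => ?_⟩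
  rw [show c j = φ (FreeGroup.of ⟨c j, hc j⟩) from FreeGroup.lift_apply_of.symm, hφ.extend_apply,
    fox_of]
  simp only [Subtype.mk.injEq, hinj.eq_iff]

end IsPartialBasis

end Derivations

/-! ### Vectors of minimal support -/

/-- `d` has minimal support among the nonzero vectors of `K` and is normalized by `d j₀ = 1`; this
is expressed by saying that every vector of `K` supported within `d` is a multiple of `d`. -/
structure IsMinimalVector {E J : Type*} [DivisionRing E] (K : Submodule E (J → E)) (d : J → E)
    (j₀ : J) : Prop where
  mem : d ∈ K
  apply_eq_one : d j₀ = 1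
  eq_smul : ∀ d' ∈ K, (∀ j, d j = 0 → d' j = 0) → d' = d' j₀ • d

namespace IsMinimalVector

variable {E J : Type*} [DivisionRing E] {K K' : Submodule E (J → E)} {d : J → E} {j₀ : J}

theorem ne_zero (h : IsMinimalVector K d j₀) : d ≠ 0 := fun h0 => by
  simpa [h0] using h.apply_eq_one

theorem mono (h : IsMinimalVector K d j₀) (hle : K' ≤ K) (hd : d ∈ K') :
    IsMinimalVector K' d j₀ :=
  ⟨hd, h.apply_eq_one, fun d' hd' => h.eq_smul d' (hle hd')⟩

end IsMinimalVector

theorem exists_isMinimalVector {E J : Type*} [DivisionRing E] [Finite J]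
    {K : Submodule E (J → E)} (hK : K ≠ ⊥) : ∃ d j₀, IsMinimalVector K d j₀ := by
  obtain ⟨v, hv, hv0⟩ := Submodule.exists_mem_ne_zero_of_ne_bot hK
  obtain ⟨d, ⟨hd, hd0⟩, hmin⟩ := WellFounded.has_min
    (measure fun d : J → E => (support d).ncard).wf {d | d ∈ K ∧ d ≠ 0} ⟨v, hv, hv0⟩
  obtain ⟨j₀, hj₀ : d j₀ ≠ 0⟩ := Function.ne_iff.mp hd0
  refine ⟨(d j₀)⁻¹ • d, j₀, K.smul_mem _ hd, inv_mul_cancel₀ hj₀, fun d' hd' hzero => ?_⟩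
  have hzero' : ∀ j, d j = 0 → d' j = 0 := fun j hj => hzero j (by simp [hj])
  by_contra hne
  refine hmin (d' - d' j₀ • (d j₀)⁻¹ • d) ⟨K.sub_mem hd' (K.smul_mem _ (K.smul_mem _ hd)),
    sub_ne_zero.mpr hne⟩ (Set.ncard_lt_ncard ⟨fun j hj hdj => hj ?_, fun h => h hj₀ ?_⟩)
  · simp [hdj, hzero' j hdj]
  · simp [hj₀]

/-! ### Specialization of relations -/

namespace MalcevNeumann

section Projection

variable {k Ω : Type*} [Field k] [LinearOrder Ω] [Group Ω] {H : Subgroup Ω}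

open Classical in
/-- The part of a series supported on the subgroup `H`. -/
noncomputable def proj (H : Subgroup Ω) : MalcevNeumann k Ω →ₗ[k] MalcevNeumann k Ω where
  toFun f :=
    { coeff := fun a => if a ∈ H then f.coeff a else 0
      isPWO_support' := f.isPWO_support.mono fun a ha h => ha (by simp [h]) }
  map_add' f g := by
    ext a
    by_cases h : a ∈ H <;> simp [h]
  map_smul' c f := by
    ext a
    by_cases h : a ∈ H <;> simp [h]

theorem coeff_proj_of_mem {a : Ω} (h : a ∈ H) (f : MalcevNeumann k Ω) :
    (proj H f).coeff a = f.coeff a := if_pos h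

theorem coeff_proj_of_notMem {a : Ω} (h : a ∉ H) (f : MalcevNeumann k Ω) :
    (proj H f).coeff a = 0 := if_neg h

theorem proj_eq_self_iff {f : MalcevNeumann k Ω} : proj H f = f ↔ f.support ⊆ H := by
  refine ⟨fun h a ha => ?_, fun h => ?_⟩
  · by_contra haH
    rw [HahnSeries.mem_support, ← h, coeff_proj_of_notMem haH] at ha
    exact ha rfl
  · ext a
    by_cases ha : a ∈ H
    · rw [coeff_proj_of_mem ha]
    · rw [coeff_proj_of_notMem ha]
      by_contra h0
      exact ha (h (Ne.symm h0))

theorem proj_one (H : Subgroup Ω) : proj H (1 : MalcevNeumann k Ω) = 1 :=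
  proj_eq_self_iff.mpr fun a ha => by
    by_contra h
    exact ha (coeff_one_of_ne fun h1 => h (h1 ▸ H.one_mem))

variable [MulLeftMono Ω] [MulRightMono Ω]

theorem proj_eq_self_of_isMinimalVector {J : Type*}
    {K : Submodule (MalcevNeumann k Ω) (J → MalcevNeumann k Ω)} {d : J → MalcevNeumann k Ω} {j₀ : J}
    (hd : IsMinimalVector K d j₀) (hproj : (fun j => proj H (d j)) ∈ K) (j : J) :
    proj H (d j) = d j := by
  have hsmul := hd.eq_smul _ hproj fun j hj => by rw [hj, map_zero]
  rw [hd.apply_eq_one, proj_one, one_smul] at hsmul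
  exact congrFun hsmul j

theorem proj_mul_of {h : Ω} (hh : h ∈ H) (f : MalcevNeumann k Ω) :
    proj H (f * of k Ω h) = proj H f * of k Ω h := by
  ext a
  rw [coeff_mul_of]
  by_cases ha : a ∈ H
  · rw [coeff_proj_of_mem ha, coeff_proj_of_mem (H.mul_mem ha (H.inv_mem hh)), coeff_mul_of]
  · have hah : a * h⁻¹ ∉ H := fun h' => ha (by simpa using H.mul_mem h' hh)
    rw [coeff_proj_of_notMem ha, coeff_proj_of_notMem hah]

theorem proj_mem_derRel_top {X J : Type*} [Finite X] [Fintype J] {θ : FreeGroup X →* Ω}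
    (hH : θ.range ≤ H) {c : J → FreeGroup X} {d : J → MalcevNeumann k Ω}
    (hd : d ∈ DerRel ((of k Ω).comp θ) ⊤ c) :
    (fun j => proj H (d j)) ∈ DerRel ((of k Ω).comp θ) ⊤ c :=
  map_mem_derRel_top (proj H).toAddMonoidHom (fun j e _ => proj_mul_of (hH ⟨e.1, rfl⟩) (d j)) hd

end Projection

section Specialization

variable {k Ω : Type*} [Field k] [LinearOrder Ω] [Group Ω] [MulLeftMono Ω] [MulRightMono Ω]

theorem exists_linearMap_of_sum_finrank_stable_lt {X E : Type*} [Fintype X] [DivisionRing E]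
    [Algebra k E] (V : Submodule k (MalcevNeumann k Ω)) [FiniteDimensional k V] (g : X → Ω)
    (ρ : X → E) {s : ℕ} (v : Fin s → V)
    (hlt : ∑ x, finrank k (stable V (g x)) + s < finrank k V) :
    ∃ F : MalcevNeumann k Ω →ₗ[k] E, ¬V ≤ LinearMap.ker F ∧
      (∀ x, ∀ y ∈ stable V (g x), F (y * of k Ω (g x)) = F y * ρ x) ∧ ∀ i, F (v i) = 0 := by
  obtain ⟨f, hf0, hf, hv⟩ := exists_linearMap_of_lt_finrank
    (fun x => Submodule.inclusion (inf_le_left : stable V (g x) ≤ V))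
    (fun x => ((LinearMap.mulRight k (of k Ω (g x))).comp (stable V (g x)).subtype).codRestrict V
      fun u => (mem_stable.mp u.2).2) ρ v hlt
  obtain ⟨F, rfl⟩ := LinearMap.exists_extend f
  exact ⟨F, fun h => hf0 (LinearMap.ext fun y => h y.2), fun x y hy => hf x ⟨y, hy⟩, hv⟩

variable {X J : Type*} [DecidableEq X]

/-- The span of the translates of the entries of `d` by the ball of radius `r`. -/
noncomputable def ballSpan (θ : FreeGroup X →* Ω) (d : J → MalcevNeumann k Ω) (r : ℕ) :
    Submodule k (MalcevNeumann k Ω) :=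
  Submodule.span k ((fun p : J × FreeGroup X => d p.1 * of k Ω (θ p.2)) '' {p | p.2.norm ≤ r})

theorem mul_of_mem_ballSpan (θ : FreeGroup X →* Ω) (d : J → MalcevNeumann k Ω) {r : ℕ} (j : J)
    {w : FreeGroup X} (hw : w.norm ≤ r) : d j * of k Ω (θ w) ∈ ballSpan θ d r :=
  Submodule.subset_span ⟨(j, w), hw, rfl⟩

theorem mem_ballSpan (θ : FreeGroup X →* Ω) (d : J → MalcevNeumann k Ω) (r : ℕ) (j : J) :
    d j ∈ ballSpan θ d r := by
  simpa using mul_of_mem_ballSpan θ d (r := r) j (w := 1) (by simp)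

theorem leadSet_ballSpan_subset {θ : FreeGroup X →* Ω} {d : J → MalcevNeumann k Ω}
    (hd : ∀ j, proj θ.range (d j) = d j) (r : ℕ) :
    leadSet (ballSpan θ d r) ⊆ Set.range θ := by
  rintro a ⟨y, hy, ha⟩
  have hproj : proj θ.range y = y := by
    refine LinearMap.eqOn_span (f := proj θ.range) (g := LinearMap.id) ?_ hy
    rintro _ ⟨p, -, rfl⟩
    simp only [proj_mul_of (MonoidHom.mem_range.mpr ⟨p.2, rfl⟩), hd, LinearMap.id_apply]
  exact proj_eq_self_iff.mp hproj ha.1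

theorem map_mul_of_norm_le {E : Type*} [DivisionRing E] [Algebra k E] {ρ : FreeGroup X →* E}
    {θ : FreeGroup X →* Ω} {d : J → MalcevNeumann k Ω} {r : ℕ} {F : MalcevNeumann k Ω →ₗ[k] E}
    (hF : ∀ x, ∀ y ∈ stable (ballSpan θ d r) (θ (FreeGroup.of x)),
      F (y * of k Ω (θ (FreeGroup.of x))) = F y * ρ (FreeGroup.of x))
    {w : FreeGroup X} (hw : w.norm ≤ r) (j : J) : F (d j * of k Ω (θ w)) = F (d j) * ρ w := by
  have mul_of (u : FreeGroup X) (x : X) : d j * of k Ω (θ u) * of k Ω (θ (FreeGroup.of x)) =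
      d j * of k Ω (θ (u * FreeGroup.of x)) := by simp only [map_mul, mul_assoc]
  have step (u : FreeGroup X) (x : X) (hu : u.norm ≤ r) (hux : (u * FreeGroup.of x).norm ≤ r) :
      F (d j * of k Ω (θ (u * FreeGroup.of x))) =
        F (d j * of k Ω (θ u)) * ρ (FreeGroup.of x) := by
    rw [← mul_of]
    exact hF x _ (mem_stable.mpr
      ⟨mul_of_mem_ballSpan θ d j hu, mul_of u x ▸ mul_of_mem_ballSpan θ d j hux⟩)
  induction hn : w.norm generalizing w with
  | zero => simp [FreeGroup.norm_eq_zero.mp hn]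
  | succ n ih =>
    have hw1 : w ≠ 1 := by
      rintro rfl
      simp at hn
    have hnorm := CayleyTree.norm_parent_add_one hw1
    have hparent := ih (w := CayleyTree.parent w) (by lia) (by lia)
    obtain ⟨x, hx | hx⟩ := CayleyTree.exists_parent_eq hw1
    · have hstep := step (CayleyTree.parent w) x (by lia) (by rwa [hx])
      rwa [hparent, mul_assoc, ← map_mul, hx] at hstep
    · have hstep := step w x hw (by rw [hx]; lia)
      rw [hx, hparent, ← hx, map_mul, ← mul_assoc] at hstep
      exact (((Group.isUnit _).map ρ).mul_right_cancel hstep).symm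

variable [Finite J]

theorem exists_radius (c : J → FreeGroup X) :
    ∃ r, ∀ j, ∀ e ∈ (CayleyTree.path (c j)).support, e.1.norm ≤ r := by
  cases nonempty_fintype J
  refine ⟨Finset.univ.sup fun j => (CayleyTree.path (c j)).support.sup fun e => e.1.norm,
    fun j e he => ?_⟩
  exact (Finset.le_sup (f := fun e : FreeGroup X × X => e.1.norm) he).trans
    (Finset.le_sup (f := fun j => (CayleyTree.path (c j)).support.sup fun e => e.1.norm)
      (Finset.mem_univ j))

variable [Finite X]

theorem finite_ball (r : ℕ) : {p : J × FreeGroup X | p.2.norm ≤ r}.Finite :=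
  ((Set.finite_univ (α := J)).prod (CayleyTree.finite_norm_le r)).subset fun _ h => ⟨trivial, h⟩

instance (θ : FreeGroup X →* Ω) (d : J → MalcevNeumann k Ω) (r : ℕ) :
    FiniteDimensional k (ballSpan θ d r) :=
  FiniteDimensional.span_of_finite k ((finite_ball r).image _)

theorem finrank_ballSpan_le (θ : FreeGroup X →* Ω) (d : J → MalcevNeumann k Ω) (r : ℕ) :
    finrank k (ballSpan θ d r) ≤ {p : J × FreeGroup X | p.2.norm ≤ r}.ncard := by
  classical
  have hball := finite_ball (X := X) (J := J) r
  have hspan := finrank_span_finset_le_card (R := k)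
    (hball.toFinset.image fun p : J × FreeGroup X => d p.1 * of k Ω (θ p.2))
  rw [Finset.coe_image, Set.Finite.coe_toFinset] at hspan
  rw [Set.ncard_eq_toFinset_card _ hball]
  exact hspan.trans Finset.card_image_le

end Specialization

section Relations

variable {k Ω X J : Type*} [Field k] [LinearOrder Ω] [Group Ω] [MulLeftMono Ω] [MulRightMono Ω]
  [Fintype J] {θ : FreeGroup X →* Ω} {c : J → FreeGroup X}
  {d : J → MalcevNeumann k Ω}

theorem exists_mem_derRel_of_lt_finrank [Fintype X] [DecidableEq X] {E : Type*} [DivisionRing E]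
    [Algebra k E] (ρ : FreeGroup X →* E) (hrel : d ∈ DerRel ((of k Ω).comp θ) ⊤ c) {r : ℕ}
    (hr : ∀ j, ∀ e ∈ (CayleyTree.path (c j)).support, e.1.norm ≤ r) {s : ℕ} (z : Fin s → J)
    (hlt : ∑ x, finrank k (stable (ballSpan θ d r) (θ (FreeGroup.of x))) + s <
      finrank k (ballSpan θ d r)) :
    ∃ d' ∈ DerRel ρ ⊤ c, d' ≠ 0 ∧ (∀ j, d j = 0 → d' j = 0) ∧ ∀ i, d' (z i) = 0 := by
  obtain ⟨F, hF0, hF, hz⟩ := exists_linearMap_of_sum_finrank_stable_lt (ballSpan θ d r)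
    (fun x => θ (FreeGroup.of x)) (fun x => ρ (FreeGroup.of x))
    (fun i => ⟨d (z i), mem_ballSpan θ d r (z i)⟩) hlt
  refine ⟨fun j => F (d j), map_mem_derRel_top F.toAddMonoidHom
    (fun j e he => map_mul_of_norm_le hF (hr j e he) j) hrel, fun h0 => hF0 ?_,
    fun j hj => by simp [hj], hz⟩
  refine Submodule.span_le.mpr ?_
  rintro _ ⟨⟨j, w⟩, hw, rfl⟩
  exact (map_mul_of_norm_le hF hw j).trans (by rw [congrFun h0 j, Pi.zero_apply, zero_mul])

theorem exists_mem_derRel [Finite X] {E : Type*} [DivisionRing E] [Algebra k E]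
    (ρ : FreeGroup X →* E) (hθ : Injective θ) (hrel : d ∈ DerRel ((of k Ω).comp θ) ⊤ c)
    (hsupp : ∀ j, proj θ.range (d j) = d j) (hd : d ≠ 0) :
    ∃ d' ∈ DerRel ρ ⊤ c, d' ≠ 0 ∧ ∀ j, d j = 0 → d' j = 0 := by
  classical
  cases nonempty_fintype X
  obtain ⟨r, hr⟩ := exists_radius c
  obtain ⟨j, hj⟩ := Function.ne_iff.mp hd
  have hne : ballSpan θ d r ≠ ⊥ := fun h => hj (by simpa [h] using mem_ballSpan θ d r j)
  obtain ⟨d', hd', hd'0, hzero, -⟩ := exists_mem_derRel_of_lt_finrank ρ hrel hr Fin.elim0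
    (sum_finrank_stable_lt hθ (ballSpan θ d r) (leadSet_ballSpan_subset hsupp r) hne)
  exact ⟨d', hd', hd'0, hzero⟩

-- If the lead set were not connected, `exists_mem_derRel_of_lt_finrank` would give a relation of
-- smaller support, with `j₀`-entry zero.
theorem norm_lt_ncard_ball [Finite X] [DecidableEq X] (hθ : Injective θ)
    {j₀ : J} (hd : IsMinimalVector (DerRel ((of k Ω).comp θ) ⊤ c) d j₀)
    (hsupp : ∀ j, proj θ.range (d j) = d j)
    {r : ℕ} (hr : ∀ j, ∀ e ∈ (CayleyTree.path (c j)).support, e.1.norm ≤ r)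
    {g : FreeGroup X} (hg : θ g ∈ leadSet (ballSpan θ d r)) :
    g.norm < {p : J × FreeGroup X | p.2.norm ≤ r}.ncard := by
  cases nonempty_fintype X
  refine lt_of_lt_of_le ?_ (finrank_ballSpan_le θ d r)
  refine norm_lt_finrank hθ _ (leadSet_ballSpan_subset hsupp r)
    ⟨d j₀, mem_ballSpan θ d r j₀, hd.apply_eq_one ▸ isLeast_support_one⟩ ?_ hg
  by_contra! hlt
  obtain ⟨d', hd', hd'0, hzero, hj₀⟩ := exists_mem_derRel_of_lt_finrank ((of k Ω).comp θ) hd.mem hr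
    (fun _ : Fin 1 => j₀) hlt
  exact hd'0 (by rw [hd.eq_smul d' hd' hzero, hj₀ 0, zero_smul])

end Relations

end MalcevNeumann

/-! ### Decomposition along cosets -/

section Cosets

variable {Ω : Type*} [Group Ω]

/-- `τ` picks a representative in each right coset of `C`, with `1` representing `C` itself. -/
structure IsCosetSection (C : Subgroup Ω) (τ : Ω → Ω) : Prop where
  map_one : τ 1 = 1
  map_mul : ∀ c ∈ C, ∀ g, τ (c * g) = τ g
  mul_inv_mem : ∀ g, g * (τ g)⁻¹ ∈ C

theorem exists_isCosetSection (C : Subgroup Ω) : ∃ τ, IsCosetSection C τ := by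
  classical
  let r : Ω → Ω := fun g => (Quotient.mk (QuotientGroup.rightRel C) g).out
  have hr : ∀ g, g * (r g)⁻¹ ∈ C := fun g =>
    QuotientGroup.rightRel_apply.mp (Quotient.mk_out (s := QuotientGroup.rightRel C) g)
  have hr_mul : ∀ c ∈ C, ∀ g, r (c * g) = r g := fun c hc g => congrArg Quotient.out <|
    Quotient.sound <| QuotientGroup.rightRel_apply.mpr <| by simpa using C.inv_mem hc
  refine ⟨fun g => if g ∈ C then 1 else r g, by simp, fun c hc g => ?_, fun g => ?_⟩
  · simp only [Subgroup.mul_mem_cancel_left C hc, hr_mul c hc]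
  · by_cases hg : g ∈ C
    · simp [hg]
    · simpa only [hg, if_false] using hr g

variable {C : Subgroup Ω} {τ : Ω → Ω}

namespace IsCosetSection

theorem apply_apply (hτ : IsCosetSection C τ) (g : Ω) : τ (τ g) = τ g := by
  conv_rhs => rw [← inv_mul_cancel_right g (τ g), hτ.map_mul _ (hτ.mul_inv_mem g)]

theorem apply_eq_of_mul_inv_mem (hτ : IsCosetSection C τ) {g h : Ω} (hgh : g * h⁻¹ ∈ C) :
    τ g = τ h := by
  rw [← hτ.map_mul _ hgh h, inv_mul_cancel_right]

theorem apply_mem (hτ : IsCosetSection C τ) {A : Subgroup Ω} (hCA : C ≤ A) {g : Ω} (hg : g ∈ A) :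
    τ g ∈ A := by
  rw [← inv_mem_iff]
  exact (A.mul_mem_cancel_left hg).mp (hCA (hτ.mul_inv_mem g))

end IsCosetSection

variable {R L J : Type*} [Ring R] {ρ : Ω →* R}

theorem IsDerOn.exists_eq_integral (hτ : IsCosetSection C τ) {δ : Ω → R} (hδ : IsDerOn ρ C δ)
    (α : FreeGroup L →* Ω) : ∃ f : Ω × L → R, ∀ g, α g ∈ C → δ (α g) = CayleyTree.integral
      (fun e => ρ (α e.1 * (τ (α e.1))⁻¹) * f (τ (α e.1), e.2)) (CayleyTree.path g) := by
  let Λ : Ω → R := fun g => δ (g * (τ g)⁻¹)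
  have hΛ_mul : ∀ c ∈ C, ∀ g, Λ (c * g) = δ c + ρ c * Λ g := fun c hc g => by
    simp only [Λ, hτ.map_mul c hc, mul_assoc]
    exact hδ c hc _ (hτ.mul_inv_mem g)
  have hΛ_one : Λ 1 = 0 := by simp [Λ, hτ.map_one, hδ.map_one]
  refine ⟨fun i => Λ (i.1 * α (FreeGroup.of i.2)) - Λ i.1, fun g hg => ?_⟩
  have hpath := CayleyTree.integral_path_sub (fun h => Λ (α h)) g
  have hΛg : Λ (α g) = δ (α g) := by simpa [hΛ_one] using hΛ_mul _ hg 1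
  rw [_root_.map_one, hΛ_one, sub_zero, hΛg] at hpath
  rw [← hpath]
  congr 2
  funext e
  have hκ := hτ.mul_inv_mem (α e.1)
  have hsplit : ∀ g, Λ (α e.1 * g) = δ (α e.1 * (τ (α e.1))⁻¹) +
      ρ (α e.1 * (τ (α e.1))⁻¹) * Λ (τ (α e.1) * g) := fun g => by
    rw [← hΛ_mul _ hκ, ← mul_assoc, inv_mul_cancel_right]
  have hsplit_one := hsplit 1
  simp only [mul_one] at hsplit_one
  simp only [_root_.map_mul, hsplit, hsplit_one, mul_sub, add_sub_add_left_eq_sub]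

/-- The additive group generated by the right translates of the entries of `d` by elements of
`C`. -/
def translates (ρ : Ω →* R) (C : Subgroup Ω) (d : J → R) : AddSubgroup R :=
  AddSubgroup.closure {y | ∃ j, ∃ h ∈ C, d j * ρ h = y}

variable [Fintype J]

/-- The pushforward of the `R`-valued chain `∑ j, d j * path (b j)` along the map that sends the
edge `(g, l)` to its coset representative `(τ (α g), l)`; the remaining factor of `α g` in `C` is
absorbed in the coefficient. -/
noncomputable def cosetChain (τ : Ω → Ω) (ρ : Ω →* R) (α : FreeGroup L →* Ω)
    (b : J → FreeGroup L) (d : J → R) : Ω × L →₀ R :=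
  ∑ j, CayleyTree.integral (fun e => Finsupp.single (τ (α e.1), e.2)
    (d j * ρ (α e.1 * (τ (α e.1))⁻¹))) (CayleyTree.path (b j))

variable (τ) (ρ) (α : FreeGroup L →* Ω) (b : J → FreeGroup L) (d : J → R)

theorem liftAddHom_cosetChain {M : Type*} [AddCommGroup M] (F : Ω × L → R →+ M) :
    Finsupp.liftAddHom F (cosetChain τ ρ α b d) = ∑ j, CayleyTree.integral
      (fun e => F (τ (α e.1), e.2) (d j * ρ (α e.1 * (τ (α e.1))⁻¹))) (CayleyTree.path (b j)) := by
  simp only [cosetChain, map_sum, ← CayleyTree.integral_comp, Finsupp.liftAddHom_apply_single]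

theorem cosetChain_apply [DecidableEq Ω] [DecidableEq L] (i : Ω × L) :
    cosetChain τ ρ α b d i = ∑ j, CayleyTree.integral (fun e => if (τ (α e.1), e.2) = i then
      d j * ρ (α e.1 * (τ (α e.1))⁻¹) else 0) (CayleyTree.path (b j)) := by
  rw [cosetChain, Finsupp.finsetSum_apply]
  refine Finset.sum_congr rfl fun j _ => ?_
  rw [← Finsupp.applyAddHom_apply, ← CayleyTree.integral_comp]
  simp only [Finsupp.applyAddHom_apply, Finsupp.single_apply]

theorem sum_cosetChain_mul (f : Ω × L → R) :
    (cosetChain τ ρ α b d).sum (fun i r => r * f i) = ∑ j, d j * CayleyTree.integral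
      (fun e => ρ (α e.1 * (τ (α e.1))⁻¹) * f (τ (α e.1), e.2)) (CayleyTree.path (b j)) := by
  have hsum := liftAddHom_cosetChain τ ρ α b d fun i => AddMonoidHom.mulRight (f i)
  simp only [AddMonoidHom.coe_mulRight, mul_assoc] at hsum
  refine hsum.trans (Finset.sum_congr rfl fun j _ => ?_)
  exact CayleyTree.integral_comp (AddMonoidHom.mulLeft (d j)) _ _

theorem sum_cosetChain_eq_sum_fox [DecidableEq L] (l : L) :
    ∑ i ∈ (cosetChain τ ρ α b d).support with i.2 = l, cosetChain τ ρ α b d i * ρ i.1 =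
      ∑ j, d j * fox (ρ.comp α) l (b j) := by
  have hsum := sum_cosetChain_mul τ ρ α b d fun i => if i.2 = l then ρ i.1 else 0
  simp only [mul_ite, mul_zero, ← map_mul, inv_mul_cancel_right] at hsum
  rw [Finset.sum_filter]
  simpa only [CayleyTree.fox_eq, MonoidHom.comp_apply, Finsupp.sum] using hsum

variable {τ} in
theorem cosetChain_apply_mem_translates (hτ : IsCosetSection C τ) (i : Ω × L) :
    cosetChain τ ρ α b d i ∈ translates ρ C d := by
  classical
  rw [cosetChain_apply]
  refine sum_mem fun j _ => ?_
  rw [CayleyTree.integral_eq_sum _ _ subset_rfl]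
  refine sum_mem fun e _ => zsmul_mem ?_ _
  split_ifs
  · exact AddSubgroup.subset_closure ⟨j, _, hτ.mul_inv_mem _, rfl⟩
  · exact zero_mem _

theorem exists_eq_of_cosetChain_ne_zero {i : Ω × L} (hi : cosetChain τ ρ α b d i ≠ 0) :
    ∃ g, τ (α g) = i.1 := by
  classical
  contrapose! hi
  rw [cosetChain_apply]
  refine Finset.sum_eq_zero fun j _ => ?_
  have hne : ∀ e : FreeGroup L × L, (τ (α e.1), e.2) ≠ i := fun e he =>
    hi e.1 (congrArg Prod.fst he)
  simp [hne, CayleyTree.integral_eq_sum _ _ subset_rfl]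

end Cosets

namespace MalcevNeumann

variable {k Ω : Type*} [Field k] [LinearOrder Ω] [Group Ω] [MulLeftMono Ω] [MulRightMono Ω]
  {L J : Type*} {α : FreeGroup L →* Ω} {H : Subgroup Ω} {τ : Ω → Ω}
  {d : J → MalcevNeumann k Ω}

theorem support_subset_of_mem_translates {C : Subgroup Ω} (hC : C ≤ H)
    (hsupp : ∀ j, proj H (d j) = d j) {y : MalcevNeumann k Ω} (hy : y ∈ translates (of k Ω) C d) :
    y.support ⊆ H := by
  rw [← proj_eq_self_iff]
  induction hy using AddSubgroup.closure_induction with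
  | mem z hz =>
    obtain ⟨j, h, hh, rfl⟩ := hz
    rw [proj_mul_of (hC hh), hsupp]
  | zero => exact map_zero _
  | add y z _ _ hy hz => rw [map_add, hy, hz]
  | neg y _ hy => rw [map_neg, hy]

variable [Fintype J]

-- Over a fixed generator, the relation says that translates of the coefficients by the coset
-- representatives sum to zero; their leading monomials lie in distinct cosets of `H`.
theorem cosetChain_eq_zero [Finite L] (hτ : IsCosetSection (α.range ⊓ H) τ)
    (hlead : ∀ y ∈ translates (of k Ω) (α.range ⊓ H) d, ∀ a, IsLeast y.support a → a ∈ H)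
    {b : J → FreeGroup L} (hd : d ∈ DerRel ((of k Ω).comp α) ⊤ b) :
    cosetChain τ (of k Ω) α b d = 0 := by
  classical
  set Y := cosetChain τ (of k Ω) α b d
  ext1 i
  by_contra hi
  have hcoset : ∀ (i : Ω × L) a, IsLeast (Y i * of k Ω i.1).support a → a * i.1⁻¹ ∈ H := by
    intro i a ha
    have hleast := isLeast_support_mul_of ha i.1⁻¹
    rw [mul_assoc, ← map_mul, mul_inv_cancel, map_one, mul_one] at hleast
    exact hlead _ (cosetChain_apply_mem_translates _ α b d hτ i) _ hleast
  have hzero := eq_zero_of_sum_eq_zero _ (fun i => Y i * of k Ω i.1)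
    ((sum_cosetChain_eq_sum_fox τ (of k Ω) α b d i.2).trans (mem_derRel_top_iff.mp hd i.2)) ?_ i
    (Finset.mem_filter.mpr ⟨Finsupp.mem_support_iff.mpr hi, rfl⟩)
  · refine hi ?_
    rw [← mul_one (Y i), ← map_one (of k Ω), ← mul_inv_cancel i.1, map_mul, ← mul_assoc, hzero,
      zero_mul]
    rfl
  · rintro ⟨s, l⟩ hs ⟨t, l'⟩ ht a has hat
    simp only [Finset.mem_filter, Finsupp.mem_support_iff] at hs ht
    obtain ⟨g, rfl⟩ := exists_eq_of_cosetChain_ne_zero _ _ _ _ _ hs.1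
    obtain ⟨h, rfl⟩ := exists_eq_of_cosetChain_ne_zero _ _ _ _ _ ht.1
    have hquot : τ (α g) * (τ (α h))⁻¹ ∈ α.range ⊓ H :=
      ⟨α.range.mul_mem (hτ.apply_mem inf_le_left ⟨g, rfl⟩)
        (α.range.inv_mem (hτ.apply_mem inf_le_left ⟨h, rfl⟩)), by
        simpa using H.mul_mem (H.inv_mem (hcoset _ _ has)) (hcoset _ _ hat)⟩
    have heq := hτ.apply_eq_of_mul_inv_mem hquot
    rw [hτ.apply_apply, hτ.apply_apply] at heq
    exact Prod.ext heq (hs.2.trans ht.2.symm)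

theorem eq_zero_of_mem_derRel [Finite L] (hα : Injective α) {c : J → Ω}
    (hc : IsPartialBasis (α.range ⊓ H) c) (hd : d ∈ DerRel (of k Ω) α.range c)
    (hlead : ∀ y ∈ translates (of k Ω) (α.range ⊓ H) d, ∀ a, IsLeast y.support a → a ∈ H) :
    d = 0 := by
  classical
  choose b hb using fun j => (hc.mem j).1
  obtain rfl : α ∘ b = c := funext hb
  rw [derRel_range _ hα] at hd
  obtain ⟨τ, hτ⟩ := exists_isCosetSection (α.range ⊓ H)
  funext j₀
  obtain ⟨δ, hδ, hδc⟩ := hc.exists_isDerOn (of k Ω) j₀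
  simp only [comp_apply] at hδc
  obtain ⟨f, hf⟩ := hδ.exists_eq_integral hτ α
  calc d j₀ = ∑ j, d j * δ (α (b j)) := by simp [hδc]
    _ = (cosetChain τ (of k Ω) α b d).sum fun i r => r * f i := by
      rw [sum_cosetChain_mul]
      exact Finset.sum_congr rfl fun j _ => congrArg _ (hf _ (hc.mem j))
    _ = 0 := by rw [cosetChain_eq_zero hτ hlead hd, Finsupp.sum_zero_index]

end MalcevNeumann

/-! ### A criterion for inertness -/

theorem hasFreeRank_range {G T : Type*} [Group G] [Fintype T] {φ : FreeGroup T →* G}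
    (hφ : Injective φ) : HasFreeRank φ.range (Fintype.card T) := by
  let e : FreeGroup (Fin (Fintype.card T)) ≃* FreeGroup T :=
    FreeGroup.freeGroupCongr (Fintype.equivFin T).symm
  refine ⟨φ.comp e.toMonoidHom, hφ.comp e.injective, ?_⟩
  have he : e.toMonoidHom.range = ⊤ := MonoidHom.range_eq_top.mpr e.surjective
  rw [MonoidHom.range_comp, he, ← MonoidHom.range_eq_map]

theorem hasFreeRank_or_isPartialBasis {G : Type*} [Group G] [IsFreeGroup G] (C : Subgroup G)
    (m : ℕ) : (∃ j ≤ m, HasFreeRank C j) ∨ ∃ c : Fin (m + 1) → G, IsPartialBasis C c := by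
  let T := IsFreeGroup.Generators C
  let e : FreeGroup T ≃* C := (IsFreeGroup.toFreeGroup C).symm
  let φ : FreeGroup T →* G := C.subtype.comp e.toMonoidHom
  have hφ : Injective φ := C.subtype_injective.comp e.injective
  have hC : φ.range = C := by
    rw [MonoidHom.range_comp, MonoidHom.range_eq_top.mpr e.surjective, ← MonoidHom.range_eq_map,
      Subgroup.range_subtype]
  by_cases hT : Nonempty (Fin (m + 1) ↪ T)
  · obtain ⟨i⟩ := hT
    exact Or.inr ⟨_, hC ▸ IsPartialBasis.of_injective hφ i.injective⟩
  · left
    have hfin : Finite T := by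
      by_contra hinf
      have : Infinite T := not_finite_iff_infinite.mp hinf
      exact hT ⟨Fin.valEmbedding.trans (Infinite.natEmbedding T)⟩
    have := Fintype.ofFinite T
    refine ⟨Fintype.card T, ?_, hC ▸ hasFreeRank_range hφ⟩
    by_contra hlt
    exact hT (Embedding.nonempty_of_card_le (by simpa using hlt))

/-- A subgroup is inert if intersecting with it does not increase the rank of free subgroups of
finite rank. -/
def Inert {G : Type*} [Group G] (A : Subgroup G) : Prop :=
  ∀ H m, HasFreeRank H m → ∃ j ≤ m, HasFreeRank (H ⊓ A) j

theorem derRel_top_ne_bot {E X J : Type*} [DivisionRing E] [Fintype X] [Fintype J]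
    (ρ : FreeGroup X →* E) (c : J → FreeGroup X) (h : Fintype.card X < Fintype.card J) :
    DerRel ρ ⊤ c ≠ ⊥ := by
  let Φ : (J → E) →ₗ[E] (X → E) := LinearMap.pi fun x =>
    ∑ j, (LinearMap.toSpanSingleton E E (fox ρ x (c j))).comp (LinearMap.proj j)
  have hΦ : LinearMap.ker Φ ≠ ⊥ := LinearMap.ker_ne_bot_of_finrank_lt (by simpa using h)
  obtain ⟨d, hd, hd0⟩ := Submodule.exists_mem_ne_zero_of_ne_bot hΦ
  refine Submodule.ne_bot_iff _ |>.mpr ⟨d, mem_derRel_top_iff.mpr fun x => ?_, hd0⟩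
  simpa [Φ] using congrFun (LinearMap.mem_ker.mp hd) x

theorem mem_derRel_range_of_mem_derRel {Ω R L J : Type*} [Group Ω] [Ring R] [Fintype L]
    [Fintype J] {ρ : Ω →* R} {α : FreeGroup L →* Ω} (hα : Injective α) {H : Subgroup Ω}
    (hrel : DerRel ρ H (fun l => α (FreeGroup.of l)) = ⊥) (hH : α.range ≤ H)
    {c : J → Ω} (hc : ∀ j, c j ∈ α.range) {d : J → R} (hd : d ∈ DerRel ρ H c) :
    d ∈ DerRel ρ α.range c := by
  choose a ha using hc
  obtain rfl : α ∘ a = c := funext ha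
  rw [derRel_range _ hα, mem_derRel_top_iff]
  have hfox : (fun l => ∑ j, d j * fox (ρ.comp α) l (a j)) ∈
      DerRel ρ H (fun l => α (FreeGroup.of l)) := by
    intro D hD
    have hexpand : ∀ j, D ((α ∘ a) j) = _ := fun j => ((hD.mono hH).comp α).eq_sum_fox (a j)
    have hsum := hd D hD
    simp only [hexpand, Finset.mul_sum] at hsum
    rw [Finset.sum_comm] at hsum
    simpa [Finset.sum_mul, mul_assoc] using hsum
  rw [hrel] at hfox
  exact congrFun hfox

namespace MalcevNeumann

variable {k : Type*} [Field k]

theorem derRel_of_eq_bot {X J : Type*} [Finite X] [Fintype J]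
    [LinearOrder (FreeGroup X)] [MulLeftMono (FreeGroup X)] [MulRightMono (FreeGroup X)]
    {E : Type*} [DivisionRing E] [Algebra k E]
    {ρ : FreeGroup X →* E} {c : J → FreeGroup X} (h : DerRel ρ ⊤ c = ⊥) :
    DerRel (of k (FreeGroup X)) ⊤ c = ⊥ := by
  by_contra hne
  obtain ⟨d, hd, hd0⟩ := Submodule.exists_mem_ne_zero_of_ne_bot hne
  obtain ⟨d', hd', hd'0, -⟩ := exists_mem_derRel ρ (θ := MonoidHom.id (FreeGroup X)) injective_id
    hd (fun j => proj_eq_self_iff.mpr fun a _ => ⟨a, rfl⟩) hd0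
  exact hd'0 ((Submodule.eq_bot_iff _).mp h d' hd')

-- Translate a leading monomial of some coefficient to `1`, then project.
theorem exists_proj_eq_self {Ω : Type*} [LinearOrder Ω] [Group Ω] [MulLeftMono Ω] [MulRightMono Ω]
    {X J : Type*} [Finite X] [Fintype J] {θ : FreeGroup X →* Ω}
    {c : J → FreeGroup X} (h : DerRel ((of k Ω).comp θ) ⊤ c ≠ ⊥) :
    ∃ d ∈ DerRel ((of k Ω).comp θ) ⊤ c, d ≠ 0 ∧ ∀ j, proj θ.range (d j) = d j := by
  obtain ⟨d, hd, hd0⟩ := Submodule.exists_mem_ne_zero_of_ne_bot h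
  obtain ⟨j, hj⟩ := Function.ne_iff.mp hd0
  obtain ⟨g, hg⟩ := exists_isLeast_support hj
  refine ⟨fun j => proj θ.range ((of k Ω g⁻¹ • d) j),
    proj_mem_derRel_top le_rfl (Submodule.smul_mem _ _ hd), fun h0 => hg.1 ?_, fun j => ?_⟩
  · have hcoeff := congrArg (fun f => f.coeff 1) (congrFun h0 j)
    simpa [coeff_proj_of_mem (one_mem θ.range), -map_inv, -map_inv₀] using hcoeff
  · rw [proj_eq_self_iff]
    intro a ha
    by_contra h
    exact ha (coeff_proj_of_notMem h _)

end MalcevNeumann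

-- A partial basis of `H ⊓ A` longer than the rank of `H` satisfies a nontrivial relation over `H`.
-- It may be taken supported on `H`, and is then also a relation over `A`, hence trivial.
theorem inert_of_derRel_eq_bot (k : Type*) [Field k] {X L : Type*} [Finite X] [Fintype L]
    [LinearOrder (FreeGroup X)] [MulLeftMono (FreeGroup X)] [MulRightMono (FreeGroup X)]
    {E : Type*} [DivisionRing E] [Algebra k E] {ρ : FreeGroup X →* E}
    {α : FreeGroup L →* FreeGroup X} (hα : Injective α)
    (h : DerRel ρ ⊤ (fun l => α (FreeGroup.of l)) = ⊥) : Inert α.range := by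
  rintro H m ⟨η, hη, rfl⟩
  rw [inf_comm]
  refine (hasFreeRank_or_isPartialBasis (α.range ⊓ η.range) m).resolve_right ?_
  rintro ⟨c, hc⟩
  choose b hb using fun j => (hc.mem j).2
  obtain rfl : η ∘ b = c := funext hb
  obtain ⟨d, hd, hd0, hproj⟩ := MalcevNeumann.exists_proj_eq_self (k := k) (θ := η) (c := b)
    (derRel_top_ne_bot _ _ (by simp))
  rw [← derRel_range _ hη] at hd
  exact hd0 <| MalcevNeumann.eq_zero_of_mem_derRel hα hc
    (mem_derRel_range_of_mem_derRel hα (MalcevNeumann.derRel_of_eq_bot h) le_top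
      (fun j => (hc.mem j).1) (derRel_mono _ le_top _ hd))
    fun _ hy _ ha => MalcevNeumann.support_subset_of_mem_translates inf_le_right hproj hy ha.1

/-! ### Bi-orderability of free groups -/

namespace Magnus

theorem apply_zpow_eq_add_zsmul {M A : Type*} [AddCommGroup A] {σ : Equiv.Perm M} {F c : M → A}
    (hc : ∀ f, c (σ f) = c f) (hF : ∀ f, F (σ f) = F f + c f) (e : ℤ) (f : M) :
    F ((σ ^ e) f) = F f + e • c f := by
  induction e using Int.induction_on generalizing f with
  | zero => simp
  | succ n ih =>
    rw [zpow_add_one, Equiv.Perm.mul_apply, ih, hF, hc, add_one_zsmul]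
    abel
  | pred n ih =>
    have hc' := hc (σ⁻¹ f)
    have hF' := hF (σ⁻¹ f)
    rw [← Equiv.Perm.mul_apply, mul_inv_cancel, Equiv.Perm.one_apply] at hc' hF'
    rw [zpow_sub_one, Equiv.Perm.mul_apply, ih, hF', hc', sub_one_zsmul]
    abel

variable {X : Type*}

/-- The product of the syllables `x ^ e`, for `(x, e)` in a list. -/
def syllables (l : List (X × ℤ)) : FreeGroup X := (l.map fun p => FreeGroup.of p.1 ^ p.2).prod

theorem syllables_cons (p : X × ℤ) (l : List (X × ℤ)) :
    syllables (p :: l) = FreeGroup.of p.1 ^ p.2 * syllables l := by simp [syllables]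

theorem exists_syllables (g : FreeGroup X) :
    ∃ l : List (X × ℤ), (l.IsChain fun p q => p.1 ≠ q.1) ∧ (∀ p ∈ l, p.2 ≠ 0) ∧
      syllables l = g := by
  classical
  let φ : Monoid.CoprodI (fun _ : X => Multiplicative ℤ) →* FreeGroup X :=
    Monoid.CoprodI.lift fun x => zpowersHom _ (FreeGroup.of x)
  let ψ : FreeGroup X →* Monoid.CoprodI (fun _ : X => Multiplicative ℤ) :=
    FreeGroup.lift fun x => Monoid.CoprodI.of (i := x) (Multiplicative.ofAdd 1)
  have hφψ : φ.comp ψ = MonoidHom.id _ := FreeGroup.ext_hom _ _ fun x => by simp [φ, ψ]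
  let w := Monoid.CoprodI.Word.equiv (ψ g)
  refine ⟨w.toList.map fun p => (p.1, p.2.toAdd), (List.isChain_map _).mpr w.chain_ne, ?_, ?_⟩
  · intro q hq
    obtain ⟨p, hp, rfl⟩ := List.mem_map.mp hq
    exact w.ne_one p hp
  · have hprod : φ w.prod = g := by
      rw [show w.prod = ψ g from Monoid.CoprodI.Word.equiv.symm_apply_apply _]
      exact DFunLike.congr_fun hφψ g
    rw [← hprod, Monoid.CoprodI.Word.prod, map_list_prod, syllables, List.map_map, List.map_map]
    congr! 2

section Expansion

variable [DecidableEq X]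

/-- Left multiplication by `1 + x` on noncommutative power series, which are encoded by their
coefficients on words. -/
def left (x : X) (f : List X → ℤ) : List X → ℤ
  | [] => f []
  | y :: u => f (y :: u) + if y = x then f u else 0

/-- Left multiplication by the inverse of `1 + x` on noncommutative power series. -/
def leftInv (x : X) (f : List X → ℤ) : List X → ℤ
  | [] => f []
  | y :: u => f (y :: u) - if y = x then leftInv x f u else 0

theorem left_leftInv (x : X) (f : List X → ℤ) (u : List X) : left x (leftInv x f) u = f u := by
  cases u with
  | nil => rfl
  | cons y u => simp [left, leftInv]

theorem leftInv_left (x : X) (f : List X → ℤ) (u : List X) : leftInv x (left x f) u = f u := by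
  induction u with
  | nil => rfl
  | cons y u ih => simp [left, leftInv, ih]

/-- Right multiplication by `1 + x` on noncommutative power series. -/
def right (x : X) (f : List X → ℤ) (u : List X) : ℤ :=
  f u + if u.getLast? = some x then f u.dropLast else 0

theorem right_left (x y : X) (f : List X → ℤ) : right y (left x f) = left x (right y f) := by
  funext u
  cases u with
  | nil => simp [right, left]
  | cons a u =>
    rcases List.eq_nil_or_concat' u with rfl | ⟨v, b, rfl⟩
    · simp only [right, left, List.getLast?_singleton, List.dropLast_singleton, List.getLast?_nil,
        Option.some.injEq, reduceCtorEq, if_false, add_zero]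
      ring
    · simp only [right, left, ← List.cons_append, List.getLast?_concat, List.dropLast_concat]
      simp only [List.cons_append]
      split_ifs <;> ring

/-- The free group acting on noncommutative power series, `x` by left multiplication by `1 + x`. -/
def act : FreeGroup X →* Equiv.Perm (List X → ℤ) :=
  FreeGroup.lift fun x =>
    ⟨left x, leftInv x, fun f => funext (leftInv_left x f), fun f => funext (left_leftInv x f)⟩

/-- The Magnus expansion of an element of the free group. -/
def expansion (g : FreeGroup X) : List X → ℤ := act g fun u => if u = [] then 1 else 0

theorem expansion_one_of_ne_nil {u : List X} (hu : u ≠ []) : expansion 1 u = 0 := by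
  simp [expansion, hu]

theorem act_of (x : X) (f : List X → ℤ) : act (FreeGroup.of x) f = left x f := by
  simp [act]

theorem expansion_mul (g h : FreeGroup X) : expansion (g * h) = act g (expansion h) := by
  simp [expansion]

theorem act_right (g : FreeGroup X) (y : X) (f : List X → ℤ) :
    act g (right y f) = right y (act g f) := by
  induction g using FreeGroup.induction_on generalizing f with
  | C1 => simp
  | of x => simp only [act_of, right_left]
  | inv_of x ih =>
    rw [map_inv, Equiv.Perm.inv_eq_iff_eq, ih]
    simp
  | mul g h hg hh => simp [hg, hh]

theorem expansion_of_mul (x : X) (g : FreeGroup X) :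
    expansion (FreeGroup.of x * g) = left x (expansion g) := by
  rw [expansion_mul, act_of]

theorem expansion_mul_of (g : FreeGroup X) (x : X) :
    expansion (g * FreeGroup.of x) = right x (expansion g) := by
  rw [expansion_mul, expansion, act_of, expansion, ← act_right]
  congr 1
  funext u
  cases u with
  | nil => simp [left, right]
  | cons y u =>
    rcases List.eq_nil_or_concat' u with rfl | ⟨v, b, rfl⟩
    · simp [left, right]
    · simp only [right, left, ← List.cons_append, List.getLast?_concat, List.dropLast_concat]
      simp

theorem act_zpow_of_head?_ne {x : X} {u : List X} (hu : u.head? ≠ some x) (e : ℤ)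
    (f : List X → ℤ) : act (FreeGroup.of x ^ e) f u = f u := by
  have hzpow := apply_zpow_eq_add_zsmul (σ := act (FreeGroup.of x)) (F := fun f => f u) (c := 0)
    (fun _ => rfl) (fun f => ?_) e f
  · simpa using hzpow
  · cases u with
    | nil => simp [act_of, left]
    | cons y u => simp [act_of, left, show y ≠ x by simpa using hu]

theorem act_zpow_cons {x : X} {u : List X} (hu : u.head? ≠ some x) (e : ℤ) (f : List X → ℤ) :
    act (FreeGroup.of x ^ e) f (x :: u) = f (x :: u) + e * f u := by
  have hzpow := apply_zpow_eq_add_zsmul (σ := act (FreeGroup.of x)) (F := fun f => f (x :: u))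
    (c := fun f => f u) (fun f => ?_) (fun f => ?_) e f
  · simpa using hzpow
  · simpa using act_zpow_of_head?_ne hu 1 f
  · simp [act_of, left]

theorem expansion_syllables_eq_zero {l : List (X × ℤ)} {w : List X} (hw : w.IsChain (· ≠ ·))
    (hlw : l.length < w.length) : expansion (syllables l) w = 0 := by
  induction l generalizing w with
  | nil => exact expansion_one_of_ne_nil (List.ne_nil_of_length_pos hlw)
  | cons p l ih =>
    rw [syllables_cons, expansion_mul]
    cases w with
    | nil => simp at hlw
    | cons y w =>
      simp only [List.length_cons, add_lt_add_iff_right] at hlw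
      have hzero := ih hw (hlw.trans (by simp))
      by_cases hy : y = p.1
      · subst hy
        rw [act_zpow_cons fun h => (List.isChain_cons.mp hw).1 _ h rfl, hzero,
          ih (w := w) hw.tail hlw, mul_zero, add_zero]
      · rw [act_zpow_of_head?_ne (by simpa using hy), hzero]

theorem expansion_syllables {l : List (X × ℤ)} (hc : l.IsChain fun p q => p.1 ≠ q.1) :
    expansion (syllables l) (l.map Prod.fst) = (l.map Prod.snd).prod := by
  induction l with
  | nil => simp [syllables, expansion]
  | cons p l ih =>
    have hhead : (l.map Prod.fst).head? ≠ some p.1 := by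
      rw [List.head?_map, ne_eq, Option.map_eq_some_iff]
      rintro ⟨q, hq, hqp⟩
      exact (List.isChain_cons.mp hc).1 q hq hqp.symm
    have hzero : expansion (syllables l) (p.1 :: l.map Prod.fst) = 0 :=
      expansion_syllables_eq_zero ((List.isChain_map Prod.fst (l := p :: l)).mpr hc) (by simp)
    rw [syllables_cons, expansion_mul, List.map_cons, act_zpow_cons hhead, ih hc.tail, hzero]
    simp

theorem expansion_injective : Injective (expansion (X := X)) := by
  intro g h hgh
  obtain ⟨l, hc, hl, hlg⟩ := exists_syllables (h⁻¹ * g)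
  have hexp : expansion (h⁻¹ * g) = expansion 1 := by
    rw [expansion_mul, hgh, ← expansion_mul, inv_mul_cancel]
  have hcoeff := expansion_syllables hc
  rw [hlg, hexp] at hcoeff
  have hprod : (l.map Prod.snd).prod ≠ 0 :=
    List.prod_ne_zero (by simpa using fun x hx => hl (x, 0) hx rfl)
  have hnil : l = [] := by
    by_contra hne
    exact hprod (hcoeff.symm.trans (expansion_one_of_ne_nil (by simpa using hne)))
  rw [hnil] at hlg
  exact (inv_mul_eq_one.mp hlg.symm).symm

/-- Words, ordered by length and then by their code. -/
def Word (X : Type*) : Type _ := List X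

/-- Noncommutative power series, compared at the first word where their coefficients differ. -/
abbrev Series (X : Type*) : Type _ := Lex (Word X → ℤ)

/-- The Magnus expansion as an element of a linear order. -/
def series (g : FreeGroup X) : Series X := toLex (expansion g)

theorem series_injective : Injective (series (X := X)) :=
  fun _ _ h => expansion_injective (toLex.injective h)

theorem series_of_mul (x : X) (g : FreeGroup X) :
    series (FreeGroup.of x * g) = toLex (left x (series g)) :=
  congrArg toLex (expansion_of_mul x g)

theorem series_mul_of (g : FreeGroup X) (x : X) :
    series (g * FreeGroup.of x) = toLex (right x (series g)) :=
  congrArg toLex (expansion_mul_of g x)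

end Expansion

section Order

variable [Encodable X]

/-- The length and the code of a word. -/
def rank (u : List X) : ℕ ×ₗ ℕ := toLex (u.length, Encodable.encode u)

theorem rank_injective : Injective (rank (X := X)) := fun _ _ h =>
  Encodable.encode_injective (congrArg (fun p => (ofLex p).2) h)

theorem rank_lt_of_length_lt {u v : List X} (h : u.length < v.length) : rank u < rank v :=
  Prod.Lex.toLex_lt_toLex.mpr (Or.inl h)

theorem rank_dropLast_lt {x : X} {v : List X} (hv : v.getLast? = some x) :
    rank v.dropLast < rank v := by
  refine rank_lt_of_length_lt ?_
  rw [List.length_dropLast]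
  exact Nat.sub_lt (List.length_pos_iff.mpr fun h => by simp [h] at hv) one_pos

noncomputable instance : LinearOrder (Word X) := LinearOrder.lift' (rank (X := X)) rank_injective

instance : WellFoundedLT (Word X) := ⟨InvImage.wf (rank (X := X)) wellFounded_lt⟩

theorem toLex_lt_toLex_iff {f f' : List X → ℤ} :
    (toLex f : Series X) < (toLex f' : Series X) ↔
      ∃ u, (∀ v, rank v < rank u → f v = f' v) ∧ f u < f' u := Iff.rfl

variable [DecidableEq X]

theorem strictMono_left (x : X) : StrictMono fun f : Series X => (toLex (left x f) : Series X) := by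
  rintro f f' h
  obtain ⟨u, heq, hlt⟩ := toLex_lt_toLex_iff.mp h
  refine toLex_lt_toLex_iff.mpr ⟨u, fun v hv => ?_, ?_⟩
  · cases v with
    | nil => exact heq _ hv
    | cons y v =>
      simp only [left]
      rw [heq _ hv, heq v ((rank_lt_of_length_lt (by simp)).trans hv)]
  · cases u with
    | nil => exact hlt
    | cons y u =>
      simp only [left]
      rw [heq u (rank_lt_of_length_lt (by simp))]
      exact add_lt_add_left hlt _

theorem strictMono_right (x : X) :
    StrictMono fun f : Series X => (toLex (right x f) : Series X) := by
  rintro f f' h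
  obtain ⟨u, heq, hlt⟩ := toLex_lt_toLex_iff.mp h
  have hdrop : ∀ v, (v = u ∨ rank v < rank u) → (if v.getLast? = some x then f v.dropLast else 0) =
      if v.getLast? = some x then f' v.dropLast else 0 := by
    intro v hv
    split_ifs with hx
    · exact heq _ ((rank_dropLast_lt hx).trans_le (hv.elim (fun h => h ▸ le_rfl) le_of_lt))
    · rfl
  refine toLex_lt_toLex_iff.mpr ⟨u, fun v hv => ?_, ?_⟩
  · exact congrArg₂ (· + ·) (heq v hv) (hdrop v (Or.inr hv))
  · simp only [right]
    rw [hdrop u (Or.inl rfl)]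
    exact add_lt_add_left hlt _

theorem series_mul_left_le (a g h : FreeGroup X) :
    series (a * g) ≤ series (a * h) ↔ series g ≤ series h := by
  induction a using FreeGroup.induction_on generalizing g h with
  | C1 => simp
  | of x =>
    rw [series_of_mul, series_of_mul]
    exact (strictMono_left x).le_iff_le
  | inv_of x ih => rw [← ih]; simp
  | mul a b ha hb => rw [mul_assoc, mul_assoc, ha, hb]

theorem series_mul_right_le (a g h : FreeGroup X) :
    series (g * a) ≤ series (h * a) ↔ series g ≤ series h := by
  induction a using FreeGroup.induction_on generalizing g h with
  | C1 => simp
  | of x =>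
    rw [series_mul_of, series_mul_of]
    exact (strictMono_right x).le_iff_le
  | inv_of x ih => rw [← ih]; simp
  | mul a b ha hb => rw [← mul_assoc, ← mul_assoc, hb, ha]

end Order

theorem exists_biOrder (X : Type*) [Encodable X] : ∃ _ : LinearOrder (FreeGroup X),
    MulLeftMono (FreeGroup X) ∧ MulRightMono (FreeGroup X) := by
  classical
  exact ⟨LinearOrder.lift' series series_injective,
    ⟨fun a g h => (series_mul_left_le a g h).mpr⟩, ⟨fun a g h => (series_mul_right_le a g h).mpr⟩⟩

end Magnus

/-! ### Injectivity of surjections and stable images -/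

section Hopf

theorem exists_comp_eq_of_range_le {G G' F : Type*} [Group G] [Group G'] [Group F] {σ : G →* F}
    (hσ : Injective σ) {f : G' →* F} (hf : f.range ≤ σ.range) : ∃ g : G' →* G, σ.comp g = f := by
  let e := MonoidHom.ofInjective hσ
  let f' := f.codRestrict σ.range fun x => hf ⟨x, rfl⟩
  exact ⟨e.symm.toMonoidHom.comp f',
    MonoidHom.ext fun x => congrArg Subtype.val (e.apply_symm_apply (f' x))⟩

theorem exists_hasFreeRank_range {G : Type*} [Group G] [IsFreeGroup G] {r : ℕ}
    (η : FreeGroup (Fin r) →* G) : ∃ j ≤ r, HasFreeRank η.range j := by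
  refine (hasFreeRank_or_isPartialBasis η.range r).resolve_right ?_
  rintro ⟨c, hc⟩
  choose b hb using hc.mem
  obtain ⟨d, hd, hd0⟩ :=
    Submodule.exists_mem_ne_zero_of_ne_bot (derRel_top_ne_bot ((1 : G →* ℚ).comp η) b (by simp))
  refine hd0 (funext fun j₀ => ?_)
  obtain ⟨δ, hδ, hδc⟩ := hc.exists_isDerOn (1 : G →* ℚ) j₀
  simpa [hb, hδc] using hd (δ ∘ η) (hδ.comp η)

section Surjective

variable {X Y : Type*} [Fintype X]

theorem fox_eq_sum_fox_of_apply {R : Type*} [Ring R] (ρ : FreeGroup Y →* R)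
    (ψ : FreeGroup X →* FreeGroup Y) (y : Y) (g : FreeGroup X) :
    fox ρ y (ψ g) = ∑ x, fox (ρ.comp ψ) x g * fox ρ y (ψ (FreeGroup.of x)) :=
  ((isDerOn_fox ρ y ψ.range).comp ψ).eq_sum_fox g

theorem derRel_eq_bot_of_surjective [Fintype Y] {E : Type*} [DivisionRing E]
    (ρ : FreeGroup Y →* E) {ψ : FreeGroup X →* FreeGroup Y} (hψ : Surjective ψ)
    (hcard : Fintype.card X = Fintype.card Y) :
    DerRel ρ ⊤ (fun x => ψ (FreeGroup.of x)) = ⊥ := by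
  classical
  let v : X → Y → E := fun x y => fox ρ y (ψ (FreeGroup.of x))
  have hspan : ⊤ ≤ Submodule.span E (Set.range v) := by
    rw [← (Pi.basisFun E Y).span_eq, Submodule.span_le]
    rintro _ ⟨y, rfl⟩
    obtain ⟨g, hg⟩ := hψ (FreeGroup.of y)
    have hy : Pi.basisFun E Y y = ∑ x, fox (ρ.comp ψ) x g • v x := by
      funext y'
      have hfox := fox_eq_sum_fox_of_apply ρ ψ y' g
      rw [hg, fox_of] at hfox
      simpa [Pi.single_apply, eq_comm, v] using hfox
    rw [hy]
    exact Submodule.sum_mem _ fun x _ => Submodule.smul_mem _ _ (Submodule.subset_span ⟨x, rfl⟩)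
  have hv : LinearIndependent E v :=
    linearIndependent_of_top_le_span_of_card_eq_finrank hspan (by simpa using hcard)
  rw [Submodule.eq_bot_iff]
  intro d hd
  rw [mem_derRel_top_iff] at hd
  refine funext (Fintype.linearIndependent_iff.mp hv d (funext fun y => ?_))
  simpa [v] using hd y

theorem fox_eq_zero_of_mem_ker {R : Type*} [Ring R] {ρ : FreeGroup Y →* R}
    {ψ : FreeGroup X →* FreeGroup Y} (hψ : DerRel ρ ⊤ (fun x => ψ (FreeGroup.of x)) = ⊥)
    {g : FreeGroup X} (hg : g ∈ ψ.ker) (x : X) : fox (ρ.comp ψ) x g = 0 := by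
  have hmem : (fun x => fox (ρ.comp ψ) x g) ∈ DerRel ρ ⊤ fun x => ψ (FreeGroup.of x) :=
    fun D hD => by
      have hsum := ((hD.mono le_top).comp ψ).eq_sum_fox g
      rw [comp_apply, MonoidHom.mem_ker.mp hg, hD.map_one] at hsum
      exact hsum.symm
  rw [hψ] at hmem
  exact congrFun hmem x

end Surjective

open CayleyTree (path integral)

variable {X Y : Type*}

theorem MalcevNeumann.coeff_fox_of {k : Type*} [Field k] [LinearOrder (FreeGroup Y)]
    [MulLeftMono (FreeGroup Y)] [MulRightMono (FreeGroup Y)] (ψ : FreeGroup X →* FreeGroup Y)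
    (x : X) (g : FreeGroup X) (q : FreeGroup Y) :
    (fox ((of k (FreeGroup Y)).comp ψ) x g).coeff q =
      ((path g).mapDomain (Prod.map ψ id) (q, x) : k) := by
  classical
  rw [CayleyTree.fox_eq]
  induction path g using Finsupp.induction_linear with
  | zero => simp
  | add m m' hm hm' =>
    rw [map_add, HahnSeries.coeff_add, hm, hm', Finsupp.mapDomain_add, Finsupp.add_apply,
      Int.cast_add]
  | single e n =>
    rw [Finsupp.mapDomain_single, Finsupp.single_apply, integral,
      Finsupp.linearCombination_single, HahnSeries.coeff_smul]
    by_cases hx : e.2 = x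
    · rcases eq_or_ne q (ψ e.1) with rfl | hq
      · simp [← hx, of, Prod.map]
      · simp [Prod.ext_iff, hx, of, HahnSeries.coeff_single_of_ne hq, hq.symm]
    · simp [Prod.ext_iff, hx]

theorem IsDerOn.eq_zero_of_mapDomain_path_eq_zero {R : Type*} [Ring R]
    {ψ : FreeGroup X →* FreeGroup Y} {δ : FreeGroup X → R} (hδ : IsDerOn 1 ψ.ker δ)
    {g : FreeGroup X} (hg : g ∈ ψ.ker) (hpath : (path g).mapDomain (Prod.map ψ id) = 0) :
    δ g = 0 := by
  obtain ⟨τ, hτ⟩ := exists_isCosetSection ψ.ker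
  obtain ⟨f, hf⟩ := hδ.exists_eq_integral hτ (MonoidHom.id (FreeGroup X))
  have hτψ : ∀ h, τ h = τ (invFun ψ (ψ h)) := fun h => by
    refine hτ.apply_eq_of_mul_inv_mem ?_
    rw [MonoidHom.mem_ker, _root_.map_mul, _root_.map_inv,
      invFun_eq (f := ψ) ⟨h, rfl⟩, mul_inv_cancel]
  calc δ g = integral (fun e => f (τ e.1, e.2)) (path g) := by simpa using hf g hg
    _ = integral ((fun i => f (τ (invFun ψ i.1), i.2)) ∘ Prod.map ψ id) (path g) := by
      congr 2 with e
      simp [hτψ e.1]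
    _ = 0 := by
      rw [integral, ← Finsupp.linearCombination_mapDomain, hpath, map_zero]

theorem injective_of_surjective {X Y : Type*} [Fintype X] [Fintype Y]
    {ψ : FreeGroup X →* FreeGroup Y} (hψ : Surjective ψ)
    (hcard : Fintype.card X = Fintype.card Y) : Injective ψ := by
  have := Fintype.toEncodable Y
  obtain ⟨_, _, _⟩ := Magnus.exists_biOrder Y
  have hpath : ∀ g ∈ ψ.ker, (path g).mapDomain (Prod.map ψ id) = 0 := by
    rintro g hg
    ext ⟨q, x⟩
    have hcoeff := MalcevNeumann.coeff_fox_of (k := ℚ) ψ x g q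
    rw [fox_eq_zero_of_mem_ker (derRel_eq_bot_of_surjective _ hψ hcard) hg] at hcoeff
    rw [Finsupp.zero_apply]
    exact_mod_cast hcoeff.symm.trans HahnSeries.coeff_zero
  rw [← MonoidHom.ker_eq_bot_iff]
  rcases hasFreeRank_or_isPartialBasis ψ.ker 0 with ⟨j, hj, φ, -, hφ⟩ | ⟨c, hc⟩
  · obtain rfl : j = 0 := Nat.le_zero.mp hj
    rw [← hφ, eq_bot_iff]
    rintro _ ⟨w, rfl⟩
    rw [Subgroup.mem_bot, Subsingleton.elim w 1, map_one]
  · obtain ⟨δ, hδ, hδc⟩ := hc.exists_isDerOn (1 : FreeGroup X →* ℚ) 0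
    have hzero := hδ.eq_zero_of_mapDomain_path_eq_zero (hc.mem 0) (hpath _ (hc.mem 0))
    simp [hδc] at hzero

theorem injective_of_hasFreeRank_range {G : Type*} [Group G] {r : ℕ} {f : FreeGroup (Fin r) →* G}
    (hf : HasFreeRank f.range r) : Injective f := by
  obtain ⟨σ, hσ, hσf⟩ := hf
  obtain ⟨ψ, rfl⟩ := exists_comp_eq_of_range_le hσ hσf.ge
  have hψ : Surjective ψ := fun w => by
    obtain ⟨u, hu⟩ := hσf.le ⟨w, rfl⟩
    exact ⟨u, hσ hu⟩
  exact hσ.comp (injective_of_surjective hψ (X := Fin r) rfl)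

/-- The iterates of an endomorphism, as homomorphisms. -/
def iterateHom {G : Type*} [Group G] (φ : G →* G) (i : ℕ) : G →* G :=
  (show Monoid.End G from φ) ^ i

@[simp] theorem iterateHom_apply {G : Type*} [Group G] (φ : G →* G) (i : ℕ) (g : G) :
    iterateHom φ i g = φ^[i] g := rfl

theorem exists_injective_restriction {X : Type*} [Finite X] (φ : FreeGroup X →* FreeGroup X) :
    ∃ (K r : ℕ) (σ : FreeGroup (Fin r) →* FreeGroup X) (ψ : FreeGroup (Fin r) →* FreeGroup (Fin r)),
      Injective σ ∧ Injective ψ ∧ (∀ g, σ (ψ g) = φ (σ g)) ∧ σ.range = (iterateHom φ K).range := by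
  cases nonempty_fintype X
  classical
  have hex : ∃ r K, HasFreeRank (iterateHom φ K).range r :=
    ⟨Fintype.card X, 0, hasFreeRank_range (φ := MonoidHom.id (FreeGroup X)) injective_id⟩
  obtain ⟨K, σ, hσ, hσK⟩ := Nat.find_spec hex
  have hrange : (φ.comp σ).range = (iterateHom φ (K + 1)).range := by
    rw [MonoidHom.range_comp, hσK, ← MonoidHom.range_comp]
    exact congrArg _ (MonoidHom.ext fun g => (iterate_succ_apply' φ K g).symm)
  have hle : (φ.comp σ).range ≤ σ.range := by
    rw [hrange, hσK]
    rintro _ ⟨g, rfl⟩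
    exact ⟨φ g, rfl⟩
  obtain ⟨ψ, hψ⟩ := exists_comp_eq_of_range_le hσ hle
  have hφσ : Injective (σ.comp ψ) := by
    obtain ⟨j, hj, hjr⟩ := exists_hasFreeRank_range (φ.comp σ)
    have hrj : Nat.find hex ≤ j := Nat.find_min' hex ⟨K + 1, hrange ▸ hjr⟩
    exact hψ ▸ injective_of_hasFreeRank_range (hj.antisymm hrj ▸ hjr)
  exact ⟨K, _, σ, ψ, hσ, Injective.of_comp (f := σ) hφσ, DFunLike.congr_fun hψ, hσK⟩

end Hopf

/-! ### Periodic points -/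

section PeriodicSubgroup

variable {G : Type*} [Group G] {φ : G →* G}

/-- The subgroup of periodic points of an endomorphism. -/
def periodicSubgroup (φ : G →* G) : Subgroup G where
  carrier := periodicPts φ
  one_mem' := ⟨1, Nat.one_pos, map_one φ⟩
  mul_mem' := by
    rintro a b ⟨M, hM, ha⟩ ⟨N, hN, hb⟩
    exact ⟨M * N, Nat.mul_pos hM hN, (iterate_map_mul φ _ a b).trans
      (congrArg₂ _ (ha.mul_const N) (hb.const_mul M))⟩
  inv_mem' := by
    rintro a ⟨M, hM, ha⟩
    exact ⟨M, hM, (iterate_map_inv φ _ a).trans (congrArg _ ha)⟩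

theorem mem_periodicSubgroup {g : G} : g ∈ periodicSubgroup φ ↔ ∃ M > 0, IsPeriodicPt φ M g :=
  Iff.rfl

theorem periodicSubgroup_iterateHom (φ : G →* G) {M : ℕ} (hM : 0 < M) :
    periodicSubgroup (iterateHom φ M) = periodicSubgroup φ := by
  ext g
  have hiter : ∀ N, IsPeriodicPt (iterateHom φ M) N g ↔ IsPeriodicPt φ (M * N) g := fun N => by
    rw [IsPeriodicPt, IsPeriodicPt, iterate_mul]
    rfl
  simp only [mem_periodicSubgroup, hiter]
  exact ⟨fun ⟨N, hN, h⟩ => ⟨M * N, Nat.mul_pos hM hN, h⟩,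
    fun ⟨N, hN, h⟩ => ⟨N, hN, h.const_mul M⟩⟩

theorem exists_common_period {J : Type*} [Finite J] {c : J → G}
    (hc : ∀ j, c j ∈ periodicSubgroup φ) : ∃ M > 0, ∀ j, IsPeriodicPt φ M (c j) := by
  cases nonempty_fintype J
  choose M hM h using hc
  exact ⟨∏ j, M j, Finset.prod_pos fun j _ => hM j, fun j =>
    (h j).trans_dvd (Finset.dvd_prod_of_mem M (Finset.mem_univ j))⟩

theorem derRel_comp_le {G' R J : Type*} [Group G'] [Ring R] [Fintype J] (ρ : G →* R) (η : G' →* G)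
    (c : J → G') : DerRel (ρ.comp η) ⊤ c ≤ DerRel ρ ⊤ (η ∘ c) := fun d hd D hD =>
  hd (D ∘ η) fun x _ y _ => by simpa using hD (η x) trivial (η y) trivial

end PeriodicSubgroup

namespace MalcevNeumann

variable {k : Type*} [Field k] {X : Type*} {J : Type*}
  [LinearOrder (FreeGroup X)] [MulLeftMono (FreeGroup X)] [MulRightMono (FreeGroup X)]

theorem exists_mem_ballSpan_iterateHom [DecidableEq X] {ψ : FreeGroup X →* FreeGroup X}
    {d : J → MalcevNeumann k (FreeGroup X)} {y : MalcevNeumann k (FreeGroup X)}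
    (hy : y ∈ translates (of k _) (periodicSubgroup ψ) d) :
    ∃ r₀ M, 0 < M ∧ ∀ r ≥ r₀, ∀ i, y ∈ ballSpan (iterateHom ψ (M * i)) d r := by
  induction hy using AddSubgroup.closure_induction with
  | mem z hz =>
    obtain ⟨j, h, ⟨M, hM, hMh⟩, rfl⟩ := hz
    refine ⟨h.norm, M, hM, fun r hr i => ?_⟩
    have hfix : iterateHom ψ (M * i) h = h := hMh.mul_const i
    have hmem := mul_of_mem_ballSpan (k := k) (iterateHom ψ (M * i)) d j hr
    rwa [hfix] at hmem
  | zero => exact ⟨0, 1, Nat.one_pos, fun r _ i => zero_mem _⟩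
  | add y z _ _ hy hz =>
    obtain ⟨r, M, hM, h⟩ := hy
    obtain ⟨s, N, hN, h'⟩ := hz
    refine ⟨max r s, M * N, Nat.mul_pos hM hN, fun t ht i => add_mem ?_ ?_⟩
    · rw [mul_assoc]
      exact h t (le_of_max_le_left ht) _
    · rw [mul_comm M, mul_assoc]
      exact h' t (le_of_max_le_right ht) _
  | neg y _ hy =>
    obtain ⟨r, M, hM, h⟩ := hy
    exact ⟨r, M, hM, fun s hs i => neg_mem (h s hs i)⟩

variable [Finite X] [Fintype J] {c : J → FreeGroup X} {d : J → MalcevNeumann k (FreeGroup X)}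
  {j₀ : J} {ψ : FreeGroup X →* FreeGroup X}

theorem isMinimalVector_derRel_comp (hd : IsMinimalVector (DerRel (of k _) ⊤ c) d j₀)
    (hfix : ∀ j, ψ (c j) = c j) : IsMinimalVector (DerRel ((of k _).comp ψ) ⊤ c) d j₀ := by
  have hle := derRel_comp_le (of k _) ψ c
  rw [show ψ ∘ c = c from funext hfix] at hle
  refine hd.mono hle ?_
  obtain ⟨d', hd', hd'0, hzero⟩ := exists_mem_derRel ((of k _).comp ψ)
    (θ := MonoidHom.id (FreeGroup X)) injective_id hd.mem
    (fun j => proj_eq_self_iff.mpr fun a _ => ⟨a, rfl⟩) hd.ne_zero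
  have hsmul := hd.eq_smul d' (hle hd') hzero
  have hne : d' j₀ ≠ 0 := fun h => hd'0 (by rw [hsmul, h, zero_smul])
  exact ((DerRel _ _ _).smul_mem_iff hne).mp (hsmul ▸ hd')

-- The leading monomial is `ψ^[M * i] (g i)` for every `i`, with `g i` in a fixed finite ball, so
-- `g` takes some value twice.
theorem mem_periodicSubgroup_of_mem_translates (hψ : Injective ψ) (hfix : ∀ j, ψ (c j) = c j)
    (hd : IsMinimalVector (DerRel (of k _) ⊤ c) d j₀) {y : MalcevNeumann k (FreeGroup X)}
    (hy : y ∈ translates (of k _) (periodicSubgroup ψ) d) {a : FreeGroup X}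
    (ha : IsLeast y.support a) : a ∈ periodicSubgroup ψ := by
  classical
  obtain ⟨r₁, M, hM, hyr⟩ := exists_mem_ballSpan_iterateHom hy
  obtain ⟨r₂, hr₂⟩ := exists_radius c
  let θ : ℕ → FreeGroup X →* FreeGroup X := fun i => iterateHom ψ (M * i)
  have hmin : ∀ i, IsMinimalVector (DerRel ((of k _).comp (θ i)) ⊤ c) d j₀ := fun i =>
    isMinimalVector_derRel_comp hd fun j => iterate_fixed (hfix j) _
  have hproj : ∀ i j, proj (θ i).range (d j) = d j := fun i =>
    proj_eq_self_of_isMinimalVector (hmin i) (proj_mem_derRel_top le_rfl (hmin i).mem)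
  have hlead : ∀ i, a ∈ leadSet (ballSpan (θ i) d (max r₁ r₂)) := fun i =>
    ⟨y, hyr _ (le_max_left _ _) i, ha⟩
  choose g hg using fun i => leadSet_ballSpan_subset (hproj i) _ (hlead i)
  have hnorm : ∀ i, (g i).norm ≤ _ := fun i =>
    (norm_lt_ncard_ball (hψ.iterate _) (hmin i) (hproj i)
      (fun j e he => (hr₂ j e he).trans (le_max_right r₁ r₂)) ((hg i).symm ▸ hlead i)).le
  obtain ⟨i, i', hlt, heq⟩ :=
    (CayleyTree.finite_norm_le (X := X) _).exists_lt_map_eq_of_forall_mem hnorm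
  refine ⟨M * (i' - i), Nat.mul_pos hM (Nat.sub_pos_of_lt hlt), ?_⟩
  calc ψ^[M * (i' - i)] a = ψ^[M * (i' - i)] (ψ^[M * i] (g i)) := congrArg _ (hg i).symm
    _ = ψ^[M * i'] (g i') := by
      rw [← iterate_add_apply, ← mul_add, Nat.sub_add_cancel hlt.le, heq]
    _ = a := hg i'

theorem derRel_eq_bot_of_isPartialBasis_periodicSubgroup (hψ : Injective ψ)
    (hc : IsPartialBasis (periodicSubgroup ψ) c) : DerRel (of k (FreeGroup X)) ⊤ c = ⊥ := by
  obtain ⟨M, hM, hfix⟩ := exists_common_period hc.mem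
  rw [← periodicSubgroup_iterateHom ψ hM] at hc
  have hid : (MonoidHom.id (FreeGroup X)).range = ⊤ := MonoidHom.range_eq_top.mpr surjective_id
  by_contra hne
  obtain ⟨d, j₀, hd⟩ := exists_isMinimalVector hne
  refine hd.ne_zero (eq_zero_of_mem_derRel (α := MonoidHom.id (FreeGroup X))
    (H := periodicSubgroup (iterateHom ψ M)) injective_id ?_ (hid ▸ hd.mem) fun y hy a ha => ?_)
  · rwa [hid, top_inf_eq]
  · rw [hid, top_inf_eq] at hy
    exact mem_periodicSubgroup_of_mem_translates (hψ.iterate M) hfix hd hy ha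

end MalcevNeumann

theorem inert_of_forall_isPartialBasis (k : Type*) [Field k] {X : Type*} [Finite X]
    {A : Subgroup (FreeGroup X)}
    (h : ∀ (m : ℕ) (c : Fin m → FreeGroup X), IsPartialBasis A c →
      ∃ (E : Type*) (_ : DivisionRing E) (_ : Algebra k E) (ρ : FreeGroup X →* E),
        DerRel ρ ⊤ c = ⊥) : Inert A := by
  cases nonempty_fintype X
  cases nonempty_encodable X
  obtain ⟨_, _, _⟩ := Magnus.exists_biOrder X
  rcases hasFreeRank_or_isPartialBasis A (Fintype.card X) with ⟨j, -, α, hα, rfl⟩ | ⟨c, hc⟩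
  · obtain ⟨E, _, _, ρ, hρ⟩ := h j (fun l => α (FreeGroup.of l))
      (.of_injective hα injective_id)
    exact inert_of_derRel_eq_bot k hα hρ
  · obtain ⟨E, _, _, ρ, hρ⟩ := h _ c hc
    exact absurd hρ (derRel_top_ne_bot ρ c (by simp))

theorem IsPartialBasis.of_map {G G' J : Type*} [Group G] [Group G'] {σ : G →* G'}
    (hσ : Injective σ) {A : Subgroup G} {c : J → G} (h : IsPartialBasis (A.map σ) (σ ∘ c)) :
    IsPartialBasis A c := by
  obtain ⟨s, hφ, hr, hinj, hs⟩ := h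
  obtain ⟨φ, hφσ⟩ := exists_comp_eq_of_range_le hσ (hr.le.trans (MonoidHom.range_eq_map σ ▸
    Subgroup.map_mono le_top))
  have hA : φ.range = A :=
    Subgroup.map_injective hσ ((MonoidHom.range_comp _ _).symm.trans (hφσ ▸ hr))
  have hc : c = fun j => φ (FreeGroup.of ⟨σ (c j), hs j⟩) := funext fun j => hσ <| by
    simpa using (DFunLike.congr_fun hφσ (FreeGroup.of ⟨σ (c j), hs j⟩)).symm
  have hφ' : Injective φ := Injective.of_comp (f := σ) (by rwa [← MonoidHom.coe_comp, hφσ])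
  rw [hc, ← hA]
  exact .of_injective hφ' fun i j hij => hinj (congrArg Subtype.val hij)

theorem inert_periodicSubgroup {X : Type*} [Finite X] (φ : FreeGroup X →* FreeGroup X) :
    Inert (periodicSubgroup φ) := by
  refine inert_of_forall_isPartialBasis ℚ fun m c hc => ?_
  obtain ⟨K, r, σ, ψ, hσ, hψ, hσψ, hK⟩ := exists_injective_restriction φ
  obtain ⟨_, _, _⟩ := Magnus.exists_biOrder (Fin r)
  have hrange : ∀ M > 0, (iterateHom φ (M * K)).range ≤ σ.range := by
    rintro (_ | M) hM _ ⟨w, rfl⟩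
    · exact absurd hM (lt_irrefl 0)
    · refine hK ▸ ⟨φ^[M * K] w, ?_⟩
      rw [iterateHom_apply, iterateHom_apply, ← iterate_add_apply, add_one_mul, add_comm]
  have hmap : periodicSubgroup φ = (periodicSubgroup ψ).map σ := by
    have hiff : ∀ M w, IsPeriodicPt φ M (σ w) ↔ IsPeriodicPt ψ M w := fun M w => by
      rw [IsPeriodicPt, IsFixedPt, ← Semiconj.iterate_right (f := σ) hσψ M w, hσ.eq_iff]
      rfl
    ext g
    constructor
    · rintro ⟨M, hM, hg⟩
      obtain ⟨w, rfl⟩ := hrange M hM ⟨g, hg.mul_const K⟩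
      exact ⟨w, ⟨M, hM, (hiff M w).mp hg⟩, rfl⟩
    · rintro ⟨w, ⟨M, hM, hw⟩, rfl⟩
      exact ⟨M, hM, (hiff M w).mpr hw⟩
  obtain ⟨M, hM, hMc⟩ := exists_common_period hc.mem
  obtain ⟨η, hη⟩ := exists_comp_eq_of_range_le hσ (hrange M hM)
  have hσc : σ ∘ η ∘ c = c := funext fun j =>
    (DFunLike.congr_fun hη (c j)).trans ((hMc j).mul_const K)
  have hc' : IsPartialBasis (periodicSubgroup ψ) (η ∘ c) := .of_map hσ (by rwa [hσc, ← hmap])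
  refine ⟨MalcevNeumann ℚ (FreeGroup (Fin r)), inferInstance, inferInstance,
    (MalcevNeumann.of ℚ (FreeGroup (Fin r))).comp η, eq_bot_iff.mpr ?_⟩
  rw [← MalcevNeumann.derRel_eq_bot_of_isPartialBasis_periodicSubgroup (k := ℚ) hψ hc']
  exact derRel_comp_le _ _ _

/-! ### Automorphisms of prime order -/

section ModularCounting

variable {p : ℕ} [Fact p.Prime] {T : Type*}

theorem card_eq_card_filter_fixed [DecidableEq T] {f : T → T} (hf : ∀ t, IsPeriodicPt f p t)
    {s : Finset T} (hs : ∀ t ∈ s, f t ∈ s) :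
    (s.card : ZMod p) = (s.filter fun t => f t = t).card := by
  have hmaps : Set.MapsTo f s s := hs
  let F : Function.End s := hmaps.restrict f s s
  have hF : F ^ p ^ 1 = 1 := by
    rw [pow_one]
    funext t
    exact Subtype.ext ((congrArg Subtype.val (congrFun
      (hom_coe_pow (fun g : Function.End s => (g : s → s)) rfl (fun _ _ => rfl) F p) t)).trans
      ((hmaps.coe_iterate_restrict t p).trans (hf t)))
  have hcard := (ZMod.natCast_eq_natCast_iff _ _ _).mpr (Equiv.Perm.card_fixedPoints_modEq hF)
  rw [Fintype.card_coe] at hcard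
  rw [hcard, ← Fintype.card_coe]
  refine congrArg _ (Fintype.card_congr ((Equiv.subtypeEquivRight fun t => ?_).trans
    ((Equiv.subtypeSubtypeEquivSubtypeInter (· ∈ s) fun t => f t = t).trans
      (Equiv.subtypeEquivRight fun t => by simp))))
  exact Subtype.ext_iff

theorem finsum_eq_finsum_mem_fixedPoints {f : T → T} (hf : ∀ t, IsPeriodicPt f p t)
    {w : T → ZMod p} (hw : ∀ t, w (f t) = w t) (hfin : (support w).Finite) :
    ∑ᶠ t, w t = ∑ᶠ t ∈ fixedPoints f, w t := by
  classical
  have hfiber : ∀ u : Finset T,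
      ∑ t ∈ u, w t = ∑ z : ZMod p, ((u.filter fun t => w t = z).card : ZMod p) * z := fun u => by
    rw [← Finset.sum_fiberwise (s := u) (g := w)]
    refine Finset.sum_congr rfl fun z _ => ?_
    rw [Finset.sum_congr rfl fun t ht => (Finset.mem_filter.mp ht).2, Finset.sum_const,
      nsmul_eq_mul]
  rw [finsum_eq_sum w hfin, finsum_mem_eq_sum_filter w _ hfin, hfiber, hfiber]
  refine Finset.sum_congr rfl fun z _ => ?_
  rw [Finset.filter_comm, card_eq_card_filter_fixed hf fun t ht => ?_]
  · rfl
  · simpa [hw] using ht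

theorem finsum_eq_finsum_const {E : Type*} {w : (ZMod p → E) → ZMod p}
    (hw : ∀ t, w (t ∘ (· + 1)) = w t) (hfin : (support w).Finite) :
    ∑ᶠ t, w t = ∑ᶠ e, w (const _ e) := by
  have hiter : ∀ n (t : ZMod p → E), (fun t => t ∘ (· + 1))^[n] t = t ∘ (· + (n : ZMod p)) := by
    intro n
    induction n with
    | zero => exact fun t => funext fun i => by simp
    | succ n ih => exact fun t => funext fun i => by simp [ih, add_assoc]
  have hfixed : fixedPoints (fun t : ZMod p → E => t ∘ (· + 1)) = Set.range (const _) := by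
    refine Set.Subset.antisymm (fun t ht => ⟨t 0, funext fun i => ?_⟩) ?_
    · have hval := congrFun ((hiter i.val t).symm.trans (iterate_fixed (mem_fixedPoints.mp ht) _)) 0
      simpa using hval.symm
    · rintro _ ⟨e, rfl⟩
      rfl
  rw [finsum_eq_finsum_mem_fixedPoints (f := fun t => t ∘ (· + 1)) (fun t => ?_) hw hfin, hfixed,
    finsum_mem_range (fun e e' h => congrFun h 0)]
  exact (hiter p t).trans (funext fun i => by simp)

theorem finite_setOf_cyclic_chain {p : ℕ} [NeZero p] {E : Type*} (S : Finset E) (N : E → Finset E) :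
    {t : ZMod p → E | (∃ m, t m ∈ S) ∧ ∀ i, t i ∈ S ∨ t i ∈ N (t (i - 1))}.Finite := by
  classical
  let grow : Finset E → Finset E := fun U => S ∪ U.biUnion N
  refine (Set.Finite.pi fun _ : ZMod p =>
    ((Finset.range p).biUnion fun n => grow^[n] S).finite_toSet).subset ?_
  rintro t ⟨⟨m, hm⟩, hstep⟩ i -
  have hgrow : ∀ n : ℕ, t (m + n) ∈ grow^[n] S := by
    intro n
    induction n with
    | zero => simpa using hm
    | succ n ih =>
      rw [iterate_succ_apply']
      have hprev := hstep (m + (n + 1 : ℕ))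
      rw [Nat.cast_succ, ← add_assoc, add_sub_cancel_right] at hprev
      rw [Nat.cast_succ, ← add_assoc]
      exact hprev.elim (Finset.mem_union_left _) fun h =>
        Finset.mem_union_right _ (Finset.mem_biUnion.mpr ⟨_, ih, h⟩)
  have hi := hgrow (i - m).val
  rw [ZMod.natCast_zmod_val, add_sub_cancel] at hi
  exact Finset.mem_biUnion.mpr ⟨_, Finset.mem_range.mpr (ZMod.val_lt _), hi⟩

end ModularCounting

section OrbitTuples

variable {p : ℕ} {X : Type*} (α : FreeGroup X →* FreeGroup X)

/-- The orbit of an element under `α`, indexed by residues modulo the order `p` of `α`. -/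
def orbitTuple (p : ℕ) : FreeGroup X →* (ZMod p → FreeGroup X) :=
  MonoidHom.pi fun i => iterateHom α i.val

/-- The action of the free group on `p`-tuples of edges of the Cayley tree that translates the
`i`-th edge by `α^[i] w`. -/
def translateTuple (p : ℕ) (w : FreeGroup X) : Equiv.Perm (ZMod p → FreeGroup X × X) where
  toFun t i := (orbitTuple α p w i * (t i).1, (t i).2)
  invFun t i := ((orbitTuple α p w i)⁻¹ * (t i).1, (t i).2)
  left_inv t := by simp
  right_inv t := by simp

variable {α}

theorem translateTuple_one (t : ZMod p → FreeGroup X × X) : translateTuple α p 1 t = t := by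
  funext i
  simp [translateTuple]

theorem translateTuple_mul (v w : FreeGroup X) (t : ZMod p → FreeGroup X × X) :
    translateTuple α p (v * w) t = translateTuple α p v (translateTuple α p w t) := by
  funext i
  simp [translateTuple, mul_assoc]

theorem orbitTuple_succ [NeZero p] (hα : ∀ g, IsPeriodicPt α p g) (w : FreeGroup X) (i : ZMod p) :
    orbitTuple α p w (i + 1) = α (orbitTuple α p w i) := by
  change α^[(i + 1).val] w = α (α^[i.val] w)
  rw [← iterate_succ_apply' α, ZMod.val_add, ZMod.val_one_eq_one_mod, Nat.add_mod_mod,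
    (hα w).iterate_mod_apply]

theorem orbitTuple_map [NeZero p] (hα : ∀ g, IsPeriodicPt α p g) (w : FreeGroup X) (i : ZMod p) :
    orbitTuple α p (α w) i = orbitTuple α p w (i + 1) := by
  rw [orbitTuple_succ hα]
  change α^[i.val] (α w) = α (α^[i.val] w)
  rw [← iterate_succ_apply' α, iterate_succ_apply]

theorem translateTuple_const_map [NeZero p] (hα : ∀ g, IsPeriodicPt α p g) (w : FreeGroup X)
    (e : FreeGroup X × X) :
    translateTuple α p (α w) (const _ e) = translateTuple α p w (const _ e) ∘ (· + 1) := by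
  funext i
  simp only [translateTuple, Equiv.coe_fn_mk, comp_apply, const_apply, orbitTuple_map hα]

end OrbitTuples

section TupleWeight

theorem extend_zero_map {S T M : Type*} [Zero M] {f : S → M} {g : S → T} (hfg : f.FactorsThrough g)
    {σ : T → T} (hσ : Injective σ) {τ : S → S} (hτ : Surjective τ)
    (hg : ∀ s, g (τ s) = σ (g s)) (hf : ∀ s, f (τ s) = f s) (t : T) :
    extend g f 0 (σ t) = extend g f 0 t := by
  by_cases ht : ∃ s, g s = t
  · obtain ⟨s, rfl⟩ := ht
    rw [← hg, hfg.extend_apply, hfg.extend_apply, hf]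
  · have hσt : ¬∃ s, g s = σ t := by
      rintro ⟨s, hs⟩
      obtain ⟨r, rfl⟩ := hτ s
      exact ht ⟨r, hσ ((hg r).symm.trans hs)⟩
    rw [extend_apply' _ _ _ ht, extend_apply' _ _ _ hσt]
    rfl

variable {p : ℕ} {X M : Type*} {α : FreeGroup X →* FreeGroup X} {f : FreeGroup X × X → M}

/-- The function on `p`-tuples of edges that takes the value `f e` at every translate of the
constant tuple `e` and vanishes elsewhere. It has this property only when `f` is invariant under
the elements fixed by `α`. -/
noncomputable def tupleWeight [Zero M] (α : FreeGroup X →* FreeGroup X) (p : ℕ)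
    (f : FreeGroup X × X → M) :
    (ZMod p → FreeGroup X × X) → M :=
  extend (fun s : FreeGroup X × (FreeGroup X × X) => translateTuple α p s.1 (const _ s.2))
    (fun s => f s.2) 0

variable [NeZero p] (hα : ∀ g, IsPeriodicPt α p g)
  (hf : ∀ a, α a = a → ∀ g x, f (a * g, x) = f (g, x))
include hα hf

theorem factorsThrough_translateTuple_const : FactorsThrough (fun s => f s.2)
    (fun s : FreeGroup X × (FreeGroup X × X) => translateTuple α p s.1 (const _ s.2)) := by
  rintro ⟨q, g, x⟩ ⟨q', g', x'⟩ h
  have horbit : ∀ i, orbitTuple α p (q⁻¹ * q') i = g * g'⁻¹ := fun i => by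
    rw [map_mul, map_inv, Pi.mul_apply, Pi.inv_apply, eq_mul_inv_iff_mul_eq, mul_assoc,
      inv_mul_eq_iff_eq_mul]
    exact (congrArg Prod.fst (congrFun h i)).symm
  obtain rfl : x = x' := congrArg Prod.snd (congrFun h 0)
  have hfixed : α (g * g'⁻¹) = g * g'⁻¹ := by
    rw [← horbit 0, ← orbitTuple_succ hα, horbit, horbit]
  simpa using hf _ hfixed g' x

variable [Zero M]

theorem tupleWeight_const (e : FreeGroup X × X) : tupleWeight α p f (const _ e) = f e := by
  have h := (factorsThrough_translateTuple_const hα hf).extend_apply 0 (1, e)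
  rwa [translateTuple_one] at h

theorem tupleWeight_translate (w : FreeGroup X) (t : ZMod p → FreeGroup X × X) :
    tupleWeight α p f (translateTuple α p w t) = tupleWeight α p f t :=
  extend_zero_map (factorsThrough_translateTuple_const hα hf) (translateTuple α p w).injective
    (τ := Prod.map (w * ·) id) ((Group.mulLeft_bijective w).surjective.prodMap surjective_id)
    (fun _ => translateTuple_mul _ _ _) (fun _ => rfl) t

theorem tupleWeight_rotate (t : ZMod p → FreeGroup X × X) :
    tupleWeight α p f (t ∘ (· + 1)) = tupleWeight α p f t :=
  have hsurj : Surjective α := fun q =>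
    ⟨α^[p - 1] q, by
      rw [← iterate_succ_apply' α, Nat.succ_eq_add_one, Nat.sub_add_cancel NeZero.one_le]
      exact hα q⟩
  extend_zero_map (factorsThrough_translateTuple_const hα hf)
    (add_right_surjective (1 : ZMod p)).injective_comp_right
    (τ := Prod.map α id) (hsurj.prodMap surjective_id)
    (fun _ => translateTuple_const_map hα _ _) (fun _ => rfl) t

end TupleWeight

section PathProducts

open CayleyTree

variable {p : ℕ} [NeZero p] {X : Type*} {α : FreeGroup X →* FreeGroup X}

/-- The product of the multiplicities of the edges `t i` in the paths from `α (t (i - 1)).1` to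
`v i`. -/
noncomputable def pathProd (α : FreeGroup X →* FreeGroup X) (v : ZMod p → FreeGroup X)
    (t : ZMod p → FreeGroup X × X) : ZMod p :=
  ∏ i, ((path (v i) (t i) - path (α (t (i - 1)).1) (t i) : ℤ) : ZMod p)

theorem pathProd_translate (hα : ∀ g, IsPeriodicPt α p g) (w : FreeGroup X)
    (v : ZMod p → FreeGroup X) (t : ZMod p → FreeGroup X × X) :
    pathProd α (orbitTuple α p w * v) (translateTuple α p w t) = pathProd α v t := by
  refine Finset.prod_congr rfl fun i _ => congrArg _ ?_
  have horbit : α (orbitTuple α p w (i - 1)) = orbitTuple α p w i := by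
    rw [← orbitTuple_succ hα, sub_add_cancel]
  simp only [translateTuple, Equiv.coe_fn_mk, Pi.mul_apply, map_mul, horbit, path_mul,
    Finsupp.add_apply, translate_apply, inv_mul_cancel_left]
  ring

theorem pathProd_const_rotate (a : FreeGroup X) (t : ZMod p → FreeGroup X × X) :
    pathProd (p := p) α (const _ a) (t ∘ (· + 1)) = pathProd α (const _ a) t :=
  Fintype.prod_equiv (Equiv.addRight 1) _ _ fun i => by simp

theorem finite_setOf_pathProd_ne (v v' : ZMod p → FreeGroup X) :
    {t | pathProd α v t ≠ pathProd α v' t}.Finite := by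
  classical
  let S : Finset (FreeGroup X × X) := Finset.univ.biUnion fun i =>
    (path (v i)).support ∪ (path (v' i)).support
  have hS : ∀ i e, e ∉ S → path (v i) e = 0 ∧ path (v' i) e = 0 := fun i e he => by
    simp only [S, Finset.mem_biUnion, Finset.mem_univ, true_and, Finset.mem_union,
      Finsupp.mem_support_iff, not_exists, not_or, not_not] at he
    exact he i
  refine (finite_setOf_cyclic_chain S fun e => (path (α e.1)).support).subset fun t ht => ⟨?_, ?_⟩
  · by_contra! h
    refine ht (Finset.prod_congr rfl fun i _ => ?_)
    rw [(hS i _ (h i)).1, (hS i _ (h i)).2]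
  · by_contra! h
    obtain ⟨i, hiS, hiα⟩ := h
    rw [Finsupp.notMem_support_iff] at hiα
    refine ht ?_
    rw [pathProd, pathProd, Finset.prod_eq_zero (Finset.mem_univ i),
      Finset.prod_eq_zero (Finset.mem_univ i)]
    · rw [(hS i _ hiS).2, hiα, sub_zero, Int.cast_zero]
    · rw [(hS i _ hiS).1, hiα, sub_zero, Int.cast_zero]

/-- The integral of `f` along the difference of two tuples of vertices. On constant tuples it is the
path integral of `f`, by reduction modulo `p` to the constant tuples of edges. -/
noncomputable def tupleIntegral (α : FreeGroup X →* FreeGroup X) (f : FreeGroup X × X → ZMod p)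
    (v v' : ZMod p → FreeGroup X) : ZMod p :=
  ∑ᶠ t, (pathProd α v t - pathProd α v' t) * tupleWeight α p f t

theorem finite_support_tupleIntegral (f : FreeGroup X × X → ZMod p) (v v' : ZMod p → FreeGroup X) :
    (support fun t => (pathProd α v t - pathProd α v' t) * tupleWeight α p f t).Finite :=
  (finite_setOf_pathProd_ne (α := α) v v').subset fun _ ht =>
    sub_ne_zero.mp (left_ne_zero_of_mul ht)

theorem tupleIntegral_add (f : FreeGroup X × X → ZMod p) (v v' v'' : ZMod p → FreeGroup X) :
    tupleIntegral α f v v' + tupleIntegral α f v' v'' = tupleIntegral α f v v'' := by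
  rw [tupleIntegral, tupleIntegral, ← finsum_add_distrib (finite_support_tupleIntegral f v v')
    (finite_support_tupleIntegral f v' v'')]
  exact finsum_congr fun t => by ring

variable {f : FreeGroup X × X → ZMod p} (hα : ∀ g, IsPeriodicPt α p g)
  (hf : ∀ a, α a = a → ∀ g x, f (a * g, x) = f (g, x))
include hα hf

theorem tupleIntegral_translate (w : FreeGroup X) (v v' : ZMod p → FreeGroup X) :
    tupleIntegral α f (orbitTuple α p w * v) (orbitTuple α p w * v') = tupleIntegral α f v v' :=
  (finsum_comp_equiv (translateTuple α p w)).symm.trans (finsum_congr fun t => by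
    rw [pathProd_translate hα, pathProd_translate hα, tupleWeight_translate hα hf])

end PathProducts

theorem exists_invariant_integral {X R : Type*} [Ring R] {A : Subgroup (FreeGroup X)}
    {δ : FreeGroup X → R} (hδ : IsDerOn 1 A δ) :
    ∃ f : FreeGroup X × X → R, (∀ a ∈ A, ∀ g x, f (a * g, x) = f (g, x)) ∧
      ∀ a ∈ A, δ a = CayleyTree.integral f (CayleyTree.path a) := by
  obtain ⟨τ, hτ⟩ := exists_isCosetSection A
  obtain ⟨f, hf⟩ := hδ.exists_eq_integral hτ (MonoidHom.id _)
  refine ⟨fun e => f (τ e.1, e.2), fun a ha g x => ?_, fun a ha => ?_⟩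
  · simp only [hτ.map_mul a ha]
  · simpa using hf a ha

section PrimeOrder

open CayleyTree

variable {p : ℕ} [Fact p.Prime] {X : Type*} {α : FreeGroup X →* FreeGroup X}

theorem pathProd_const_sub_pathProd_one (a : FreeGroup X) (e : FreeGroup X × X) :
    pathProd (p := p) α (const _ a) (const _ e) - pathProd (p := p) α 1 (const _ e) = path a e := by
  simp [pathProd, ZMod.card, path_one]

theorem tupleIntegral_const_one {f : FreeGroup X × X → ZMod p} (hα : ∀ g, IsPeriodicPt α p g)
    (hf : ∀ a, α a = a → ∀ g x, f (a * g, x) = f (g, x)) (a : FreeGroup X) :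
    tupleIntegral α f (const _ a) 1 = integral f (path a) := by
  have hsummand : ∀ e, (pathProd α (const (ZMod p) a) (const _ e) -
      pathProd (p := p) α 1 (const _ e)) * tupleWeight α p f (const _ e) = path a e • f e := by
    intro e
    rw [pathProd_const_sub_pathProd_one, tupleWeight_const hα hf, zsmul_eq_mul]
  rw [tupleIntegral, finsum_eq_finsum_const (fun t => ?_) (finite_support_tupleIntegral f _ _),
    finsum_congr hsummand, integral_eq_sum _ _ subset_rfl]
  · refine finsum_eq_sum_of_support_subset _ fun e he => Finsupp.mem_support_iff.mpr fun h0 => he ?_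
    simp only [h0, zero_smul]
  · rw [pathProd_const_rotate, tupleWeight_rotate hα hf]
    exact congrArg (fun z => (_ - z) * _) (pathProd_const_rotate 1 t)

theorem exists_isDerOn_extension (hα : ∀ g, IsPeriodicPt α p g) {δ : FreeGroup X → ZMod p}
    (hδ : IsDerOn 1 (α.eqLocus (MonoidHom.id _)) δ) :
    ∃ μ : FreeGroup X → ZMod p, IsDerOn 1 ⊤ μ ∧ ∀ a, α a = a → μ a = δ a := by
  obtain ⟨f, hf, hδf⟩ := exists_invariant_integral hδ
  refine ⟨fun q => tupleIntegral α f (orbitTuple α p q) 1, fun q _ r _ => ?_, fun a ha => ?_⟩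
  · have hr := tupleIntegral_translate hα hf q (orbitTuple α p r) 1
    rw [mul_one] at hr
    beta_reduce
    rw [map_mul, ← tupleIntegral_add f _ (orbitTuple α p q), hr, MonoidHom.one_apply, one_mul,
      add_comm]
  · rw [hδf a ha, ← tupleIntegral_const_one hα hf,
      show const (ZMod p) a = orbitTuple α p a from funext fun i => (iterate_fixed ha _).symm]

theorem inert_fixed_of_prime_order {X : Type*} [Finite X] {α : FreeGroup X →* FreeGroup X}
    (hα : ∀ g, IsPeriodicPt α p g) : Inert (α.eqLocus (MonoidHom.id _)) := by
  classical
  refine inert_of_forall_isPartialBasis (ZMod p) fun m c hc =>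
    ⟨ZMod p, inferInstance, inferInstance, 1, (Submodule.eq_bot_iff _).mpr fun d hd => ?_⟩
  funext j₀
  obtain ⟨δ, hδ, hδc⟩ := hc.exists_isDerOn (1 : FreeGroup X →* ZMod p) j₀
  obtain ⟨μ, hμ, hμδ⟩ := exists_isDerOn_extension hα hδ
  simpa [hμδ _ (hc.mem _), hδc] using hd μ hμ

end PrimeOrder

/-! ### Fixed points of one endomorphism -/

section SingleEndomorphism

theorem HasFreeRank.map {G G' : Type*} [Group G] [Group G'] {H : Subgroup G} {m : ℕ}
    (h : HasFreeRank H m) {η : G →* G'} (hη : Injective η) : HasFreeRank (H.map η) m := by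
  obtain ⟨θ, hθ, rfl⟩ := h
  exact ⟨η.comp θ, hη.comp hθ, MonoidHom.range_comp η θ⟩

theorem Inert.top {G : Type*} [Group G] : Inert (⊤ : Subgroup G) := fun H m hH =>
  ⟨m, le_rfl, (inf_top_eq H).symm ▸ hH⟩

theorem Inert.map {G G' : Type*} [Group G] [Group G'] {η : G →* G'} (hη : Injective η)
    (hr : Inert η.range) {A : Subgroup G} (hA : Inert A) : Inert (A.map η) := by
  intro H m hH
  obtain ⟨j, hj, θ, hθ, hθr⟩ := hr H m hH
  obtain ⟨θ', rfl⟩ := exists_comp_eq_of_range_le hη (hθr.le.trans inf_le_right)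
  obtain ⟨i, hi, h⟩ := hA θ'.range j ⟨θ', Injective.of_comp (f := η) hθ, rfl⟩
  have hinf : (θ'.range ⊓ A).map η = H ⊓ A.map η := by
    rw [Subgroup.map_inf _ _ _ hη, ← MonoidHom.range_comp, hθr, inf_assoc,
      inf_eq_right.mpr (Subgroup.map_le_range η A)]
  exact ⟨i, hi.trans hj, hinf ▸ h.map hη⟩

theorem inert_fixed_of_mapsTo_inert {n : ℕ} {φ : FreeGroup (Fin n) →* FreeGroup (Fin n)}
    {B : Subgroup (FreeGroup (Fin n))} (hB : Inert B) (hφ : Set.MapsTo φ B B)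
    (hfix : φ.eqLocus (MonoidHom.id _) ≤ B)
    (h : ∀ (b : ℕ) (η : FreeGroup (Fin b) →* FreeGroup (Fin n))
      (α : FreeGroup (Fin b) →* FreeGroup (Fin b)), Injective η → η.range = B →
      Semiconj η α φ → Inert (α.eqLocus (MonoidHom.id _))) :
    Inert (φ.eqLocus (MonoidHom.id _)) := by
  obtain ⟨b, -, η, hη, hηB⟩ := hB ⊤ n
    ⟨MonoidHom.id _, injective_id, MonoidHom.range_eq_top.mpr surjective_id⟩
  rw [top_inf_eq] at hηB
  have hle : (φ.comp η).range ≤ η.range := by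
    rintro _ ⟨w, rfl⟩
    exact hηB.symm ▸ hφ (hηB ▸ ⟨w, rfl⟩)
  obtain ⟨α, hα⟩ := exists_comp_eq_of_range_le hη hle
  have hsemi : Semiconj η α φ := DFunLike.congr_fun hα
  have hmap : φ.eqLocus (MonoidHom.id _) = (α.eqLocus (MonoidHom.id _)).map η := by
    ext g
    constructor
    · intro hg
      obtain ⟨w, rfl⟩ := hηB.ge (hfix hg)
      exact ⟨w, hη ((hsemi w).trans hg), rfl⟩
    · rintro ⟨w, hw, rfl⟩
      exact (hsemi w).symm.trans (congrArg η hw)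
  exact hmap ▸ Inert.map hη (hηB ▸ hB) (h b η α hη hηB hsemi)

theorem inert_fixed_of_finite_order {N : ℕ} (hN : 0 < N) {n : ℕ}
    {α : FreeGroup (Fin n) →* FreeGroup (Fin n)} (hα : ∀ g, IsPeriodicPt α N g) :
    Inert (α.eqLocus (MonoidHom.id _)) := by
  induction N using Nat.strong_induction_on generalizing n with
  | _ N ih =>
    by_cases h1 : N = 1
    · have htop : α.eqLocus (MonoidHom.id _) = ⊤ := eq_top_iff.mpr fun g _ => (h1 ▸ hα) g
      exact htop ▸ Inert.top
    obtain ⟨p, hp, M, rfl⟩ := Nat.exists_prime_and_dvd h1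
    have : Fact p.Prime := ⟨hp⟩
    have hM : 0 < M := Nat.pos_of_mul_pos_left hN
    have hB : Inert ((iterateHom α M).eqLocus (MonoidHom.id _)) :=
      inert_fixed_of_prime_order (p := p) fun g => by
        change (α^[M])^[p] g = g
        rw [← iterate_mul, mul_comm, hα]
    refine inert_fixed_of_mapsTo_inert hB (bijOn_ptsOfPeriod α hM).mapsTo
      (fun g hg => iterate_fixed hg M) fun b η β hη hηB hβ => ?_
    refine ih M (lt_mul_of_one_lt_left hM hp.one_lt) hM fun w => hη ?_
    exact (hβ.iterate_right M w).trans (hηB.le ⟨w, rfl⟩)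

theorem inert_fixed {n : ℕ} (φ : FreeGroup (Fin n) →* FreeGroup (Fin n)) :
    Inert (φ.eqLocus (MonoidHom.id _)) := by
  refine inert_fixed_of_mapsTo_inert (inert_periodicSubgroup φ) (bijOn_periodicPts φ).mapsTo
    (fun g hg => ⟨1, Nat.one_pos, hg⟩) fun b η α hη hηB hα => ?_
  obtain ⟨M, hM, hMη⟩ := exists_common_period (φ := φ) (c := fun i => η (FreeGroup.of i))
    fun i => hηB.le ⟨_, rfl⟩
  have hid : iterateHom α M = MonoidHom.id _ := FreeGroup.ext_hom _ _ fun i =>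
    hη ((hα.iterate_right M _).trans (hMη i))
  exact inert_fixed_of_finite_order hM (DFunLike.congr_fun hid)

end SingleEndomorphism

/-! ### Families of endomorphisms -/

theorem derRel_range_ne_bot {Ω E X J : Type*} [Group Ω] [DivisionRing E] [Fintype X] [Fintype J]
    (ρ : Ω →* E) {θ : FreeGroup X →* Ω} (hθ : Injective θ) {c : J → Ω} (hc : ∀ j, c j ∈ θ.range)
    (h : Fintype.card X < Fintype.card J) : DerRel ρ θ.range c ≠ ⊥ := by
  choose b hb using hc
  obtain rfl : θ ∘ b = c := funext hb
  exact derRel_range ρ hθ b ▸ derRel_top_ne_bot _ b h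

namespace MalcevNeumann

variable {k Ω J : Type*} [Field k] [LinearOrder Ω] [Group Ω] [MulLeftMono Ω] [MulRightMono Ω]
  [Fintype J] {c : J → Ω}

theorem proj_mem_derRel_range {X : Type*} [Finite X] {θ : FreeGroup X →* Ω} (hθ : Injective θ)
    (hc : ∀ j, c j ∈ θ.range) {d : J → MalcevNeumann k Ω} (hd : d ∈ DerRel (of k Ω) θ.range c) :
    (fun j => proj θ.range (d j)) ∈ DerRel (of k Ω) θ.range c := by
  choose b hb using hc
  obtain rfl : θ ∘ b = c := funext hb
  rw [derRel_range _ hθ] at hd ⊢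
  exact proj_mem_derRel_top le_rfl hd

variable (k) {H : ℕ → Subgroup Ω} (hH : Antitone H) {m : ℕ}
  (hr : ∀ i, ∃ j ≤ m, HasFreeRank (H i) j)
include hH hr

theorem exists_proj_iInf_eq_self (hm : m < Fintype.card J) (hc : ∀ i j, c j ∈ H i) :
    ∃ i, ∃ d ∈ DerRel (of k Ω) (H i) c, d ≠ 0 ∧ ∀ j, proj (⨅ i, H i) (d j) = d j := by
  choose r hrm θ hθ hθH using hr
  have hne : ∀ i, DerRel (of k Ω) (H i) c ≠ ⊥ := fun i => by
    rw [← hθH]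
    exact derRel_range_ne_bot _ (hθ i) (fun j => (hθH i).ge (hc i j))
      (by simpa using (hrm i).trans_lt hm)
  have hanti : Antitone fun i => DerRel (of k Ω) (H i) c := fun _ _ hij => derRel_mono _ (hH hij) c
  obtain ⟨i₀, hi₀⟩ := IsArtinian.monotone_stabilizes ⟨_, hanti.dual_right⟩
  have hstable : ∀ i ≥ i₀, DerRel (of k Ω) (H i₀) c = DerRel (of k Ω) (H i) c := hi₀
  obtain ⟨d, j₀, hd⟩ := exists_isMinimalVector (hne i₀)
  have hproj : ∀ i ≥ i₀, ∀ j, proj (H i) (d j) = d j := fun i hi =>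
    proj_eq_self_of_isMinimalVector hd <| hstable i hi ▸ hθH i ▸
      proj_mem_derRel_range (hθ i) (fun j => (hθH i).ge (hc i j))
        ((hθH i).symm ▸ hstable i hi ▸ hd.mem)
  refine ⟨i₀, d, hd.mem, hd.ne_zero, fun j => proj_eq_self_iff.mpr fun a ha => ?_⟩
  refine Subgroup.mem_iInf.mpr fun i => hH (le_max_left i i₀) ?_
  exact proj_eq_self_iff.mp (hproj _ (le_max_right i i₀) j) ha

end MalcevNeumann

theorem hasFreeRank_iInf_of_antitone {X : Type*} [Finite X] {H : ℕ → Subgroup (FreeGroup X)}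
    (hH : Antitone H) {m : ℕ} (hr : ∀ i, ∃ j ≤ m, HasFreeRank (H i) j) :
    ∃ j ≤ m, HasFreeRank (⨅ i, H i) j := by
  cases nonempty_encodable X
  obtain ⟨_, _, _⟩ := Magnus.exists_biOrder X
  refine (hasFreeRank_or_isPartialBasis (⨅ i, H i) m).resolve_right ?_
  rintro ⟨c, hc⟩
  obtain ⟨i, d, hd, hd0, hproj⟩ := MalcevNeumann.exists_proj_iInf_eq_self ℚ hH hr (c := c) (by simp)
    fun i j => iInf_le H i (hc.mem j)
  obtain ⟨r, -, α, hα, hαr⟩ := hr i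
  rw [← hαr] at hd
  rw [← inf_eq_right.mpr (iInf_le H i), ← hαr] at hc
  exact hd0 <| MalcevNeumann.eq_zero_of_mem_derRel hα hc hd fun y hy a ha =>
    MalcevNeumann.support_subset_of_mem_translates inf_le_right hproj hy ha.1

theorem Inert.iInf {X : Type*} [Finite X] {ι : Type*} [Countable ι] {A : ι → Subgroup (FreeGroup X)}
    (hA : ∀ i, Inert (A i)) : Inert (⨅ i, A i) := by
  rcases isEmpty_or_nonempty ι with hι | hι
  · rw [iInf_of_empty]
    exact Inert.top
  obtain ⟨s, hs⟩ := exists_surjective_nat ι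
  intro H m hH
  let B : ℕ → Subgroup (FreeGroup X) := fun i => H ⊓ (Finset.range i).inf (A ∘ s)
  have hB : Antitone B := fun i j hij => inf_le_inf_left _ (Finset.inf_mono (by simpa using hij))
  have hrank : ∀ i, ∃ j ≤ m, HasFreeRank (B i) j := fun i => by
    induction i with
    | zero => exact ⟨m, le_rfl, by simpa [B] using hH⟩
    | succ i ih =>
      obtain ⟨j, hj, hBj⟩ := ih
      obtain ⟨j', hj', hBj'⟩ := hA (s i) (B i) j hBj
      have hsucc : B (i + 1) = B i ⊓ A (s i) := by
        simp only [B, Finset.range_add_one, Finset.inf_insert, comp_apply, inf_comm (A (s i)),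
          inf_assoc]
      exact ⟨j', hj'.trans hj, hsucc ▸ hBj'⟩
  have hinf : ⨅ i, B i = H ⊓ ⨅ i, A i := by
    rw [← inf_iInf, ← hs.iInf_comp]
    refine congrArg _ (le_antisymm (le_iInf fun i => ?_) (le_iInf fun i => ?_))
    · exact (iInf_le _ (i + 1)).trans (Finset.inf_le (Finset.self_mem_range_succ i))
    · exact Finset.le_inf fun l _ => iInf_le _ l
  exact hinf ▸ hasFreeRank_iInf_of_antitone hB hrank

theorem rank_inter_fix_le_general {n : ℕ} {ι : Type*}
    (S : ι → (FreeGroup (Fin n) →* FreeGroup (Fin n))) (H : Subgroup (FreeGroup (Fin n)))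
    (m : ℕ) (hH : HasFreeRank H m) :
    ∃ j ≤ m, HasFreeRank (H ⊓ fixedSubgroup S) j := by
  have : Countable (FreeGroup (Fin n)) := FreeGroup.toWord_injective.countable
  have : Countable (FreeGroup (Fin n) →* FreeGroup (Fin n)) :=
    FreeGroup.lift.symm.injective.countable
  have hfix : fixedSubgroup S = ⨅ φ : Set.range S, φ.1.eqLocus (MonoidHom.id _) := by
    ext g
    rw [Subgroup.mem_iInf, Set.forall_subtype_range_iff]
    rfl
  exact hfix ▸ Inert.iInf (fun φ : Set.range S => inert_fixed φ.1) H m hH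

theorem rank_inter_fix_le {n : ℕ} (hn : 2 ≤ n) {ι : Type*}
    (S : ι → (FreeGroup (Fin n) →* FreeGroup (Fin n)))
    (H : Subgroup (FreeGroup (Fin n)))
    (m : ℕ) (hm : m ≤ 3) (hH : HasFreeRank H m) :
    ∃ j ≤ m, HasFreeRank (H ⊓ fixedSubgroup S) j :=
  rank_inter_fix_le_general S H m hH
end

section
/- Let R be a retract of F_n and H a finitely generated subgroup of F_n that is closed in the pro-p topology of F_n for some prime p. Then either H ≤ R, or rk(H ∩ R) < rk(H). -/
/-- The closure of a subgroup `H` in the pro-`p` topology: the intersection of all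
subgroups `H ⊔ N` (= `HN`) over normal subgroups `N` of `p`-power index. -/
def proPClosure {G : Type*} [Group G] (p : ℕ) (H : Subgroup G) : Subgroup G :=
  ⨅ N ∈ {N : Subgroup G | N.Normal ∧ ∃ k : ℕ, N.index = p ^ k}, H ⊔ N

/-!
Write `F` for the ambient free group. The theorem comes from comparing homomorphisms to `ℤ/p` on `H`
and on `H ∩ R`. As `H` is closed, a homomorphism `φ : H ∩ R → ℤ/p` can be matched, on any finite
set, by a homomorphism from `R` to a permutational wreath product of `ℤ/p` with a `p`-quotient of
`F`: induce `φ` up to `R` and replace the cosets of `H ∩ R` by their images in the `p`-quotient,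
which stay distinct for the finitely many cosets involved. The wreath product is a finite `p`-group,
hence nilpotent, and homomorphisms to it extend from the retract `R` to `F` one central extension at
a time. So restriction `Hom(H, ℤ/p) → Hom(H ∩ R, ℤ/p)` has dense image, and counting gives
`rk (H ∩ R) ≤ rk H`. If the ranks agree, restriction is injective, so by the Burnside basis theorem
homomorphisms from `H` to a finite `p`-group are determined by their values on `H ∩ R`. In
particular the retraction onto `R` and the identity agree on `H` in every `p`-quotient of `F`, hence
in `F`, which is residually `p`.
-/

open Filter QuotientGroup

section ProP

variable {p : ℕ} {G : Type*} [Group G]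

/-- `N` is one of the basic neighbourhoods of the identity in the pro-`p` topology of `G`: a normal
subgroup of index a power of `p`. A class, so that `G ⧸ N` is a group as soon as one is at hand. -/
class IsProPBasic (p : ℕ) {G : Type*} [Group G] (N : Subgroup G) : Prop extends N.Normal where
  exists_index_eq_pow : ∃ k : ℕ, N.index = p ^ k

theorem mem_proPClosure {H : Subgroup G} {g : G} :
    g ∈ proPClosure p H ↔ ∀ N : Subgroup G, IsProPBasic p N → g ∈ H ⊔ N := by
  simp only [proPClosure, Subgroup.mem_iInf, Set.mem_ofPred_eq]
  exact forall_congr' fun N => ⟨fun h hN => h ⟨hN.toNormal, hN.exists_index_eq_pow⟩,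
    fun h hN => h { toNormal := hN.1, exists_index_eq_pow := hN.2 }⟩

theorem mem_proPClosure_bot {g : G} :
    g ∈ proPClosure p ⊥ ↔ ∀ N : Subgroup G, IsProPBasic p N → g ∈ N := by
  simp only [mem_proPClosure, bot_sup_eq]

theorem le_proPClosure (p : ℕ) (H : Subgroup G) : H ≤ proPClosure p H :=
  fun _ hg => mem_proPClosure.2 fun _ _ => Subgroup.mem_sup_left hg

theorem proPClosure_proPClosure (H : Subgroup G) :
    proPClosure p (proPClosure p H) = proPClosure p H := by
  refine le_antisymm (fun g hg => mem_proPClosure.2 fun N hN => ?_) (le_proPClosure p _)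
  have hle : proPClosure p H ≤ H ⊔ N := fun x hx => mem_proPClosure.1 hx N hN
  exact sup_le hle le_sup_right (mem_proPClosure.1 hg N hN)

theorem isProPBasic_ker [Fact p.Prime] {P : Type*} [Group P] [Finite P]
    (hP : IsPGroup p P) (f : G →* P) : IsProPBasic p f.ker where
  exists_index_eq_pow := by
    rw [Subgroup.index_ker]
    exact IsPGroup.iff_card.1 (hP.to_subgroup _)

namespace IsProPBasic

instance top : IsProPBasic p (⊤ : Subgroup G) where
  exists_index_eq_pow := ⟨0, by simp⟩

theorem isPGroup_quotient (N : Subgroup G) [hN : IsProPBasic p N] : IsPGroup p (G ⧸ N) :=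
  let ⟨_, hk⟩ := hN.exists_index_eq_pow
  IsPGroup.of_card (N.index_eq_card.symm.trans hk)

theorem finite_quotient [NeZero p] (N : Subgroup G) [hN : IsProPBasic p N] : Finite (G ⧸ N) := by
  obtain ⟨k, hk⟩ := hN.exists_index_eq_pow
  refine Nat.finite_of_card_ne_zero ?_
  rw [← Subgroup.index_eq_card, hk]
  exact pow_ne_zero k (NeZero.ne p)

instance inf [Fact p.Prime] (N M : Subgroup G) [hN : IsProPBasic p N] [hM : IsProPBasic p M] :
    IsProPBasic p (N ⊓ M) where
  exists_index_eq_pow := by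
    obtain ⟨k, hk⟩ := hN.exists_index_eq_pow
    obtain ⟨l, hl⟩ := hM.exists_index_eq_pow
    have hdvd : (N ⊓ M).index ∣ p ^ (k + l) := by
      rw [← Subgroup.relIndex_mul_index (inf_le_right : N ⊓ M ≤ M), Subgroup.inf_relIndex_right,
        pow_add, ← hk, ← hl]
      exact mul_dvd_mul (Subgroup.relIndex_dvd_index_of_normal N M) dvd_rfl
    obtain ⟨j, -, hj⟩ := (Nat.dvd_prime_pow Fact.out).1 hdvd
    exact ⟨j, hj⟩

end IsProPBasic

theorem exists_isProPBasic_forall_notMem_sup [Fact p.Prime] {H : Subgroup G} (T : Finset G)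
    (hT : ∀ g ∈ T, g ∉ proPClosure p H) :
    ∃ N : Subgroup G, IsProPBasic p N ∧ ∀ g ∈ T, g ∉ H ⊔ N := by
  classical
  induction T using Finset.induction_on with
  | empty => exact ⟨⊤, inferInstance, by simp⟩
  | insert g T _ ih =>
    obtain ⟨N, hN, hNT⟩ := ih fun x hx => hT x (Finset.mem_insert_of_mem hx)
    obtain ⟨M, hM, hgM⟩ : ∃ M : Subgroup G, IsProPBasic p M ∧ g ∉ H ⊔ M := by
      simpa [mem_proPClosure] using hT g (Finset.mem_insert_self g T)
    refine ⟨N ⊓ M, inferInstance, fun x hx => ?_⟩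
    rcases Finset.mem_insert.1 hx with rfl | hx
    · exact fun h => hgM (sup_le_sup_left inf_le_right H h)
    · exact fun h => hNT x hx (sup_le_sup_left inf_le_left H h)

end ProP

section CosetMap

variable {Γ P : Type*} [Group Γ] [Group P] {K : Subgroup Γ} {L : Subgroup P}

/-- The map of coset spaces `Γ ⧸ K → P ⧸ L` induced by a homomorphism `π : Γ →* P` with
`π K ≤ L`; neither subgroup has to be normal. -/
def cosetMap (π : Γ →* P) (h : K ≤ L.comap π) : Γ ⧸ K → P ⧸ L :=
  Quotient.map' π fun x y hxy => by
    rw [leftRel_apply] at hxy ⊢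
    simpa using h hxy

theorem cosetMap_mk (π : Γ →* P) (h : K ≤ L.comap π) (g : Γ) :
    cosetMap π h (g : Γ ⧸ K) = (π g : P ⧸ L) :=
  rfl

theorem cosetMap_smul (π : Γ →* P) (h : K ≤ L.comap π) (g : Γ) (t : Γ ⧸ K) :
    cosetMap π h (g • t) = π g • cosetMap π h t := by
  induction t using QuotientGroup.induction_on with
  | H t => exact congrArg ((↑) : P → P ⧸ L) (map_mul π g t)

theorem exists_injOn_cosetMap {p : ℕ} [Fact p.Prime] {G : Type*} [Group G] {H : Subgroup G}
    (hH : proPClosure p H = H) (ι : Γ →* G) (T : Finset (Γ ⧸ H.comap ι)) :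
    ∃ (N : Subgroup G) (_ : IsProPBasic p N)
      (h : H.comap ι ≤ (H.map (mk' N)).comap ((mk' N).comp ι)),
      Set.InjOn (cosetMap ((mk' N).comp ι) h) T := by
  classical
  obtain ⟨N, hN, hsep⟩ := exists_isProPBasic_forall_notMem_sup (p := p) (H := H)
    (((T ×ˢ T).image fun x => ι (x.1.out⁻¹ * x.2.out)).filter (· ∉ H)) (by simp [hH])
  have hle : H.comap ι ≤ (H.map (mk' N)).comap ((mk' N).comp ι) := fun _ hx =>
    Subgroup.mem_map_of_mem _ hx
  refine ⟨N, hN, hle, fun s hs t ht hst => ?_⟩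
  rw [← out_eq' s, ← out_eq' t, cosetMap_mk, cosetMap_mk, QuotientGroup.eq, ← map_inv, ← map_mul,
    MonoidHom.comp_apply, ← Subgroup.mem_comap, Subgroup.comap_map_eq, ker_mk'] at hst
  by_contra hne
  have hnotMem : ι (s.out⁻¹ * t.out) ∉ H := fun h => hne <| by
    rw [← out_eq' s, ← out_eq' t]
    exact QuotientGroup.eq.2 h
  refine hsep _ (Finset.mem_filter.2 ⟨?_, hnotMem⟩) hst
  exact Finset.mem_image.2 ⟨(s, t), Finset.mem_product.2 ⟨hs, ht⟩, rfl⟩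

end CosetMap

section PermWreath

/-- The unrestricted permutational wreath product of `A` with a group `P` acting on `X`. -/
abbrev PermWreath (A P X : Type*) [Group A] [Group P] [MulAction P X] : Type _ :=
  (X → A) ⋊[mulAutArrow] P

namespace PermWreath

variable {A P X : Type*} [Group A] [Group P] [MulAction P X]

theorem mul_left_apply (v w : PermWreath A P X) (x : X) :
    (v * w).left x = v.left x * w.left (v.right⁻¹ • x) :=
  rfl

theorem inv_left_apply (w : PermWreath A P X) (x : X) :
    w⁻¹.left x = (w.left (w.right • x))⁻¹ := by
  change (w.left (w.right⁻¹⁻¹ • x))⁻¹ = _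
  rw [inv_inv]

instance [Finite A] [Finite P] [Finite X] : Finite (PermWreath A P X) :=
  Finite.of_equiv _ SemidirectProduct.equivProd.symm

theorem isPGroup {p : ℕ} [Fact p.Prime] [Finite A] [Finite P] [Finite X] (hA : IsPGroup p A)
    (hP : IsPGroup p P) : IsPGroup p (PermWreath A P X) := by
  obtain ⟨k, hk⟩ := IsPGroup.iff_card.1 hA
  obtain ⟨l, hl⟩ := IsPGroup.iff_card.1 hP
  refine IsPGroup.of_card (n := k * Nat.card X + l) ?_
  rw [SemidirectProduct.card, Nat.card_fun, hk, hl, pow_add, pow_mul]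

/-- Evaluation at a point `x`, which is a homomorphism to `A` on the elements fixing `x`. -/
def stabilizerEval (x : X) :
    (MulAction.stabilizer P x).comap (SemidirectProduct.rightHom : PermWreath A P X →* P) →* A where
  toFun w := w.1.left x
  map_one' := rfl
  map_mul' v w := by
    have hv : v.1.right⁻¹ • x = x := inv_smul_eq_iff.2 (MulAction.mem_stabilizer_iff.1 v.2).symm
    rw [Subgroup.coe_mul, mul_left_apply, hv]

end PermWreath

/-- The Kaloujnine–Krasner embedding; for abelian `A` this is Shapiro's lemma in degree one. -/
theorem exists_permWreath_hom_left_eq {G A : Type*} [Group G] [Group A] (K : Subgroup G)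
    (φ : K →* A) :
    ∃ Φ : G →* PermWreath A G (G ⧸ K), (∀ g, (Φ g).right = g) ∧
      ∀ k : K, (Φ k).left ((1 : G) : G ⧸ K) = φ k := by
  classical
  let s : G ⧸ K → G := Function.update Quotient.out ((1 : G) : G ⧸ K) 1
  have hs_one : s ((1 : G) : G ⧸ K) = 1 := Function.update_self ..
  have hs (x : G ⧸ K) : (s x : G ⧸ K) = x := by
    rcases eq_or_ne x ((1 : G) : G ⧸ K) with rfl | hx
    · rw [hs_one]
    · simp [s, hx]
  have hmem (g : G) (x : G ⧸ K) : (s x)⁻¹ * g * s (g⁻¹ • x) ∈ K := by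
    rw [mul_assoc, ← QuotientGroup.eq, ← smul_eq_mul, ← MulAction.Quotient.smul_mk, hs, hs,
      smul_inv_smul]
  refine ⟨MonoidHom.mk' (fun g => ⟨fun x => φ ⟨_, hmem g x⟩, g⟩) fun g h => ?_, fun _ => rfl,
    fun k => ?_⟩
  · refine SemidirectProduct.ext (funext fun x => ?_) rfl
    rw [PermWreath.mul_left_apply, ← map_mul]
    refine congrArg φ (Subtype.ext ?_)
    simp [mul_smul, mul_assoc]
  · have hk : (k : G)⁻¹ • ((1 : G) : G ⧸ K) = ((1 : G) : G ⧸ K) := by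
      rw [MulAction.Quotient.smul_mk, QuotientGroup.eq]
      simp
    refine congrArg φ (Subtype.ext ?_)
    simp [hk, hs_one]

/-- Computing `(Φ g).left y` for a word `g` in `S` only visits finitely many points of `Y`, so maps
`f i` that eventually separate any given points of `Y` eventually see the same value. -/
theorem eventually_left_apply_eq {G A Q Y I : Type*} [Group G] [Group A] [Group Q] [MulAction Q Y]
    {l : Filter I} {P X : I → Type*} [∀ i, Group (P i)] [∀ i, MulAction (P i) (X i)]
    {Φ : G →* PermWreath A Q Y} {σ : ∀ i, G →* PermWreath A (P i) (X i)} {f : ∀ i, Y → X i}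
    (hf : ∀ i g y, f i ((Φ g).right • y) = (σ i g).right • f i y) {S : Set G}
    (hS : Subgroup.closure S = ⊤)
    (hσ : ∀ g ∈ S, ∀ y, ∀ᶠ i in l, (σ i g).left (f i y) = (Φ g).left y) (g : G) :
    ∀ y, ∀ᶠ i in l, (σ i g).left (f i y) = (Φ g).left y := by
  have hg : g ∈ Subgroup.closure S := hS ▸ Subgroup.mem_top g
  induction hg using Subgroup.closure_induction with
  | mem g hg => exact hσ g hg
  | one => exact fun y => by simp
  | inv g _ ih =>
    intro y
    filter_upwards [ih ((Φ g).right • y)] with i hi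
    rw [map_inv, map_inv, PermWreath.inv_left_apply, PermWreath.inv_left_apply, ← hf, hi]
  | mul g h _ _ ihg ihh =>
    intro y
    filter_upwards [ihg y, ihh ((Φ g).right⁻¹ • y)] with i hgi hhi
    have hfi : f i ((Φ g).right⁻¹ • y) = (σ i g).right⁻¹ • f i y := by
      simpa only [map_inv, SemidirectProduct.inv_right] using hf i g⁻¹ y
    rw [map_mul, map_mul, PermWreath.mul_left_apply, PermWreath.mul_left_apply, hgi, ← hfi, hhi]

theorem closure_range_isFreeGroup_of (Γ : Type*) [Group Γ] [IsFreeGroup Γ] :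
    Subgroup.closure (Set.range (IsFreeGroup.of : IsFreeGroup.Generators Γ → Γ)) = ⊤ := by
  let e : FreeGroup (IsFreeGroup.Generators Γ) ≃* Γ := IsFreeGroup.mulEquiv Γ
  have hrange : Set.range (IsFreeGroup.of : IsFreeGroup.Generators Γ → Γ) =
      e.toMonoidHom '' Set.range FreeGroup.of := Set.range_comp e FreeGroup.of
  rw [hrange, ← MonoidHom.map_closure, FreeGroup.closure_range_of]
  exact Subgroup.map_top_of_surjective _ e.surjective

theorem exists_permWreath_hom_of_proPClosure_eq {p : ℕ} [Fact p.Prime] {Γ G A : Type*} [Group Γ]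
    [IsFreeGroup Γ] [Group G] [Group A] {H : Subgroup G} (hH : proPClosure p H = H) (ι : Γ →* G)
    (φ : H.comap ι →* A) (S : Finset (H.comap ι)) :
    ∃ (N : Subgroup G) (_ : IsProPBasic p N)
      (σ : Γ →* PermWreath A (G ⧸ N) ((G ⧸ N) ⧸ H.map (mk' N))),
      (∀ x, (σ x).right = mk' N (ι x)) ∧
      ∀ v ∈ S, (σ v).left ((1 : G ⧸ N) : (G ⧸ N) ⧸ H.map (mk' N)) = φ v := by
  obtain ⟨Φ, hΦ, hΦφ⟩ := exists_permWreath_hom_left_eq (H.comap ι) φ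
  choose N hN hle hinj using exists_injOn_cosetMap hH ι
  let f (T : Finset (Γ ⧸ H.comap ι)) : Γ ⧸ H.comap ι → (G ⧸ N T) ⧸ H.map (mk' (N T)) :=
    cosetMap ((mk' (N T)).comp ι) (hle T)
  let σ (T : Finset (Γ ⧸ H.comap ι)) :
      Γ →* PermWreath A (G ⧸ N T) ((G ⧸ N T) ⧸ H.map (mk' (N T))) :=
    IsFreeGroup.lift fun b =>
      ⟨fun x => (Φ (IsFreeGroup.of b)).left (Function.invFunOn (f T) T x),
        mk' (N T) (ι (IsFreeGroup.of b))⟩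
  have hσ (T) (g : Γ) : (σ T g).right = mk' (N T) (ι g) := by
    have h : SemidirectProduct.rightHom.comp (σ T) = (mk' (N T)).comp ι :=
      IsFreeGroup.ext_hom fun b => by simp [σ]
    exact DFunLike.congr_fun h g
  have hlim : ∀ g y, ∀ᶠ T in atTop, (σ T g).left (f T y) = (Φ g).left y := by
    refine eventually_left_apply_eq (fun T g y => ?_) (closure_range_isFreeGroup_of Γ) ?_
    · rw [hΦ, hσ]
      exact cosetMap_smul _ _ g y
    · rintro _ ⟨b, rfl⟩ y
      filter_upwards [eventually_ge_atTop {y}] with T hT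
      have hy : Function.invFunOn (f T) T (f T y) = y :=
        (hinj T).leftInvOn_invFunOn (Finset.singleton_subset_iff.1 hT)
      simp [σ, hy]
  obtain ⟨T, hT⟩ :=
    ((eventually_all_finset S).2 fun v _ => hlim v ((1 : Γ) : Γ ⧸ H.comap ι)).exists
  refine ⟨N T, hN T, σ T, hσ T, fun v hv => ?_⟩
  rw [← hΦφ, ← hT v hv]
  exact congrArg (σ T v).left (congrArg _ (map_one ((mk' (N T)).comp ι)).symm)

end PermWreath

theorem proPClosure_bot_eq_bot {p : ℕ} [Fact p.Prime] {F : Type*} [Group F] [IsFreeGroup F] :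
    proPClosure p (⊥ : Subgroup F) = ⊥ := by
  set Z : Subgroup F := proPClosure p ⊥
  let K : Subgroup F := Z.comap (MonoidHom.id F)
  rcases isEmpty_or_nonempty (IsFreeGroup.Generators K) with hK | ⟨⟨b⟩⟩
  · have : Subsingleton K := (IsFreeGroup.toFreeGroup K).toEquiv.subsingleton
    exact K.eq_bot_of_subsingleton
  -- Since `Z` is closed, a `p`-quotient of `F` sees the value of `φ` at the basis element `b`; but
  -- elements of `Z` die in every `p`-quotient.
  let φ : K →* Multiplicative (ZMod p) := IsFreeGroup.lift fun _ => Multiplicative.ofAdd 1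
  obtain ⟨N, hN, σ, -, hσ⟩ := exists_permWreath_hom_of_proPClosure_eq
    (proPClosure_proPClosure ⊥) (MonoidHom.id F) φ {IsFreeGroup.of b}
  have := IsProPBasic.finite_quotient (p := p) N
  have hker : IsProPBasic p σ.ker := isProPBasic_ker
    (PermWreath.isPGroup ZModModule.isPGroup_multiplicative (IsProPBasic.isPGroup_quotient N)) σ
  have hb : σ (IsFreeGroup.of b : K) = 1 := mem_proPClosure_bot.1 (IsFreeGroup.of b : K).2 _ hker
  have hφ : φ (IsFreeGroup.of b) = 1 := by
    rw [← hσ _ (Finset.mem_singleton_self _), hb]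
    rfl
  rw [IsFreeGroup.lift_of] at hφ
  exact absurd (Multiplicative.ofAdd.injective hφ) one_ne_zero

section Retract

theorem IsRetract.exists_retraction {G : Type*} [Group G] {R : Subgroup G} (hR : IsRetract R) :
    ∃ ρ : G →* R, ∀ x : R, ρ x = x := by
  obtain ⟨r, hr, hid⟩ := hR
  exact ⟨r.codRestrict R fun x => hr ▸ ⟨x, rfl⟩, fun x => Subtype.ext (hid x x.2)⟩

variable {F : Type*} [Group F] [IsFreeGroup F] {R : Subgroup F} {ρ : F →* R}

theorem exists_extension_of_ker_le_center (hρ : ∀ x : R, ρ x = x) {G G' : Type*} [Group G]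
    [Group G'] {e : G →* G'} (he : e.ker ≤ Subgroup.center G) {τ' : F →* G'}
    (hτ' : τ'.range ≤ e.range) {σ : R →* G} (hσ : ∀ x : R, e (σ x) = τ' x) :
    ∃ τ : F →* G, (∀ x, e (τ x) = τ' x) ∧ ∀ x : R, τ x = σ x := by
  choose s hs using fun b => hτ' ⟨IsFreeGroup.of b, rfl⟩
  -- On `R` a lift `τ₀` differs from `σ` by a central homomorphism `δ`; `ρ` carries `δ` over to `F`.
  let τ₀ : F →* G := IsFreeGroup.lift s
  have hτ₀ (x : F) : e (τ₀ x) = τ' x := by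
    have h : e.comp τ₀ = τ' := IsFreeGroup.ext_hom fun b => by simp [τ₀, hs]
    exact DFunLike.congr_fun h x
  have hker (x : R) : e (σ x * (τ₀ x)⁻¹) = 1 := by simp [hσ, hτ₀]
  have hcomm (x : R) (g : G) : Commute (σ x * (τ₀ x)⁻¹) g :=
    (Subgroup.mem_center_iff.1 (he (hker x)) g).symm
  let δ : R →* G := MonoidHom.mk' (fun x => σ x * (τ₀ x)⁻¹) fun x y => by
    calc σ (x * y) * (τ₀ (x * y : R))⁻¹
        = σ x * (σ y * (τ₀ y)⁻¹ * (τ₀ x)⁻¹) := by simp [mul_assoc]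
      _ = σ x * ((τ₀ x)⁻¹ * (σ y * (τ₀ y)⁻¹)) := by rw [(hcomm y _).eq]
      _ = σ x * (τ₀ x)⁻¹ * (σ y * (τ₀ y)⁻¹) := by simp [mul_assoc]
  let τ : F →* G := (δ.noncommCoprod τ₀ fun x g => hcomm x (τ₀ g)).comp (ρ.prod (MonoidHom.id F))
  have hτ (x : F) : τ x = σ (ρ x) * (τ₀ (ρ x))⁻¹ * τ₀ x := rfl
  exact ⟨τ, fun x => by rw [hτ, map_mul, hker, hτ₀, one_mul], fun x => by simp [hτ, hρ]⟩

theorem exists_extension_of_isNilpotent (hρ : ∀ x : R, ρ x = x) {G P : Type*} [Group G] [Group P]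
    [Group.IsNilpotent G] {q : G →* P} (hq : Function.Surjective q) {π : F →* P} {σ : R →* G}
    (hσ : ∀ x : R, q (σ x) = π x) :
    ∃ τ : F →* G, (∀ x, q (τ x) = π x) ∧ ∀ x : R, τ x = σ x := by
  induction hc : Group.nilpotencyClass G generalizing G P with
  | zero =>
    have : Subsingleton G := Group.nilpotencyClass_zero_iff_subsingleton.1 hc
    have : Subsingleton P := hq.subsingleton
    exact ⟨1, fun x => Subsingleton.elim _ _, fun x => Subsingleton.elim _ _⟩
  | succ c ih =>
    let Z : Subgroup G := Subgroup.center G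
    have hZ : (Z.map q).Normal := Subgroup.Normal.map inferInstance q hq
    let q' : G ⧸ Z →* P ⧸ Z.map q := QuotientGroup.map Z (Z.map q) q (Subgroup.le_comap_map q Z)
    have hq' : Function.Surjective q' :=
      map_surjective_of_surjective Z (Z.map q) q ((mk'_surjective _).comp hq) _
    obtain ⟨τ', hτ', hτ'σ⟩ := ih hq' (π := (mk' (Z.map q)).comp π) (σ := (mk' Z).comp σ)
      (fun x => congrArg (mk' (Z.map q)) (hσ x))
      (by simp [Group.nilpotencyClass_quotient_center, hc, Z])
    have hrange : (τ'.prod π).range ≤ ((mk' Z).prod q).range := by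
      rintro _ ⟨x, rfl⟩
      obtain ⟨g, hg⟩ := mk'_surjective Z (τ' x)
      have hgx : (q g : P ⧸ Z.map q) = π x := (congrArg q' hg).trans (hτ' x)
      obtain ⟨z, hz, hqz⟩ := QuotientGroup.eq.1 hgx
      refine ⟨g * z, Prod.ext ?_ ?_⟩
      · simpa [← hg] using hz
      · simp [hqz]
    obtain ⟨τ, hτ, hτσ⟩ := exists_extension_of_ker_le_center hρ
      (e := (mk' Z).prod q) (by simp [MonoidHom.ker_prod, Z]) hrange (σ := σ)
      fun x => Prod.ext (hτ'σ x).symm (hσ x)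
    exact ⟨τ, fun x => congrArg Prod.snd (hτ x), hτσ⟩

end Retract

section DenseRestriction

/-- Restriction `Hom(H, A) → Hom(K, A)` along `j : K →* H` has dense image for the topology of
pointwise convergence. -/
def HasDenseRestriction {K H : Type*} [Group K] [Group H] (j : K →* H) (A : Type*) [Group A] :
    Prop :=
  ∀ (φ : K →* A) (S : Finset K), ∃ ψ : H →* A, ∀ v ∈ S, ψ (j v) = φ v

theorem IsRetract.hasDenseRestriction {p : ℕ} [Fact p.Prime] {F A : Type*} [Group F]
    [IsFreeGroup F] [Group A] [Finite A] {R H : Subgroup F} (hR : IsRetract R)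
    (hH : proPClosure p H = H) (hA : IsPGroup p A) :
    HasDenseRestriction (R.subtype.subgroupComap H) A := by
  intro φ S
  obtain ⟨ρ, hρ⟩ := hR.exists_retraction
  obtain ⟨N, hN, σ, hσN, hσφ⟩ := exists_permWreath_hom_of_proPClosure_eq hH R.subtype φ S
  have := IsProPBasic.finite_quotient (p := p) N
  have := (PermWreath.isPGroup (X := (F ⧸ N) ⧸ H.map (mk' N)) hA
    (IsProPBasic.isPGroup_quotient N)).isNilpotent
  obtain ⟨τ, hτN, hτσ⟩ := exists_extension_of_isNilpotent hρ
    SemidirectProduct.rightHom_surjective (π := mk' N) hσN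
  let x₀ : (F ⧸ N) ⧸ H.map (mk' N) := (1 : F ⧸ N)
  have hfix (h : H) :
      τ h ∈ (MulAction.stabilizer (F ⧸ N) x₀).comap SemidirectProduct.rightHom := by
    rw [Subgroup.mem_comap, hτN, MulAction.mem_stabilizer_iff, MulAction.Quotient.smul_mk,
      QuotientGroup.eq]
    simpa using Subgroup.mem_map_of_mem (mk' N) h.2
  refine ⟨(PermWreath.stabilizerEval x₀).comp ((τ.comp H.subtype).codRestrict _ hfix),
    fun v hv => ?_⟩
  rw [← hσφ v hv, ← hτσ]
  rfl

section Counting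

variable {ι H A : Type*} [Group H] [Group A] {θ : FreeGroup ι →* H}

theorem injective_monoidHom_eval (hθ : Function.Surjective θ) :
    Function.Injective fun (ψ : H →* A) (i : ι) => ψ (θ (.of i)) := fun _ _ h =>
  (MonoidHom.cancel_right hθ).1 (FreeGroup.ext_hom _ _ (congrFun h))

variable [Finite ι] [Finite A]

theorem finite_monoidHom_of_surjective (hθ : Function.Surjective θ) : Finite (H →* A) :=
  Finite.of_injective _ (injective_monoidHom_eval hθ)

theorem card_monoidHom_le_of_surjective (hθ : Function.Surjective θ) :
    Nat.card (H →* A) ≤ Nat.card A ^ Nat.card ι :=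
  (Nat.card_le_card_of_injective _ (injective_monoidHom_eval hθ)).trans_eq Nat.card_fun

end Counting

namespace HasDenseRestriction

variable {K H A : Type*} [Group K] [IsFreeGroup K] [Group H] [Group A] {j : K →* H}

theorem surjective_eval (hj : HasDenseRestriction j A) (s : Finset (IsFreeGroup.Generators K)) :
    Function.Surjective fun (ψ : H →* A) (b : s) => ψ (j (IsFreeGroup.of b.1)) := by
  classical
  intro a
  obtain ⟨ψ, hψ⟩ := hj (IsFreeGroup.lift fun b => if hb : b ∈ s then a ⟨b, hb⟩ else 1)
    (s.image IsFreeGroup.of)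
  refine ⟨ψ, funext fun b => ?_⟩
  simp [hψ _ (Finset.mem_image_of_mem _ b.2)]

variable [Finite A] [Nontrivial A] {m : ℕ} {θ : FreeGroup (Fin m) →* H}

theorem card_le (hj : HasDenseRestriction j A) (hθ : Function.Surjective θ)
    (s : Finset (IsFreeGroup.Generators K)) : s.card ≤ m := by
  have := finite_monoidHom_of_surjective (A := A) hθ
  refine (Nat.pow_le_pow_iff_right (Finite.one_lt_card (α := A))).1 ?_
  calc Nat.card A ^ s.card = Nat.card (s → A) := by simp [Nat.card_fun]
    _ ≤ Nat.card (H →* A) := Nat.card_le_card_of_surjective _ (hj.surjective_eval s)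
    _ ≤ Nat.card A ^ m := by simpa using card_monoidHom_le_of_surjective (A := A) hθ

theorem exists_lt_mulEquiv_or_injective (hj : HasDenseRestriction j A)
    (hθ : Function.Surjective θ) :
    (∃ k < m, Nonempty (FreeGroup (Fin k) ≃* K)) ∨
      Function.Injective fun ψ : H →* A => ψ.comp j := by
  have hfin : Finite (IsFreeGroup.Generators K) := Cardinal.lt_aleph0_iff_finite.1 <|
    (Cardinal.card_le_of (hj.card_le hθ)).trans_lt Cardinal.natCast_lt_aleph0
  have := Fintype.ofFinite (IsFreeGroup.Generators K)
  rcases (hj.card_le hθ Finset.univ).lt_or_eq with hlt | heq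
  · exact .inl ⟨_, hlt, ⟨(FreeGroup.freeGroupCongr (Fintype.equivFin _).symm).trans
      (IsFreeGroup.mulEquiv K)⟩⟩
  · have := finite_monoidHom_of_surjective (A := A) hθ
    have hcard : Nat.card (H →* A) ≤
        Nat.card (↥(Finset.univ : Finset (IsFreeGroup.Generators K)) → A) := by
      simpa only [Nat.card_fun, Nat.card_eq_fintype_card, Fintype.card_coe, heq, Fintype.card_fin]
        using card_monoidHom_le_of_surjective (A := A) hθ
    have hbij := (hj.surjective_eval Finset.univ).bijective_of_nat_card_le hcard
    exact .inr fun ψ ψ' h => hbij.1 (funext fun b => DFunLike.congr_fun h (IsFreeGroup.of b.1))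

end HasDenseRestriction
end DenseRestriction

section PGroup

variable {p : ℕ} [Fact p.Prime]

theorem exists_monoidHom_zmod_ne_one_of_ne_top {G : Type*} [Group G] [Finite G]
    (hG : IsPGroup p G) {L : Subgroup G} (hL : L ≠ ⊤) :
    ∃ χ : G →* Multiplicative (ZMod p), χ ≠ 1 ∧ L ≤ χ.ker := by
  have hp : p.Prime := Fact.out
  obtain ⟨k, hk⟩ := IsPGroup.iff_card.1 hG
  obtain ⟨l, hl⟩ := IsPGroup.iff_card.1 (hG.to_subgroup L)
  have hlk : l < k := by
    rw [← Nat.pow_lt_pow_iff_right hp.one_lt, ← hk, ← hl]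
    exact lt_of_le_of_ne L.card_le_card_group (mt L.eq_top_of_card_eq hL)
  obtain ⟨k, rfl⟩ : ∃ k', k = k' + 1 := ⟨k - 1, by lia⟩
  obtain ⟨M, hM, hLM⟩ := Sylow.exists_subgroup_card_pow_prime_le p
    (hk ▸ pow_dvd_pow p k.le_succ) L hl (Nat.lt_succ_iff.1 hlk)
  have hindex : M.index = p := by
    have h := M.card_mul_index
    rw [hM, hk, pow_succ] at h
    exact Nat.eq_of_mul_eq_mul_left (pow_pos hp.pos k) h
  have hMn : M.Normal := Subgroup.normal_of_index_eq_minFac_card (by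
    rw [hindex, hk, hp.pow_minFac k.succ_ne_zero])
  let e : G ⧸ M ≃* Multiplicative (ZMod p) := mulEquivOfPrimeCardEq hindex (by simp)
  have hker : (e.toMonoidHom.comp (mk' M)).ker = M := by
    ext g
    simp
  refine ⟨e.toMonoidHom.comp (mk' M), fun h => ?_, hker.symm ▸ hLM⟩
  rw [h, MonoidHom.ker_one] at hker
  rw [← hker, Subgroup.index_top] at hindex
  exact hp.one_lt.ne hindex

theorem surjective_of_injective_comp_zmod {K G : Type*} [Group K] [Group G] [Finite G]
    (hG : IsPGroup p G) {f : K →* G}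
    (hf : Function.Injective fun χ : G →* Multiplicative (ZMod p) => χ.comp f) :
    Function.Surjective f := by
  rw [← MonoidHom.range_eq_top]
  by_contra hne
  obtain ⟨χ, hχ, hle⟩ := exists_monoidHom_zmod_ne_one_of_ne_top hG hne
  exact hχ (hf (MonoidHom.ext fun x => hle ⟨x, rfl⟩))

theorem eq_of_comp_eq_of_injective_comp_zmod {K H P : Type*} [Group K] [Group H] [Group P]
    [Finite P] (hP : IsPGroup p P) {j : K →* H}
    (hj : Function.Injective fun ψ : H →* Multiplicative (ZMod p) => ψ.comp j) {f g : H →* P}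
    (hfg : f.comp j = g.comp j) : f = g := by
  let d : H →* (f.prod g).range := (f.prod g).rangeRestrict
  have hPP : IsPGroup p (P × P) := by
    obtain ⟨k, hk⟩ := IsPGroup.iff_card.1 hP
    exact IsPGroup.of_card (n := k + k) (by rw [Nat.card_prod, hk, pow_add])
  have hd : Function.Surjective (d.comp j) :=
    surjective_of_injective_comp_zmod (hPP.to_subgroup _) fun χ χ' h =>
      (MonoidHom.cancel_right (f.prod g).rangeRestrict_surjective).1 (hj h)
  ext h
  obtain ⟨x, hx⟩ := hd (d h)
  obtain ⟨hf, hg⟩ := Prod.mk.inj (congrArg Subtype.val hx)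
  calc f h = f (j x) := hf.symm
    _ = g (j x) := DFunLike.congr_fun hfg x
    _ = g h := hg

end PGroup

theorem HasFreeRank.map_of_mulEquiv {G : Type*} [Group G] {E : Type*} [Group E] {f : E →* G}
    (hf : Function.Injective f) {K : Subgroup E} {k : ℕ} (e : FreeGroup (Fin k) ≃* K) :
    HasFreeRank (K.map f) k := by
  refine ⟨f.comp (K.subtype.comp e.toMonoidHom), hf.comp (K.subtype_injective.comp e.injective), ?_⟩
  rw [MonoidHom.range_comp, MonoidHom.range_comp, MonoidHom.range_eq_top.2 e.surjective,
    ← MonoidHom.range_eq_map, Subgroup.range_subtype]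

theorem le_of_injective_comp_zmod {p : ℕ} [Fact p.Prime] {F : Type*} [Group F] [IsFreeGroup F]
    {R H : Subgroup F} (hR : IsRetract R)
    (hj : Function.Injective fun ψ : H →* Multiplicative (ZMod p) =>
      ψ.comp (R.subtype.subgroupComap H)) : H ≤ R := by
  obtain ⟨ρ, hρ⟩ := hR.exists_retraction
  intro h hh
  have hmem : (ρ h : F)⁻¹ * h ∈ proPClosure p (⊥ : Subgroup F) := by
    refine mem_proPClosure_bot.2 fun N hN => ?_
    have := IsProPBasic.finite_quotient (p := p) N
    have heq : ((mk' N).comp (R.subtype.comp ρ)).comp H.subtype = (mk' N).comp H.subtype :=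
      eq_of_comp_eq_of_injective_comp_zmod (IsProPBasic.isPGroup_quotient N) hj
        (MonoidHom.ext fun x => congrArg (fun y : R => mk' N y) (hρ x))
    exact QuotientGroup.eq.1 (DFunLike.congr_fun heq ⟨h, hh⟩)
  rw [proPClosure_bot_eq_bot, Subgroup.mem_bot, inv_mul_eq_one] at hmem
  exact hmem ▸ (ρ h).2

theorem rank_drop_of_proP_closed_general {F : Type*} [Group F] [IsFreeGroup F] (p : ℕ)
    (hp : p.Prime) (R H : Subgroup F) (hR : IsRetract R) (m : ℕ) (hH : HasFreeRank H m)
    (hclosed : proPClosure p H = H) : H ≤ R ∨ ∃ j < m, HasFreeRank (H ⊓ R) j := by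
  have := Fact.mk hp
  obtain ⟨θ, -, rfl⟩ := hH
  have hZp : IsPGroup p (Multiplicative (ZMod p)) := ZModModule.isPGroup_multiplicative
  have hdense := hR.hasDenseRestriction hclosed hZp
  rcases hdense.exists_lt_mulEquiv_or_injective θ.rangeRestrict_surjective with
    ⟨k, hk, ⟨e⟩⟩ | hinj
  · rw [← Subgroup.subgroupOf_map_subtype]
    exact .inr ⟨k, hk, HasFreeRank.map_of_mulEquiv R.subtype_injective e⟩
  · exact .inl (le_of_injective_comp_zmod hR hinj)

theorem rank_drop_of_proP_closed {n : ℕ} (hn : 2 ≤ n) (p : ℕ) (hp : p.Prime)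
    (R H : Subgroup (FreeGroup (Fin n))) (hR : IsRetract R)
    (m : ℕ) (hH : HasFreeRank H m) (hclosed : proPClosure p H = H) :
    H ≤ R ∨ ∃ j < m, HasFreeRank (H ⊓ R) j :=
  rank_drop_of_proP_closed_general p hp R H hR m hH hclosed
end
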